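/- Let M' ⊂ ℂⁿ be a real analytic hypersurface with complex defining equation z̄' = Θ'(w̄', t'), let φ'_k be its morphism of k-jets of Segre varieties with generic rank n + χ'_{M'} for k large, set κ' := n − 1 − χ'_{M'}, and let q' ∈ M' be a point near which φ'_k has locally constant rank n + χ'_{M'}. Then there exists a local holomorphic coordinate system (w', v', z') ∈ ℂ^{n−1−κ'} × ℂ^{κ'} × ℂ vanishing at q' in which M' is defined by an equation of the form z̄' = Θ'(w̄', w', z'), where the real analytic function Θ' is independent of the coordinates (v', v̄'); in particular, near q', M' is biholomorphic to a product M̲' × Δ^{κ'}, where M̲' ⊂ ℂ^{n−κ'} is a hypersurface that is finitely nondegenerate at the corresponding point. -/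

import Mathlib

/-!
Common definitions: CR geometry of real analytic hypersurfaces in `ℂⁿ`,
following J. Merker, "On envelopes of holomorphy of domains with Levi-flat
hats and the reflection principle".

We model `ℂⁿ` with `n = m + 1` as `CS m := (Fin m → ℂ) × ℂ`, with coordinates
`t = (w, z)`; the sup-norm balls of this product are polydiscs.
-/

noncomputable section

open Complex Topology Filter Metric Set

abbrev CS (m : ℕ) : Type := (Fin m → ℂ) × ℂ

section Basic

variable {E F : Type*} [NormedAddCommGroup E] [NormedSpace ℂ E]
  [NormedAddCommGroup F] [NormedSpace ℂ F]

/-- `v` is a real tangent vector to the set `M` at `q`: every real-differentiable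
function vanishing on `M` near `q` has differential annihilating `v`. -/
def TangentAt (M : Set E) (q v : E) : Prop :=
  ∀ ρ : E → ℝ, DifferentiableAt ℝ ρ q → (∀ᶠ z in 𝓝 q, z ∈ M → ρ z = 0) →
    fderiv ℝ ρ q v = 0

/-- `v` is a complex tangent vector to `M` at `q` (i.e. `v ∈ T^c_q M`). -/
def ComplexTangentAt (M : Set E) (q v : E) : Prop :=
  TangentAt M q v ∧ TangentAt M q (Complex.I • v)

/-- `M` is a real analytic real hypersurface: near each of its points it is the
zero set of a real analytic real-valued function with nonvanishing differential. -/
def IsRealAnalyticHypersurface (M : Set E) : Prop :=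
  M.Nonempty ∧ ∀ p ∈ M, ∃ (U : Set E) (ρ : E → ℝ), IsOpen U ∧ p ∈ U ∧
    AnalyticOnNhd ℝ ρ U ∧ fderiv ℝ ρ p ≠ 0 ∧ M ∩ U = {z ∈ U | ρ z = 0}

/-- A set `N ⊆ E` is generic in `E`: `T_q N + i T_q N = E` at each `q ∈ N`. -/
def IsGenericSet (N : Set E) : Prop :=
  ∀ q ∈ N, ∀ v : E, ∃ a b : E, TangentAt N q a ∧ TangentAt N q b ∧
    v = a + Complex.I • b

/-- The antiholomorphic part `∂̄f(q)(v)` of the real differential of `f` at `q`. -/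
def antiCDeriv (f : E → ℂ) (q v : E) : ℂ :=
  (fderiv ℝ f q v + Complex.I * fderiv ℝ f q (Complex.I • v)) / 2

/-- `f` is a CR function of class `C^k` on the hypersurface `M`: locally it has
`C^k` extensions whose antiholomorphic differential annihilates the complex
tangent spaces of `M`. -/
def IsCRFunctionOn (k : ℕ∞) (M : Set E) (f : E → ℂ) : Prop :=
  ∀ p ∈ M, ∃ (U : Set E) (g : E → ℂ), IsOpen U ∧ p ∈ U ∧
    ContDiffOn ℝ k g U ∧ (∀ z ∈ M ∩ U, g z = f z) ∧
    ∀ q ∈ M ∩ U, ∀ v : E, ComplexTangentAt M q v → antiCDeriv g q v = 0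

/-- `h` is a CR mapping of class `C^k` from `M` to `M'`. -/
def IsCRMapOn (k : ℕ∞) (M : Set E) (M' : Set F) (h : E → F) : Prop :=
  Set.MapsTo h M M' ∧ ∀ ℓ : F →L[ℂ] ℂ, IsCRFunctionOn k M fun z => ℓ (h z)

/-- `h` is a CR diffeomorphism of class `C^k` from `M` onto `M'`. -/
def IsCRDiffeoOn (k : ℕ∞) (M : Set E) (M' : Set F) (h : E → F) : Prop :=
  IsCRMapOn k M M' h ∧ Set.BijOn h M M' ∧
    ∃ g : F → E, IsCRMapOn k M' M g ∧ ∀ z ∈ M, g (h z) = z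

/-- `f` is a CR function of class `C^{1,α}` on `M`. -/
def IsCRFunctionC1HolderOn (α : NNReal) (M : Set E) (f : E → ℂ) : Prop :=
  ∀ p ∈ M, ∃ (U : Set E) (g : E → ℂ), IsOpen U ∧ p ∈ U ∧
    ContDiffOn ℝ 1 g U ∧
    (∃ C : NNReal, HolderOnWith C α (fderivWithin ℝ g U) U) ∧
    (∀ z ∈ M ∩ U, g z = f z) ∧
    ∀ q ∈ M ∩ U, ∀ v : E, ComplexTangentAt M q v → antiCDeriv g q v = 0

/-- `h` is a CR mapping of class `C^{1,α}` from `M` to `M'`. -/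
def IsCRMapC1HolderOn (α : NNReal) (M : Set E) (M' : Set F) (h : E → F) : Prop :=
  Set.MapsTo h M M' ∧ ∀ ℓ : F →L[ℂ] ℂ, IsCRFunctionC1HolderOn α M fun z => ℓ (h z)

/-- `h` is a CR diffeomorphism of class `C^{1,α}` from `M` onto `M'`. -/
def IsCRDiffeoC1HolderOn (α : NNReal) (M : Set E) (M' : Set F) (h : E → F) : Prop :=
  IsCRMapC1HolderOn α M M' h ∧ Set.BijOn h M M' ∧
    ∃ g : F → E, IsCRMapC1HolderOn α M' M g ∧ ∀ z ∈ M, g (h z) = z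

/-- There is a germ of a (possibly singular) complex hypersurface through `q`
contained in `M`. -/
def HasComplexHypersurfaceGermIn (M : Set E) (q : E) : Prop :=
  ∃ (U : Set E) (f : E → ℂ), IsOpen U ∧ q ∈ U ∧ DifferentiableOn ℂ f U ∧
    f q = 0 ∧ ¬ (∀ᶠ z in 𝓝 q, f z = 0) ∧ {z ∈ U | f z = 0} ⊆ M

/-- `M` is minimal in the sense of Tumanov at `q`: no germ of a complex
hypersurface through `q` is contained in `M`. -/
def MinimalAt (M : Set E) (q : E) : Prop := ¬ HasComplexHypersurfaceGermIn M q

/-- `M` is holomorphically nondegenerate: there is no holomorphic vector field,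
defined and not identically zero near some point of `M`, tangent to `M`. -/
def HolomorphicallyNondegenerate (M : Set E) : Prop :=
  ¬ ∃ (U : Set E) (X : E → E) (q : E), IsOpen U ∧ q ∈ M ∩ U ∧
      DifferentiableOn ℂ X U ∧ ¬ (∀ᶠ z in 𝓝 q, X z = 0) ∧
      ∀ z ∈ M ∩ U, ComplexTangentAt M z (X z)

/-- There exist `d` holomorphic vector fields tangent to `M`, defined near some
point of `M` and linearly independent at that (generic) point. -/
def HolDegDegreeGE (M : Set E) (d : ℕ) : Prop :=
  ∃ (U : Set E) (X : Fin d → E → E) (q : E), IsOpen U ∧ q ∈ M ∩ U ∧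
    (∀ i, DifferentiableOn ℂ (X i) U) ∧
    (∀ i, ∀ z ∈ M ∩ U, ComplexTangentAt M z (X i z)) ∧
    LinearIndependent ℂ fun i => X i q

/-- The holomorphic degeneracy degree of `M` equals `κ`. -/
def HolDegDegree (M : Set E) (κ : ℕ) : Prop :=
  HolDegDegreeGE M κ ∧ ¬ HolDegDegreeGE M (κ + 1)

/-- Near `b`, the set `A` is a complex submanifold of complex codimension `c`. -/
def IsComplexSubmanifoldAt (A : Set E) (b : E) (c : ℕ) : Prop :=
  ∃ (W : Set E) (f : E → Fin c → ℂ), IsOpen W ∧ b ∈ W ∧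
    DifferentiableOn ℂ f W ∧ A ∩ W = {z ∈ W | f z = 0} ∧
    Function.Surjective ⇑(fderiv ℂ f b)

/-- `A` is a closed complex analytic subset of the open set `Ω`. -/
def IsAnalyticSubsetOf (Ω A : Set E) : Prop :=
  A ⊆ Ω ∧ closure A ∩ Ω ⊆ A ∧
    ∀ a ∈ Ω, ∃ (W : Set E) (N : ℕ) (f : E → Fin N → ℂ), IsOpen W ∧ a ∈ W ∧
      W ⊆ Ω ∧ DifferentiableOn ℂ f W ∧ A ∩ W = {z ∈ W | f z = 0}

/-- `A` is a complex analytic subset of `Ω` of pure complex codimension `c`: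
its regular points are dense in it, and they all have codimension `c`. -/
def IsPureCodimAnalyticSubsetOf (Ω A : Set E) (c : ℕ) : Prop :=
  IsAnalyticSubsetOf Ω A ∧
  (∀ a ∈ A, ∀ V ∈ 𝓝 a, ∃ b ∈ A ∩ V, IsComplexSubmanifoldAt A b c) ∧
  (∀ b ∈ A, ∀ c' : ℕ, IsComplexSubmanifoldAt A b c' → c' = c)

/-- `S` is a `C^∞`-smooth real hypersurface of the open set `Ω`. -/
def IsSmoothHypersurfaceIn (Ω S : Set E) : Prop :=
  S ⊆ Ω ∧ ∀ q ∈ S, ∃ (U : Set E) (ρ : E → ℝ), IsOpen U ∧ q ∈ U ∧ U ⊆ Ω ∧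
    ContDiffOn ℝ (⊤ : ℕ∞) ρ U ∧ (∀ z ∈ U, fderiv ℝ ρ z ≠ 0) ∧
    S ∩ U = {z ∈ U | ρ z = 0}

/-- A smooth real hypersurface is Levi-flat iff it is foliated by complex
hypersurfaces, i.e. through each of its points there passes a germ of a
complex hypersurface contained in it. -/
def IsLeviFlat (S : Set E) : Prop :=
  ∀ q ∈ S, HasComplexHypersurfaceGermIn S q

/-- `f` is of class `C^{1,β}` on `s`. -/
def IsC1HolderOn {X Y : Type*} [NormedAddCommGroup X] [NormedSpace ℝ X]
    [NormedAddCommGroup Y] [NormedSpace ℝ Y] (β : NNReal) (f : X → Y)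
    (s : Set X) : Prop :=
  ContDiffOn ℝ 1 f s ∧ ∃ C : NNReal, HolderOnWith C β (fderivWithin ℝ f s) s

/-- A continuous CR function on a smooth hypersurface `S`: continuous on `S`
and locally a uniform limit on `S` of holomorphic functions
(Baouendi–Trèves characterization). -/
def ContinuousCRFunctionOn (S : Set E) (ψ : E → ℂ) : Prop :=
  ContinuousOn ψ S ∧ ∀ p ∈ S, ∃ U : Set E, IsOpen U ∧ p ∈ U ∧
    ∃ Fs : ℕ → E → ℂ, (∀ k, DifferentiableOn ℂ (Fs k) U) ∧
      TendstoUniformlyOn (fun k => Fs k) ψ atTop (S ∩ U)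

end Basic

section Series

variable {m : ℕ}

/-- Total degree of a multiindex `β ∈ ℕ^m`. -/
def mdeg (β : Fin m → ℕ) : ℕ := ∑ i, β i

/-- Monomial `w^β`. -/
def mpow (w : Fin m → ℂ) (β : Fin m → ℕ) : ℂ := ∏ i, w i ^ β i

/-- Componentwise conjugation of `w ∈ ℂ^m`. -/
def conjW (w : Fin m → ℂ) : Fin m → ℂ := fun i => starRingEnd ℂ (w i)

/-- Componentwise conjugation on `ℂ^{m+1}`. -/
def conjCS (t : CS m) : CS m := (conjW t.1, starRingEnd ℂ t.2)

/-- The series `Θ(ζ, t) = Σ_β ζ^β Θ_β(t)`. -/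
def ThetaSum (Θ : (Fin m → ℕ) → CS m → ℂ) (ζ : Fin m → ℂ) (t : CS m) : ℂ :=
  ∑' β : Fin m → ℕ, mpow ζ β * Θ β t

/-- The conjugate series `Θ̄(w, τ) = Σ_β w^β conj(Θ_β(τ̄))`. -/
def ThetaBar (Θ : (Fin m → ℕ) → CS m → ℂ) (w : Fin m → ℂ) (τ : CS m) : ℂ :=
  ∑' β : Fin m → ℕ, mpow w β * starRingEnd ℂ (Θ β (conjCS τ))

/-- Defining data for a hypersurface through `0`: a family of coefficient
functions `Θ_β`, a radius `r` and a constant `C`. -/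
structure DefData (m : ℕ) where
  Θ : (Fin m → ℕ) → CS m → ℂ
  r : ℝ
  C : ℝ

/-- `d` is a normally convergent complex defining series for `M` near the
origin, i.e. in suitable holomorphic coordinates vanishing at the reference
point, `M = {(w, z) : z̄ = Θ(w̄, (w, z)) = Σ_β w̄^β Θ_β(w, z)}`, where the
coefficients are holomorphic on the polydisc of radius `2r` and satisfy the
normal-convergence Cauchy estimates `|Θ_β| ≤ C / (2r)^{|β|}` there, and the
series vanishes at the origin. -/
def DefData.IsDefiningSeriesOf (d : DefData m) (M : Set (CS m)) : Prop :=
  0 < d.r ∧ 0 < d.C ∧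
  (∀ β, DifferentiableOn ℂ (d.Θ β) (ball (0 : CS m) (2 * d.r))) ∧
  (∀ β, ∀ t ∈ ball (0 : CS m) (2 * d.r), ‖d.Θ β t‖ ≤ d.C / (2 * d.r) ^ mdeg β) ∧
  d.Θ 0 0 = 0 ∧
  ∀ t ∈ ball (0 : CS m) d.r,
    (t ∈ M ↔ starRingEnd ℂ t.2 = ThetaSum d.Θ (conjW t.1) t)

/-- The Segre variety `S_{q̄}` of a point `q`, inside the polydisc of radius
`r`: `S_{q̄} = {(w, z) : z = Σ_β w^β conj(Θ_β(q))}`. -/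
def segreVariety (Θ : (Fin m → ℕ) → CS m → ℂ) (r : ℝ) (q : CS m) : Set (CS m) :=
  {t ∈ ball (0 : CS m) r |
    t.2 = ∑' β : Fin m → ℕ, mpow t.1 β * starRingEnd ℂ (Θ β q)}

/-- The reflection function `R'_h(t, ν̄') = μ̄' - Σ_β λ̄'^β Θ'_β(h(t))` extends
holomorphically to a neighborhood of `(p, p̄')` in `ℂⁿ × ℂⁿ`. -/
def ReflectionExtendsAt (Θ : (Fin m → ℕ) → CS m → ℂ) (h : CS m → CS m)
    (M : Set (CS m)) (p p' : CS m) : Prop :=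
  ∃ r > (0 : ℝ), ∃ R : CS m × CS m → ℂ,
    DifferentiableOn ℂ R (ball p r ×ˢ ball (conjCS p') r) ∧
    ∀ t ∈ M ∩ ball p r, ∀ ν ∈ ball (conjCS p') r,
      R (t, ν) = ν.2 - ∑' β : Fin m → ℕ, mpow ν.1 β * Θ β (h t)

/-- All the components `Θ_β ∘ h` of the reflection function extend
holomorphically to a common neighborhood of `q`, with uniform Cauchy
estimates `|Θ_β(h(t))| < C^{|β|+1}`; i.e. the reflection function is real
analytic at `q`. -/
def ReflectionAnalyticAt (Θ : (Fin m → ℕ) → CS m → ℂ) (h : CS m → CS m)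
    (M : Set (CS m)) (q : CS m) : Prop :=
  ∃ r C : ℝ, 0 < r ∧ 0 < C ∧ ∃ φ : (Fin m → ℕ) → CS m → ℂ,
    (∀ β, DifferentiableOn ℂ (φ β) (ball q r)) ∧
    (∀ β, ∀ t ∈ M ∩ ball q r, φ β t = Θ β (h t)) ∧
    ∀ β, ∀ t ∈ ball q r, ‖φ β t‖ < C ^ (mdeg β + 1)

end Series

section Jets

variable {m : ℕ}

/-- Partial derivative in the direction of the `i`-th `w`-coordinate. -/
def pderivW (i : Fin m) (f : CS m → ℂ) : CS m → ℂ :=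
  fun t => fderiv ℂ f t (Pi.single i 1, 0)

def pderivList : List (Fin m) → (CS m → ℂ) → CS m → ℂ
  | [], f => f
  | i :: L, f => pderivW i (pderivList L f)

def indexList (β : Fin m → ℕ) : List (Fin m) :=
  (List.finRange m).flatMap fun i => List.replicate (β i) i

/-- The iterated partial derivative `∂_w^β f`. -/
def pderivMulti (β : Fin m → ℕ) (f : CS m → ℂ) : CS m → ℂ :=
  pderivList (indexList β) f

/-- The morphism of `k`-jets of Segre varieties
`φ'_k : (t', τ') ↦ (t', (∂^β_{w'}[z' − Θ̄'(w', τ')](t'))_{|β| ≤ k})`, written in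
the holomorphic parametrization `(t, ζ) ↦ (t, (ζ, Θ(ζ, t)))` of the extrinsic
complexification `M^c`. -/
def segreJetMap (Θ : (Fin m → ℕ) → CS m → ℂ) (k : ℕ) :
    CS m × (Fin m → ℂ) → CS m × ((Fin m → Fin (k + 1)) → ℂ) :=
  fun p =>
    (p.1, fun β =>
      if mdeg (fun i => (β i : ℕ)) ≤ k then
        pderivMulti (fun i => (β i : ℕ))
          (fun s => s.2 - ThetaBar Θ s.1 (p.2, ThetaSum Θ p.2 p.1)) p.1
      else 0)

/-- The rank of the differential of a map at a point. -/
def mapRankAt {X Y : Type*} [NormedAddCommGroup X] [NormedSpace ℂ X]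
    [NormedAddCommGroup Y] [NormedSpace ℂ Y] (f : X → Y) (p : X) : ℕ :=
  Module.finrank ℂ (LinearMap.range (fderiv ℂ f p).toLinearMap)

/-- Parameter domain for the complexification. -/
def segreDomain (m : ℕ) (r : ℝ) : Set (CS m × (Fin m → ℂ)) :=
  {p | ‖p.1‖ < r ∧ ‖p.2‖ < r}

/-- The morphism of `k`-jets of Segre varieties has generic rank `ρ`. -/
def SegreGenericRank (Θ : (Fin m → ℕ) → CS m → ℂ) (r : ℝ) (k ρ : ℕ) : Prop :=
  (∀ p ∈ segreDomain m r, mapRankAt (segreJetMap Θ k) p ≤ ρ) ∧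
  ∃ p ∈ segreDomain m r, mapRankAt (segreJetMap Θ k) p = ρ

/-- The `k`-jet morphism has locally constant rank `ρ` in a neighborhood of the
point of the complexification corresponding to `(q, q̄)`. -/
def SegreConstRankNear (Θ : (Fin m → ℕ) → CS m → ℂ) (k ρ : ℕ) (q : CS m) : Prop :=
  ∀ᶠ p in 𝓝 (q, conjW q.1), mapRankAt (segreJetMap Θ k) p = ρ

/-- Normal form of a defining series with respect to the splitting
`t' = (w', v', z') ∈ ℂ^a × ℂ^{m-a} × ℂ`: the series involves no `v̄'` and its
coefficients are independent of `v'`. -/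
def NormalFormSeries (a : ℕ) (Θ : (Fin m → ℕ) → CS m → ℂ) : Prop :=
  (∀ β : Fin m → ℕ, (∃ i : Fin m, a ≤ (i : ℕ) ∧ β i ≠ 0) → Θ β = 0) ∧
  ∀ β, ∀ s t : CS m, (∀ i : Fin m, (i : ℕ) < a → s.1 i = t.1 i) → s.2 = t.2 →
    Θ β s = Θ β t

def extendIdx (m a : ℕ) (β : Fin a → ℕ) : Fin m → ℕ :=
  fun i => if h : (i : ℕ) < a then β ⟨i, h⟩ else 0

def embedCS (m a : ℕ) (t : CS a) : CS m :=
  ((fun i => if h : (i : ℕ) < a then t.1 ⟨i, h⟩ else 0), t.2)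

/-- The defining series of the reduced hypersurface `M̲' ⊆ ℂ^{a+1}` underlying
a series in normal form. -/
def reducedSeries (m a : ℕ) (Θ : (Fin m → ℕ) → CS m → ℂ) :
    (Fin a → ℕ) → CS a → ℂ :=
  fun β t => Θ (extendIdx m a β) (embedCS m a t)

end Jets

/-!
Complexify `M` and read the jets of its Segre varieties, at a fixed point `w` of their base, as
functions of `τ` alone. Near the given point these functions have constant rank `χ + 1`, so `χ` of
them, together with the value of the defining function, are holomorphic coordinates of `τ`-space
through which all the jets factor: by the identity theorem in `w`, Segre varieties depend on those
`χ + 1` coordinates only. The defining equation of a real hypersurface is invariant under exchanging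
`t` with `τ` up to conjugation, so the conjugate coordinate change makes it independent of the same
directions in `t`. Solving it again for the last coordinate and expanding in powers of `w̄` gives
the normal form. A direction invisible to all jets of the reduced series would be invisible to all
jets of `M`, but every such direction has been split off.
-/

/-! ### Holomorphic maps between normed spaces -/

section Holomorphic

variable {E F : Type*} [NormedAddCommGroup E] [NormedSpace ℂ E]
  [NormedAddCommGroup F] [NormedSpace ℂ F]

lemma differentiableOn_comp_line {f : E → F} {x : E} {R : ℝ}
    (hf : DifferentiableOn ℂ f (ball x R)) {v : E} {ρ : ℝ} (hρ : ρ * ‖v‖ ≤ R) :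
    DifferentiableOn ℂ (fun l : ℂ => f (x + l • v)) (ball 0 ρ) := by
  rcases eq_or_ne v 0 with rfl | hv
  · simp
  refine hf.comp (f := fun l : ℂ => x + l • v) (by fun_prop) fun l hl => ?_
  rw [mem_ball_zero_iff] at hl
  rw [mem_ball_iff_norm, add_sub_cancel_left, norm_smul]
  exact (mul_lt_mul_of_pos_right hl (norm_pos_iff.2 hv)).trans_le hρ

lemma hasDerivAt_comp_line {f : E → F} {x v : E} {l : ℂ}
    (hf : DifferentiableAt ℂ f (x + l • v)) :
    HasDerivAt (fun l : ℂ => f (x + l • v)) (fderiv ℂ f (x + l • v) v) l := by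
  have hline : HasDerivAt (fun l : ℂ => x + l • v) v l := by
    simpa using ((hasDerivAt_id l).smul_const v).const_add x
  exact hf.hasFDerivAt.comp_hasDerivAt l hline

lemma norm_fderiv_le_of_forall_mem_ball_norm_le {f : E → F} {x : E} {R C : ℝ} (hR : 0 < R)
    (hf : DifferentiableOn ℂ f (ball x R)) (hC : ∀ y ∈ ball x R, ‖f y‖ ≤ C) :
    ‖fderiv ℂ f x‖ ≤ 2 * C / R := by
  refine norm_fderiv_le_div_of_mapsTo_ball hf (fun y hy => ?_) hR
  rw [mem_closedBall_iff_norm, two_mul]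
  exact (norm_sub_le _ _).trans (add_le_add (hC y hy) (hC x (mem_ball_self hR)))

lemma norm_sub_sub_fderiv_le_of_forall_mem_ball_norm_le {f : E → F} {x : E} {R C : ℝ}
    (hf : DifferentiableOn ℂ f (ball x R)) (hC : ∀ y ∈ ball x R, ‖f y‖ ≤ C)
    {y : E} (hy : y ∈ ball x R) :
    ‖f y - f x - fderiv ℂ f x (y - x)‖ ≤ 4 * C * (‖y - x‖ / R) ^ 2 := by
  have hR : 0 < R := pos_of_mem_ball hy
  have hC0 : 0 ≤ C := (norm_nonneg _).trans (hC y hy)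
  have hderiv := (hf.differentiableAt (ball_mem_nhds x hR)).hasFDerivAt
  have hmaps : MapsTo (fun z => f z - f x - fderiv ℂ f x (z - x)) (ball x R)
      (closedBall (f x - f x - fderiv ℂ f x (x - x)) (4 * C)) := by
    intro z hz
    have hlin : ‖fderiv ℂ f x (z - x)‖ ≤ 2 * C := by
      refine ((fderiv ℂ f x).le_of_opNorm_le
        (norm_fderiv_le_of_forall_mem_ball_norm_le hR hf hC) _).trans ?_
      rw [div_mul_eq_mul_div]
      exact div_le_of_le_mul₀ hR.le (by positivity)
        (mul_le_mul_of_nonneg_left (mem_ball_iff_norm.1 hz).le (by positivity))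
    simp only [sub_self, map_zero, mem_closedBall_zero_iff]
    linarith [norm_sub_le (f z - f x) (fderiv ℂ f x (z - x)), norm_sub_le (f z) (f x),
      hC z hz, hC x (mem_ball_self hR)]
  have hsmall : (fun z => f z - f x - fderiv ℂ f x (z - x) - (f x - f x - fderiv ℂ f x (x - x)))
      =o[𝓝 x] fun z => ‖z - x‖ ^ 1 := by
    simpa using hderiv.isLittleO.norm_right
  simpa [dist_eq_norm] using Complex.dist_le_mul_div_pow_of_mapsTo_ball_of_isLittleO
    (hf.sub_const (f x) |>.sub ((fderiv ℂ f x).differentiable.comp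
      (differentiable_id.sub_const x)).differentiableOn) hmaps hsmall hy

lemma uniformCauchySeqOn_fderiv {ι : Type*} {p : Filter ι} {f : ι → E → F} {g : E → F}
    {x : E} {R : ℝ} (hR : 0 < R) (hf : ∀ i, DifferentiableOn ℂ (f i) (ball x (2 * R)))
    (hfg : TendstoUniformlyOn f g p (ball x (2 * R))) :
    UniformCauchySeqOn (fun i => fderiv ℂ (f i)) p (ball x R) := by
  intro u hu
  obtain ⟨ε, hε, hεu⟩ := Metric.mem_uniformity_dist.1 hu
  filter_upwards [hfg.uniformCauchySeqOn _ (Metric.dist_mem_uniformity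
    (show 0 < ε * R / 4 by positivity))] with i hi y hy
  have hsub : ball y R ⊆ ball x (2 * R) := ball_subset_ball' (by rw [mem_ball] at hy; linarith)
  have hy' : ball x (2 * R) ∈ 𝓝 y := isOpen_ball.mem_nhds (hsub (mem_ball_self hR))
  have hcauchy := norm_fderiv_le_of_forall_mem_ball_norm_le hR
    (((hf i.1).sub (hf i.2)).mono hsub) (C := ε * R / 4) fun z hz => by
      simpa [dist_eq_norm] using (hi z (hsub hz)).le
  rw [fderiv_sub ((hf i.1).differentiableAt hy') ((hf i.2).differentiableAt hy')] at hcauchy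
  refine hεu ?_
  rw [dist_eq_norm]
  refine hcauchy.trans_lt ?_
  rw [div_lt_iff₀ hR]
  nlinarith [mul_pos hε hR]

lemma norm_slope_sub_fderiv_le {f : E → F} {x v : E} {R C : ℝ}
    (hf : DifferentiableOn ℂ f (ball x R)) (hC : ∀ y ∈ ball x R, ‖f y‖ ≤ C) {s : ℂ}
    (hs : s ≠ 0) (hsR : ‖s‖ * ‖v‖ < R) :
    ‖s⁻¹ • (f (x + s • v) - f x) - fderiv ℂ f x v‖ ≤ 4 * C * (‖v‖ / R) ^ 2 * ‖s‖ := by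
  have hquad := norm_sub_sub_fderiv_le_of_forall_mem_ball_norm_le hf hC
    (y := x + s • v) (by simpa [norm_smul] using hsR)
  have hs' : 0 < ‖s‖ := norm_pos_iff.2 hs
  have hrescale : s⁻¹ • (f (x + s • v) - f x) - fderiv ℂ f x v
      = s⁻¹ • (f (x + s • v) - f x - fderiv ℂ f x (x + s • v - x)) := by
    rw [smul_sub s⁻¹ (f (x + s • v) - f x), add_sub_cancel_left, map_smul, inv_smul_smul₀ hs]
  rw [hrescale, norm_smul, norm_inv, inv_mul_le_iff₀ hs']
  refine hquad.trans_eq ?_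
  rw [add_sub_cancel_left, norm_smul]
  ring

lemma tendstoUniformlyOn_slope {f : E → F} {x : E} {R C : ℝ} (hR : 0 < R)
    (hf : DifferentiableOn ℂ f (ball x (2 * R))) (hC : ∀ y ∈ ball x (2 * R), ‖f y‖ ≤ C) (v : E) :
    TendstoUniformlyOn (fun (s : ℂ) y => s⁻¹ • (f (y + s • v) - f y)) (fun y => fderiv ℂ f y v)
      (𝓝[≠] 0) (ball x R) := by
  rw [Metric.tendstoUniformlyOn_iff]
  intro ε hε
  have hsR : ∀ᶠ s : ℂ in 𝓝 0, ‖s‖ * ‖v‖ < R :=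
    ContinuousAt.eventually_lt (by fun_prop) continuousAt_const (by simpa using hR)
  have hsε : ∀ᶠ s : ℂ in 𝓝 0, 4 * C * (‖v‖ / R) ^ 2 * ‖s‖ < ε :=
    ContinuousAt.eventually_lt (by fun_prop) continuousAt_const (by simpa using hε)
  filter_upwards [hsR.filter_mono nhdsWithin_le_nhds, hsε.filter_mono nhdsWithin_le_nhds,
    self_mem_nhdsWithin] with s hsR hsε hs y hy
  have hsub : ball y R ⊆ ball x (2 * R) := ball_subset_ball' (by rw [mem_ball] at hy; linarith)
  rw [dist_comm, dist_eq_norm]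
  exact (norm_slope_sub_fderiv_le (hf.mono hsub) (fun z hz => hC z (hsub hz)) hs hsR).trans_lt hsε

variable [CompleteSpace F]

/-- Weierstrass' theorem: Cauchy's estimate makes the differentials converge uniformly, too. -/
lemma differentiableAt_of_tendstoUniformlyOn {ι : Type*} {p : Filter ι} [p.NeBot]
    {f : ι → E → F} {g : E → F} {x : E} {R : ℝ} (hR : 0 < R)
    (hf : ∀ i, DifferentiableOn ℂ (f i) (ball x R))
    (hfg : TendstoUniformlyOn f g p (ball x R)) : DifferentiableAt ℂ g x := by
  obtain ⟨r, hr, rfl⟩ : ∃ r > 0, R = 2 * r := ⟨R / 2, by positivity, by ring⟩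
  have hcauchy := uniformCauchySeqOn_fderiv hr hf hfg
  have hlim : ∀ y ∈ ball x r, ∃ A, Tendsto (fun i => fderiv ℂ (f i) y) p (𝓝 A) := fun y hy =>
    cauchy_map_iff_exists_tendsto.1 (hcauchy.cauchy_map hy)
  choose! A hA using hlim
  have hsub : ball x r ⊆ ball x (2 * r) := ball_subset_ball (by linarith)
  exact (hasFDerivAt_of_tendstoUniformlyOn isOpen_ball
    (hcauchy.tendstoUniformlyOn_of_tendsto hA)
    (fun i y hy => ((hf i).differentiableAt (isOpen_ball.mem_nhds (hsub hy))).hasFDerivAt)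
    (fun y hy => hfg.tendsto_at (hsub hy)) (mem_ball_self hr)).differentiableAt

lemma differentiableOn_tsum {ι : Type*} {f : ι → E → F} {u : ι → ℝ} {U : Set E}
    (hu : Summable u) (hU : IsOpen U) (hf : ∀ i, DifferentiableOn ℂ (f i) U)
    (hfu : ∀ i, ∀ x ∈ U, ‖f i x‖ ≤ u i) : DifferentiableOn ℂ (fun x => ∑' i, f i x) U := by
  intro x hx
  obtain ⟨R, hR, hRU⟩ := Metric.isOpen_iff.1 hU x hx
  exact (differentiableAt_of_tendstoUniformlyOn hR
    (fun _ => DifferentiableOn.fun_sum fun i _ => (hf i).mono hRU)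
    ((tendstoUniformlyOn_tsum hu hfu).mono hRU)).differentiableWithinAt

lemma differentiableOn_fderiv_apply {f : E → F} {U : Set E} (hU : IsOpen U)
    (hf : DifferentiableOn ℂ f U) (v : E) : DifferentiableOn ℂ (fun x => fderiv ℂ f x v) U := by
  intro x hx
  have hbdd : ∀ᶠ y in 𝓝 x, ‖f y‖ < ‖f x‖ + 1 :=
    (hf.differentiableAt (hU.mem_nhds hx)).continuousAt.norm.eventually_lt
      continuousAt_const (by simp)
  obtain ⟨ε, hε, hball⟩ := Metric.eventually_nhds_iff_ball.1 (hbdd.and (hU.mem_nhds hx))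
  obtain ⟨R, hR, rfl⟩ : ∃ R > 0, ε = 2 * R := ⟨ε / 2, by positivity, by ring⟩
  have hfball : DifferentiableOn ℂ f (ball x (2 * R)) := hf.mono fun y hy => (hball y hy).2
  obtain ⟨s, hs, hs0⟩ : ∃ s : ℕ → ℂ, (∀ n, ‖s n‖ * ‖v‖ < R) ∧ Tendsto s atTop (𝓝[≠] 0) := by
    have hsR : ∀ᶠ s : ℂ in 𝓝[≠] 0, ‖s‖ * ‖v‖ < R :=
      (ContinuousAt.eventually_lt (by fun_prop) continuousAt_const
        (by simpa using hR)).filter_mono nhdsWithin_le_nhds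
    obtain ⟨s, hs0⟩ := exists_seq_tendsto (𝓝[≠] (0 : ℂ))
    obtain ⟨N, hN⟩ := eventually_atTop.1 (hs0.eventually hsR)
    exact ⟨fun n => s (n + N), fun n => hN _ (Nat.le_add_left N n),
      hs0.comp (tendsto_add_atTop_nat N)⟩
  refine (differentiableAt_of_tendstoUniformlyOn (p := atTop)
    (f := fun n y => (s n)⁻¹ • (f (y + s n • v) - f y)) hR (fun n => ?_) fun u hu =>
      hs0.eventually (tendstoUniformlyOn_slope hR hfball (fun y hy => (hball y hy).1.le) v u hu)
    ).differentiableWithinAt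
  have hshift : DifferentiableOn ℂ (fun y => f (y + s n • v)) (ball x R) := by
    refine hfball.comp (f := fun y => y + s n • v) (by fun_prop) fun y hy => ?_
    rw [mem_ball_iff_norm, add_sub_right_comm]
    rw [mem_ball_iff_norm] at hy
    linarith [norm_add_le (y - x) (s n • v), norm_smul (s n) v, hs n]
  exact (hshift.sub (hfball.mono (ball_subset_ball (by linarith)))).const_smul _

variable [FiniteDimensional ℂ E]

lemma contDiffOn_nat_of_differentiableOn {f : E → F} {U : Set E} (hU : IsOpen U)
    (hf : DifferentiableOn ℂ f U) (n : ℕ) : ContDiffOn ℂ n f U := by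
  induction n generalizing f with
  | zero => exact contDiffOn_zero.2 hf.continuousOn
  | succ n ih =>
    push_cast
    refine (contDiffOn_succ_iff_fderiv_apply hU.uniqueDiffOn).2 ⟨hf, by simp, fun v => ?_⟩
    exact (ih (differentiableOn_fderiv_apply hU hf v)).congr fun x hx => by
      rw [fderivWithin_of_isOpen hU hx]

lemma differentiableOn_fderiv {f : E → F} {U : Set E} (hU : IsOpen U)
    (hf : DifferentiableOn ℂ f U) : DifferentiableOn ℂ (fderiv ℂ f) U :=
  ((contDiffOn_nat_of_differentiableOn hU hf 2).fderiv_of_isOpen hU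
    (by norm_num)).differentiableOn one_ne_zero

lemma contDiffAt_nat_of_eventually_differentiableAt {f : E → F} {x : E}
    (hf : ∀ᶠ y in 𝓝 x, DifferentiableAt ℂ f y) (n : ℕ) : ContDiffAt ℂ n f x := by
  obtain ⟨U, h, hU, hx⟩ := _root_.eventually_nhds_iff.1 hf
  exact (contDiffOn_nat_of_differentiableOn hU
    (fun y hy => (h y hy).differentiableWithinAt) n).contDiffAt (hU.mem_nhds hx)

end Holomorphic

/-! ### Iterated directional derivatives -/

section IteratedDirDeriv

variable {E F : Type*} [NormedAddCommGroup E] [NormedSpace ℂ E]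
  [NormedAddCommGroup F] [NormedSpace ℂ F]

/-- The iterated directional derivative of `f` along the vectors of a list; the last vector of the
list is the first direction of differentiation. -/
def iteratedDirDeriv : List E → (E → F) → E → F
  | [], f => f
  | v :: L, f => fun x => fderiv ℂ (iteratedDirDeriv L f) x v

@[simp] lemma iteratedDirDeriv_nil (f : E → F) : iteratedDirDeriv [] f = f := rfl

lemma iteratedDirDeriv_cons (v : E) (L : List E) (f : E → F) :
    iteratedDirDeriv (v :: L) f = fun x => fderiv ℂ (iteratedDirDeriv L f) x v := rfl

lemma iteratedDirDeriv_append (L L' : List E) (f : E → F) :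
    iteratedDirDeriv (L ++ L') f = iteratedDirDeriv L (iteratedDirDeriv L' f) := by
  induction L with
  | nil => rfl
  | cons v L ih => simp [iteratedDirDeriv_cons, ih]

lemma iteratedDirDeriv_congr {U : Set E} (hU : IsOpen U) {f g : E → F} (h : EqOn f g U)
    (L : List E) : EqOn (iteratedDirDeriv L f) (iteratedDirDeriv L g) U := by
  induction L with
  | nil => exact h
  | cons v L ih =>
    intro x hx
    simp only [iteratedDirDeriv_cons]
    rw [(ih.eventuallyEq_of_mem (hU.mem_nhds hx)).fderiv_eq]

lemma iteratedDirDeriv_zero (L : List E) :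
    iteratedDirDeriv L (fun _ : E => (0 : F)) = fun _ => 0 := by
  induction L with
  | nil => rfl
  | cons v L ih => simp [iteratedDirDeriv_cons, ih]

lemma iteratedDirDeriv_eq_zero_of_eventually {f : E → F} {x : E} (h : ∀ᶠ y in 𝓝 x, f y = 0)
    (L : List E) : iteratedDirDeriv L f x = 0 := by
  obtain ⟨U, h, hU, hx⟩ := _root_.eventually_nhds_iff.1 h
  rw [iteratedDirDeriv_congr hU (f := f) (g := fun _ => 0) (fun y hy => h y hy) L hx,
    iteratedDirDeriv_zero]

variable [CompleteSpace F]

lemma differentiableOn_iteratedDirDeriv {U : Set E} (hU : IsOpen U) {f : E → F}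
    (hf : DifferentiableOn ℂ f U) (L : List E) : DifferentiableOn ℂ (iteratedDirDeriv L f) U := by
  induction L with
  | nil => exact hf
  | cons v L ih => exact differentiableOn_fderiv_apply hU ih v

lemma iteratedDirDeriv_sum {ι : Type*} (s : Finset ι) {U : Set E} (hU : IsOpen U) {f : ι → E → F}
    (c : ι → ℂ) (hf : ∀ i, DifferentiableOn ℂ (f i) U) (L : List E) :
    EqOn (iteratedDirDeriv L (fun x => ∑ i ∈ s, c i • f i x))
      (fun x => ∑ i ∈ s, c i • iteratedDirDeriv L (f i) x) U := by
  induction L with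
  | nil => exact fun _ _ => rfl
  | cons v L ih =>
    intro x hx
    have hd : ∀ i, DifferentiableAt ℂ (iteratedDirDeriv L (f i)) x := fun i =>
      (differentiableOn_iteratedDirDeriv hU (hf i) L).differentiableAt (hU.mem_nhds hx)
    have hsum : HasFDerivAt (fun x => ∑ i ∈ s, c i • iteratedDirDeriv L (f i) x)
        (∑ i ∈ s, c i • fderiv ℂ (iteratedDirDeriv L (f i)) x) x :=
      HasFDerivAt.fun_sum fun i _ => (hd i).hasFDerivAt.const_smul (c i)
    simp only [iteratedDirDeriv_cons]
    rw [(ih.eventuallyEq_of_mem (hU.mem_nhds hx)).fderiv_eq, hsum.fderiv]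
    simp

lemma iteratedDirDeriv_sub {U : Set E} (hU : IsOpen U) {f g : E → F}
    (hf : DifferentiableOn ℂ f U) (hg : DifferentiableOn ℂ g U) (L : List E) :
    EqOn (iteratedDirDeriv L (fun x => f x - g x))
      (fun x => iteratedDirDeriv L f x - iteratedDirDeriv L g x) U := by
  have hsum := iteratedDirDeriv_sum Finset.univ hU (f := ![f, g]) ![1, -1]
    (fun i => by fin_cases i; exacts [hf, hg]) L
  simpa [Fin.sum_univ_two, ← sub_eq_add_neg] using hsum

lemma iteratedDirDeriv_slice {G : Type*} [NormedAddCommGroup G] [NormedSpace ℂ G]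
    {U : Set (E × G)} (hU : IsOpen U) {f : E × G → F} (hf : DifferentiableOn ℂ f U)
    (L : List E) (y : G) : ∀ x, (x, y) ∈ U → iteratedDirDeriv L (fun x => f (x, y)) x
      = iteratedDirDeriv (L.map fun v => (v, (0 : G))) f (x, y) := by
  induction L with
  | nil => exact fun _ _ => rfl
  | cons v L ih =>
    intro x hx
    have hslice : Continuous fun x : E => (x, y) := by fun_prop
    have hev : (iteratedDirDeriv L fun x => f (x, y)) =ᶠ[𝓝 x]
        fun x => iteratedDirDeriv (L.map fun v => (v, (0 : G))) f (x, y) := by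
      filter_upwards [(hU.preimage hslice).mem_nhds hx] with x' hx' using ih x' hx'
    have hchain := ((differentiableOn_iteratedDirDeriv hU hf
      (L.map fun v => (v, (0 : G)))).differentiableAt (hU.mem_nhds hx)).hasFDerivAt.comp x
      (hasFDerivAt_prodMk_left (𝕜 := ℂ) x y)
    simp only [iteratedDirDeriv_cons, List.map_cons]
    rw [hev.fderiv_eq]
    exact (DFunLike.congr_fun hchain.fderiv v).trans (by
      rw [ContinuousLinearMap.comp_apply, ContinuousLinearMap.inl_apply])

lemma iteratedDeriv_comp_line {f : E → F} {x : E} {U : Set E} (hU : IsOpen U)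
    (hf : DifferentiableOn ℂ f U) {v : E} (n : ℕ) : ∀ l : ℂ, x + l • v ∈ U →
    iteratedDeriv n (fun l : ℂ => f (x + l • v)) l
      = iteratedDirDeriv (List.replicate n v) f (x + l • v) := by
  induction n with
  | zero => intro l _; simp
  | succ n ih =>
    intro l hl
    have hline : Continuous fun l : ℂ => x + l • v := by fun_prop
    have hev : iteratedDeriv n (fun l : ℂ => f (x + l • v)) =ᶠ[𝓝 l]
        fun l => iteratedDirDeriv (List.replicate n v) f (x + l • v) := by
      filter_upwards [(hU.preimage hline).mem_nhds hl] with l' hl' using ih l' hl'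
    rw [iteratedDeriv_succ, hev.deriv_eq, List.replicate_succ, iteratedDirDeriv_cons]
    exact (hasDerivAt_comp_line ((differentiableOn_iteratedDirDeriv hU hf _).differentiableAt
      (hU.mem_nhds hl))).deriv

/-- Taylor expansion along the complex line through `x` and `y`. -/
lemma eqOn_zero_of_iteratedDirDeriv_replicate_eq_zero {f : E → F} {x : E} {R : ℝ}
    (hf : DifferentiableOn ℂ f (ball x R))
    (h : ∀ (v : E) (n : ℕ), iteratedDirDeriv (List.replicate n v) f x = 0) :
    EqOn f 0 (ball x R) := by
  intro y hy
  have hR : 0 < R := pos_of_mem_ball hy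
  obtain ⟨ρ, hρ1, hρ⟩ : ∃ ρ > 1, ρ * ‖y - x‖ ≤ R := by
    rw [mem_ball_iff_norm] at hy
    rcases eq_or_lt_of_le (norm_nonneg (y - x)) with h0 | h0
    · exact ⟨2, by norm_num, by rw [← h0]; simpa using hR.le⟩
    · exact ⟨R / ‖y - x‖, by rwa [gt_iff_lt, one_lt_div h0], by field_simp; rfl⟩
  have htaylor := Complex.hasSum_taylorSeries_on_ball (differentiableOn_comp_line hf hρ) (z := 1)
    (by simpa using hρ1)
  have hcoeff : ∀ n, iteratedDeriv n (fun l : ℂ => f (x + l • (y - x))) 0 = 0 := by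
    intro n
    rw [iteratedDeriv_comp_line isOpen_ball hf n 0 (by simpa using hR)]
    simpa using h (y - x) n
  simp only [hcoeff] at htaylor
  simpa using htaylor.unique (by simp)

lemma eqOn_zero_of_eventually_eq_zero {f : E → F} {x : E} {R : ℝ}
    (hf : DifferentiableOn ℂ f (ball x R)) (h : ∀ᶠ y in 𝓝 x, f y = 0) : EqOn f 0 (ball x R) :=
  eqOn_zero_of_iteratedDirDeriv_replicate_eq_zero hf fun _ _ =>
    iteratedDirDeriv_eq_zero_of_eventually h _

lemma iteratedDirDeriv_replicate_eq_zero_of_span {ι : Type*} [Finite ι] {e : ι → E}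
    (he : ⊤ ≤ Submodule.span ℂ (range e)) {U : Set E} (hU : IsOpen U) {x : E} (hx : x ∈ U)
    (v : E) (n : ℕ) : ∀ {f : E → F}, DifferentiableOn ℂ f U →
      (∀ L : List ι, iteratedDirDeriv (L.map e) f x = 0) →
      iteratedDirDeriv (List.replicate n v) f x = 0 := by
  have := Fintype.ofFinite ι
  obtain ⟨c, hc⟩ : ∃ c : ι → ℂ, ∑ i, c i • e i = v :=
    (Submodule.mem_span_range_iff_exists_fun ℂ).1 (he trivial)
  induction n with
  | zero => intro f _ h; simpa using h []
  | succ n ih =>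
    intro f hf h
    rw [List.replicate_succ', iteratedDirDeriv_append]
    refine ih (differentiableOn_iteratedDirDeriv hU hf [v]) fun L => ?_
    have hexpand : EqOn (iteratedDirDeriv [v] f)
        (fun x => ∑ i, c i • iteratedDirDeriv [e i] f x) U := by
      intro y _
      simp [iteratedDirDeriv_cons, ← hc]
    rw [iteratedDirDeriv_congr hU hexpand _ hx, iteratedDirDeriv_sum Finset.univ hU c
      (fun i => differentiableOn_iteratedDirDeriv hU hf _) _ hx]
    refine Finset.sum_eq_zero fun i _ => ?_
    rw [← iteratedDirDeriv_append, show L.map e ++ [e i] = (L ++ [i]).map e by simp, h, smul_zero]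

lemma eqOn_zero_of_iteratedDirDeriv_eq_zero_of_span {ι : Type*} [Finite ι] {e : ι → E}
    (he : ⊤ ≤ Submodule.span ℂ (range e)) {f : E → F} {x : E} {R : ℝ} (hR : 0 < R)
    (hf : DifferentiableOn ℂ f (ball x R))
    (h : ∀ L : List ι, iteratedDirDeriv (L.map e) f x = 0) : EqOn f 0 (ball x R) :=
  eqOn_zero_of_iteratedDirDeriv_replicate_eq_zero hf fun v n =>
    iteratedDirDeriv_replicate_eq_zero_of_span he isOpen_ball (mem_ball_self hR) v n hf h

lemma eqOn_of_iteratedDirDeriv_eq_of_span {ι : Type*} [Finite ι] {e : ι → E}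
    (he : ⊤ ≤ Submodule.span ℂ (range e)) {f g : E → F} {x : E} {R : ℝ} (hR : 0 < R)
    (hf : DifferentiableOn ℂ f (ball x R)) (hg : DifferentiableOn ℂ g (ball x R))
    (h : ∀ L : List ι, iteratedDirDeriv (L.map e) f x = iteratedDirDeriv (L.map e) g x) :
    EqOn f g (ball x R) := fun _ hy =>
  sub_eq_zero.1 <| eqOn_zero_of_iteratedDirDeriv_eq_zero_of_span he hR (hf.sub hg)
    (fun L => (iteratedDirDeriv_sub isOpen_ball hf hg _ (mem_ball_self hR)).trans
      (sub_eq_zero.2 (h L))) hy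

variable [FiniteDimensional ℂ E]

lemma iteratedDirDeriv_perm {U : Set E} (hU : IsOpen U) {f : E → F}
    (hf : DifferentiableOn ℂ f U) {L L' : List E} (h : L.Perm L') :
    EqOn (iteratedDirDeriv L f) (iteratedDirDeriv L' f) U := by
  induction h with
  | nil => exact fun _ _ => rfl
  | cons v _ ih =>
    intro x hx
    simp only [iteratedDirDeriv_cons]
    rw [(ih.eventuallyEq_of_mem (hU.mem_nhds hx)).fderiv_eq]
  | swap v w L =>
    intro x hx
    have hg := differentiableOn_iteratedDirDeriv hU hf L
    have hsymm : IsSymmSndFDerivAt ℂ (iteratedDirDeriv L f) x :=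
      ((contDiffOn_nat_of_differentiableOn hU hg 2).contDiffAt
        (hU.mem_nhds hx)).isSymmSndFDerivAt (by simp)
    have hsnd : ∀ a b : E, fderiv ℂ (fun y => fderiv ℂ (iteratedDirDeriv L f) y a) x b
        = fderiv ℂ (fderiv ℂ (iteratedDirDeriv L f)) x b a := fun a b => by
      rw [fderiv_clm_apply ((differentiableOn_fderiv hU hg).differentiableAt (hU.mem_nhds hx))
        (by fun_prop)]
      simp
    simp only [iteratedDirDeriv_cons]
    rw [hsnd, hsnd]
    exact hsymm.eq _ _
  | trans _ _ h1 h2 => exact h1.trans h2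

end IteratedDirDeriv

/-! ### Power series with holomorphic coefficients -/

section PowerSeries

variable {m : ℕ}

lemma mdeg_cons (j : ℕ) (β : Fin m → ℕ) : mdeg (Fin.cons j β : Fin (m + 1) → ℕ) = j + mdeg β := by
  simp [mdeg, Fin.sum_univ_succ]

lemma mpow_cons (a : ℂ) (w : Fin m → ℂ) (j : ℕ) (β : Fin m → ℕ) :
    mpow (Fin.cons a w : Fin (m + 1) → ℂ) (Fin.cons j β) = a ^ j * mpow w β := by
  simp [mpow, Fin.prod_univ_succ]

lemma differentiable_mpow (β : Fin m → ℕ) : Differentiable ℂ fun w : Fin m → ℂ => mpow w β := by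
  unfold mpow
  fun_prop

lemma norm_mpow_le (w : Fin m → ℂ) (β : Fin m → ℕ) : ‖mpow w β‖ ≤ ‖w‖ ^ mdeg β := by
  rw [mpow, mdeg, norm_prod, ← Finset.prod_pow_eq_pow_sum]
  refine Finset.prod_le_prod (fun i _ => norm_nonneg _) fun i _ => ?_
  rw [norm_pow]
  exact pow_le_pow_left₀ (norm_nonneg _) (norm_le_pi_norm w i) _

lemma norm_mpow_mul_le {w : Fin m → ℂ} {β : Fin m → ℕ} {a : ℂ} {ρ R C : ℝ} (hw : ‖w‖ ≤ ρ)
    (ha : ‖a‖ ≤ C / R ^ mdeg β) : ‖mpow w β * a‖ ≤ C * (ρ / R) ^ mdeg β := by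
  rw [norm_mul]
  calc ‖mpow w β‖ * ‖a‖ ≤ ρ ^ mdeg β * (C / R ^ mdeg β) := by
        have := (norm_mpow_le w β).trans (pow_le_pow_left₀ (norm_nonneg w) hw _)
        gcongr
        exact (norm_nonneg _).trans this
    _ = C * (ρ / R) ^ mdeg β := by rw [div_pow]; ring

lemma hasSum_fin_cons_iff {A : Type*} [AddCommMonoid A] [TopologicalSpace A]
    (f : (Fin (m + 1) → ℕ) → A) (a : A) :
    HasSum (fun p : ℕ × (Fin m → ℕ) => f (Fin.cons p.1 p.2)) a ↔ HasSum f a :=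
  (Fin.consEquiv (fun _ : Fin (m + 1) => ℕ)).hasSum_iff (f := f) (a := a)

lemma summable_pow_mdeg {q : ℝ} (hq0 : 0 ≤ q) (hq1 : q < 1) :
    Summable fun β : Fin m → ℕ => q ^ mdeg β := by
  induction m with
  | zero => exact (hasSum_unique _).summable
  | succ m ih =>
    obtain ⟨a, ha⟩ := (summable_geometric_of_lt_one hq0 hq1).mul_of_nonneg ih
      (fun _ => by positivity) (fun _ => by positivity)
    refine ⟨a, (hasSum_fin_cons_iff _ a).1 ?_⟩
    simpa [mdeg_cons, pow_add] using ha

lemma summable_mpow_mul {c : (Fin m → ℕ) → ℂ} {R C : ℝ} (hc : ∀ β, ‖c β‖ ≤ C / R ^ mdeg β)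
    {w : Fin m → ℂ} (hw : ‖w‖ < R) : Summable fun β => mpow w β * c β := by
  have hR : 0 < R := (norm_nonneg w).trans_lt hw
  exact Summable.of_norm_bounded ((summable_pow_mdeg (by positivity)
    ((div_lt_one hR).2 hw)).mul_left C) fun β => norm_mpow_mul_le le_rfl (hc β)

/-- Normal convergence of the series `Σ_β ζ^β Θ_β(t)` on the polydisc of radius `R`, in the form of
Cauchy estimates for its holomorphic coefficients. -/
structure NormallyConvergent (Θ : (Fin m → ℕ) → CS m → ℂ) (R C : ℝ) : Prop where
  pos : 0 < R
  differentiableOn : ∀ β, DifferentiableOn ℂ (Θ β) (ball 0 R)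
  norm_le : ∀ β, ∀ t ∈ ball (0 : CS m) R, ‖Θ β t‖ ≤ C / R ^ mdeg β

variable {Θ : (Fin m → ℕ) → CS m → ℂ} {R C : ℝ}

lemma NormallyConvergent.differentiableOn_thetaSum (h : NormallyConvergent Θ R C) :
    DifferentiableOn ℂ (fun p : (Fin m → ℂ) × CS m => ThetaSum Θ p.1 p.2) (ball 0 R) := by
  intro p hp
  obtain ⟨ρ, hpρ, hρR⟩ := exists_between (mem_ball_zero_iff.1 hp)
  have hρ0 : 0 ≤ ρ := (norm_nonneg _).trans hpρ.le
  have hsum : Summable fun β : Fin m → ℕ => C * (ρ / R) ^ mdeg β :=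
    (summable_pow_mdeg (div_nonneg hρ0 h.pos.le) ((div_lt_one h.pos).2 hρR)).mul_left C
  have hfst : ∀ x ∈ ball (0 : (Fin m → ℂ) × CS m) ρ, ‖x.1‖ ≤ ρ := fun x hx =>
    (norm_fst_le x).trans (mem_ball_zero_iff.1 hx).le
  have hsnd : ∀ x ∈ ball (0 : (Fin m → ℂ) × CS m) ρ, x.2 ∈ ball (0 : CS m) R := fun x hx =>
    mem_ball_zero_iff.2 (((norm_snd_le x).trans_lt (mem_ball_zero_iff.1 hx)).trans hρR)
  refine ((differentiableOn_tsum hsum isOpen_ball (fun β => ?_) fun β x hx =>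
    norm_mpow_mul_le (hfst x hx) (h.norm_le β x.2 (hsnd x hx))).differentiableAt
    (isOpen_ball.mem_nhds (mem_ball_zero_iff.2 hpρ))).differentiableWithinAt
  exact ((differentiable_mpow β).comp differentiable_fst).differentiableOn.mul
    ((h.differentiableOn β).comp differentiable_snd.differentiableOn hsnd)

variable {T : Type*} [NormedAddCommGroup T] [NormedSpace ℂ T]

lemma exists_hasSum_pow_mul {B : Set T} (hB : IsOpen B) {R' : ℝ} (hR' : 0 < R') (hRR : R' < R)
    {f : ℂ × T → ℂ} (hf : DifferentiableOn ℂ f (ball 0 R ×ˢ B))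
    (hC : ∀ p ∈ ball 0 R ×ˢ B, ‖f p‖ ≤ C) :
    ∃ g : ℕ → T → ℂ, (∀ j, DifferentiableOn ℂ (g j) B) ∧
      (∀ j, ∀ t ∈ B, ‖g j t‖ ≤ C / R' ^ j) ∧
      ∀ a ∈ ball (0 : ℂ) R', ∀ t ∈ B, HasSum (fun j => a ^ j * g j t) (f (a, t)) := by
  have hU : IsOpen (ball (0 : ℂ) R ×ˢ B) := isOpen_ball.prod hB
  have hzero : (0 : ℂ) ∈ ball (0 : ℂ) R := mem_ball_self (hR'.trans hRR)
  have hslice : ∀ t ∈ B, DifferentiableOn ℂ (fun l => f (l, t)) (ball 0 R) := fun t ht =>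
    hf.comp (by fun_prop) fun l hl => ⟨hl, ht⟩
  have hderiv : ∀ t ∈ B, ∀ j, iteratedDeriv j (fun l => f (l, t)) 0
      = iteratedDirDeriv (List.replicate j (1, 0)) f (0, t) := fun t ht j => by
    simpa using iteratedDeriv_comp_line hU hf (x := (0, t)) (v := (1, 0)) j 0
      (by simpa using ⟨hR'.trans hRR, ht⟩)
  refine ⟨fun j t => (j.factorial : ℂ)⁻¹ * iteratedDirDeriv (List.replicate j (1, 0)) f (0, t),
    fun j => ?_, fun j t ht => ?_, fun a ha t ht => ?_⟩
  · exact ((differentiableOn_iteratedDirDeriv hU hf _).comp (by fun_prop)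
      fun t ht => ⟨hzero, ht⟩).const_mul _
  · have hcauchy := Complex.norm_iteratedDeriv_le_of_forall_mem_sphere_norm_le (C := C) j hR'
      (DifferentiableOn.diffContOnCl ((hslice t ht).mono
        (by rw [closure_ball _ hR'.ne']; exact closedBall_subset_ball hRR)))
      fun z hz => hC _ ⟨sphere_subset_closedBall.trans (closedBall_subset_ball hRR) hz, ht⟩
    rw [hderiv t ht] at hcauchy
    rw [norm_mul, norm_inv, Complex.norm_natCast, inv_mul_le_iff₀ (by positivity)]
    exact hcauchy.trans_eq (by ring)
  · have htaylor := Complex.hasSum_taylorSeries_on_ball (hslice t ht) (ball_subset_ball hRR.le ha)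
    simp only [hderiv t ht, sub_zero, smul_eq_mul] at htaylor
    exact htaylor.congr_fun fun j => by ring

lemma hasSum_mpow_cons {c : (Fin (m + 1) → ℕ) → ℂ} (hc : ∀ β, ‖c β‖ ≤ C / R ^ mdeg β)
    {a : ℂ} {w : Fin m → ℂ} (haw : ‖(Fin.cons a w : Fin (m + 1) → ℂ)‖ < R) {g : ℕ → ℂ} {s : ℂ}
    (hg : ∀ j, HasSum (fun β => mpow w β * c (Fin.cons j β)) (g j))
    (hs : HasSum (fun j => a ^ j * g j) s) :
    HasSum (fun β => mpow (Fin.cons a w : Fin (m + 1) → ℂ) β * c β) s := by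
  obtain ⟨s', hs'⟩ := summable_mpow_mul hc haw
  have hfiber := ((hasSum_fin_cons_iff _ _).2 hs').prod_fiberwise (g := fun j => a ^ j * g j)
    fun j => by simpa [mpow_cons, mul_assoc] using (hg j).mul_left (a ^ j)
  exact hfiber.unique hs ▸ hs'

lemma cons_mem_ball_zero_iff {a : ℂ} {w : Fin m → ℂ} (hR : 0 < R) :
    (Fin.cons a w : Fin (m + 1) → ℂ) ∈ ball 0 R ↔ a ∈ ball 0 R ∧ w ∈ ball 0 R := by
  simp only [mem_ball_zero_iff, pi_norm_lt_iff hR, Fin.forall_fin_succ, Fin.cons_zero,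
    Fin.cons_succ]

lemma exists_hasSum_mpow_mul {B : Set T} (hB : IsOpen B) {R' : ℝ} (hR' : 0 < R') (hRR : R' < R)
    {f : (Fin m → ℂ) × T → ℂ} (hf : DifferentiableOn ℂ f (ball 0 R ×ˢ B))
    (hC : ∀ p ∈ ball 0 R ×ˢ B, ‖f p‖ ≤ C) :
    ∃ c : (Fin m → ℕ) → T → ℂ, (∀ β, DifferentiableOn ℂ (c β) B) ∧
      (∀ β, ∀ t ∈ B, ‖c β t‖ ≤ C / R' ^ mdeg β) ∧
      ∀ ζ ∈ ball (0 : Fin m → ℂ) R', ∀ t ∈ B, HasSum (fun β => mpow ζ β * c β t) (f (ζ, t)) := by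
  have hR : 0 < R := hR'.trans hRR
  induction m generalizing C with
  | zero =>
    refine ⟨fun _ t => f (0, t), fun _ => ?_, fun β t ht => ?_, fun ζ _ t _ => ?_⟩
    · exact hf.comp (by fun_prop) fun t ht => ⟨mem_ball_self hR, ht⟩
    · simpa [mdeg] using hC (0, t) ⟨mem_ball_self hR, ht⟩
    · obtain rfl : ζ = 0 := Subsingleton.elim _ _
      simp [mpow]
  | succ m ih =>
    have hmaps : MapsTo (fun p : ℂ × (Fin m → ℂ) × T =>
        ((Fin.cons p.1 p.2.1 : Fin (m + 1) → ℂ), p.2.2))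
        (ball 0 R ×ˢ (ball 0 R ×ˢ B)) (ball 0 R ×ˢ B) := fun p hp =>
      ⟨(cons_mem_ball_zero_iff hR).2 ⟨hp.1, hp.2.1⟩, hp.2.2⟩
    have hcons : Differentiable ℂ fun p : ℂ × (Fin m → ℂ) × T =>
        ((Fin.cons p.1 p.2.1 : Fin (m + 1) → ℂ), p.2.2) := by
      refine Differentiable.prodMk (differentiable_pi.2 (Fin.cases ?_ fun i => ?_)) (by fun_prop)
      · exact differentiable_fst
      · simp only [Fin.cons_succ]; fun_prop
    obtain ⟨g, hgd, hgC, hgs⟩ := exists_hasSum_pow_mul (isOpen_ball.prod hB) hR' hRR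
      (hf.comp hcons.differentiableOn hmaps) fun p hp => hC _ (hmaps hp)
    choose c hcd hcC hcs using fun j => ih (hgd j) (hgC j)
    have hbound : ∀ t ∈ B, ∀ β : Fin (m + 1) → ℕ,
        ‖c (β 0) (Fin.tail β) t‖ ≤ C / R' ^ mdeg β := fun t ht β => by
      rw [← Fin.cons_self_tail β, mdeg_cons, pow_add, ← div_div]
      simpa using hcC (β 0) (Fin.tail β) t ht
    refine ⟨fun β => c (β 0) (Fin.tail β), fun β => hcd _ _, fun β t ht => hbound t ht β,
      fun ζ hζ t ht => ?_⟩
    rw [← Fin.cons_self_tail ζ] at hζ ⊢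
    obtain ⟨ha, hw⟩ := (cons_mem_ball_zero_iff hR').1 hζ
    exact hasSum_mpow_cons (hbound t ht) (mem_ball_zero_iff.1 hζ)
      (fun j => by simpa using hcs j _ hw t ht)
      (hgs _ ha (Fin.tail ζ, t) ⟨ball_subset_ball hRR.le hw, ht⟩)

end PowerSeries

/-! ### Conjugation -/

section Conjugation

variable {m : ℕ}

lemma conjW_eq_star (w : Fin m → ℂ) : conjW w = star w := rfl

@[simp] lemma conjW_conjW (w : Fin m → ℂ) : conjW (conjW w) = w := star_star w

@[simp] lemma conjCS_conjCS (t : CS m) : conjCS (conjCS t) = t := star_star t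

@[simp] lemma conjCS_zero : conjCS (0 : CS m) = 0 := star_zero _

@[simp] lemma norm_conjW (w : Fin m → ℂ) : ‖conjW w‖ = ‖w‖ := norm_star w

@[simp] lemma norm_conjCS (t : CS m) : ‖conjCS t‖ = ‖t‖ := norm_star t

@[fun_prop] lemma continuous_conjW : Continuous (conjW : (Fin m → ℂ) → Fin m → ℂ) :=
  continuous_star

@[fun_prop] lemma continuous_conjCS : Continuous (conjCS : CS m → CS m) := continuous_star

lemma conj_mpow (w : Fin m → ℂ) (β : Fin m → ℕ) :
    starRingEnd ℂ (mpow w β) = mpow (conjW w) β := by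
  simp [mpow, conjW]

lemma differentiableAt_conj_comp_conj {E F : Type*} [NormedAddCommGroup E] [NormedSpace ℂ E]
    [StarAddMonoid E] [StarModule ℂ E] [ContinuousStar E] [NormedAddCommGroup F] [NormedSpace ℂ F]
    [StarAddMonoid F] [StarModule ℂ F] [ContinuousStar F] {f : E → F} {x : E}
    (hf : DifferentiableAt ℂ f (star x)) : DifferentiableAt ℂ (star ∘ f ∘ star) x := by
  simpa using DifferentiableAt.star_star hf

lemma prodMk_mem_ball_zero_iff {E F : Type*} [SeminormedAddCommGroup E] [SeminormedAddCommGroup F]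
    {x : E} {y : F} {R : ℝ} : (x, y) ∈ ball (0 : E × F) R ↔ ‖x‖ < R ∧ ‖y‖ < R := by
  rw [mem_ball_zero_iff, Prod.norm_mk, max_lt_iff]

variable {Θ : (Fin m → ℕ) → CS m → ℂ} {R C : ℝ}

/-- The series `Θ(ζ, t)` as a function of one variable, so that it can be differentiated. -/
def thetaFun (Θ : (Fin m → ℕ) → CS m → ℂ) (p : (Fin m → ℂ) × CS m) : ℂ := ThetaSum Θ p.1 p.2

/-- The conjugate series `Θ̄(w, τ)` as a function of one variable. -/
def thetaBarFun (Θ : (Fin m → ℕ) → CS m → ℂ) (p : (Fin m → ℂ) × CS m) : ℂ := ThetaBar Θ p.1 p.2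

lemma thetaBarFun_eq_conj (w : Fin m → ℂ) (τ : CS m) :
    thetaBarFun Θ (w, τ) = starRingEnd ℂ (thetaFun Θ (conjW w, conjCS τ)) := by
  simp only [thetaBarFun, thetaFun, ThetaBar, ThetaSum]
  rw [starRingEnd_apply, tsum_star]
  refine tsum_congr fun β => ?_
  rw [← starRingEnd_apply, map_mul, conj_mpow, conjW_conjW]

lemma NormallyConvergent.differentiableOn_thetaFun (h : NormallyConvergent Θ R C) :
    DifferentiableOn ℂ (thetaFun Θ) (ball 0 R) := h.differentiableOn_thetaSum

lemma NormallyConvergent.differentiableOn_thetaBarFun (h : NormallyConvergent Θ R C) :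
    DifferentiableOn ℂ (thetaBarFun Θ) (ball 0 R) := by
  have heq : thetaBarFun Θ = star ∘ thetaFun Θ ∘ star :=
    funext fun p => thetaBarFun_eq_conj p.1 p.2
  intro p hp
  rw [heq]
  refine (differentiableAt_conj_comp_conj (h.differentiableOn_thetaFun.differentiableAt
    (isOpen_ball.mem_nhds ?_))).differentiableWithinAt
  rwa [mem_ball_zero_iff, norm_star, ← mem_ball_zero_iff]

end Conjugation

/-! ### Jets of Segre varieties -/

section SegreJets

variable {m : ℕ}

lemma perm_indexList_count (L : List (Fin m)) : L.Perm (indexList fun i => L.count i) := by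
  rw [List.perm_iff_count]
  intro a
  simp only [indexList, List.count_flatMap, Function.comp_def, List.count_replicate]
  simp [← List.ofFn_eq_map, List.sum_ofFn]

lemma length_indexList (β : Fin m → ℕ) : (indexList β).length = mdeg β := by
  simp [indexList, mdeg, List.length_flatMap, ← List.ofFn_eq_map, List.sum_ofFn]

lemma mdeg_count (L : List (Fin m)) : mdeg (fun i => L.count i) = L.length := by
  rw [← length_indexList, ← (perm_indexList_count L).length_eq]

/-- The direction of the `i`-th `w`-coordinate in the space of the variables `(w, τ)`. -/
def wDir (i : Fin m) : (Fin m → ℂ) × CS m := (Pi.single i 1, 0)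

/-- The derivative of `Θ̄(w, τ)` in the `w`-directions of `L`, as a function of `τ`. -/
def conjJet (Θ : (Fin m → ℕ) → CS m → ℂ) (w : Fin m → ℂ) (L : List (Fin m)) (τ : CS m) : ℂ :=
  iteratedDirDeriv (L.map wDir) (thetaBarFun Θ) (w, τ)

/-- The common kernel of the differentials at `τ` of the jets of order at most `k` of
`Θ̄(·, τ)` at `w`. -/
def jetKernel (Θ : (Fin m → ℕ) → CS m → ℂ) (w : Fin m → ℂ) (k : ℕ) (τ : CS m) :
    Submodule ℂ (CS m) :=
  ⨅ L : {L : List (Fin m) // L.length ≤ k},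
    LinearMap.ker (fderiv ℂ (conjJet Θ w L.1) τ).toLinearMap

/-- The component of the jet map of Segre varieties indexed by a list of `w`-directions. -/
def segreJetComponent (Θ : (Fin m → ℕ) → CS m → ℂ) (L : List (Fin m))
    (p : CS m × (Fin m → ℂ)) : ℂ :=
  pderivList L (fun s => s.2 - ThetaBar Θ s.1 (p.2, ThetaSum Θ p.2 p.1)) p.1

/-- The differential of `ζ ↦ (ζ, Θ(ζ, t))`. -/
def graphTangent (Θ : (Fin m → ℕ) → CS m → ℂ) (ζ : Fin m → ℂ) (t : CS m) :
    (Fin m → ℂ) →L[ℂ] CS m :=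
  (ContinuousLinearMap.id ℂ (Fin m → ℂ)).prod
    ((fderiv ℂ (thetaFun Θ) (ζ, t)).comp (ContinuousLinearMap.inl ℂ (Fin m → ℂ) (CS m)))

variable {Θ : (Fin m → ℕ) → CS m → ℂ} {R C : ℝ}

lemma mem_jetKernel {w : Fin m → ℂ} {k : ℕ} {τ v : CS m} :
    v ∈ jetKernel Θ w k τ ↔
      ∀ L : List (Fin m), L.length ≤ k → fderiv ℂ (conjJet Θ w L) τ v = 0 := by
  simp [jetKernel, Submodule.mem_iInf]

lemma NormallyConvergent.differentiableOn_conjJet_uncurried (h : NormallyConvergent Θ R C)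
    (L : List (Fin m)) :
    DifferentiableOn ℂ (fun p : (Fin m → ℂ) × CS m => conjJet Θ p.1 L p.2) (ball 0 R) :=
  differentiableOn_iteratedDirDeriv isOpen_ball h.differentiableOn_thetaBarFun (L.map wDir)

lemma NormallyConvergent.differentiableOn_conjJet (h : NormallyConvergent Θ R C) {w : Fin m → ℂ}
    (hw : ‖w‖ < R) (L : List (Fin m)) : DifferentiableOn ℂ (conjJet Θ w L) (ball 0 R) :=
  (h.differentiableOn_conjJet_uncurried L).comp (by fun_prop : DifferentiableOn ℂ
    (fun τ : CS m => (w, τ)) (ball 0 R))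
    fun _ hτ => prodMk_mem_ball_zero_iff.2 ⟨hw, mem_ball_zero_iff.1 hτ⟩

lemma NormallyConvergent.conjJet_perm (h : NormallyConvergent Θ R C) {w : Fin m → ℂ}
    (hw : ‖w‖ < R) {L L' : List (Fin m)} (hL : L.Perm L') :
    EqOn (conjJet Θ w L) (conjJet Θ w L') (ball 0 R) := fun _ hτ =>
  iteratedDirDeriv_perm isOpen_ball h.differentiableOn_thetaBarFun (hL.map wDir)
    (prodMk_mem_ball_zero_iff.2 ⟨hw, mem_ball_zero_iff.1 hτ⟩)

lemma pderivList_sub_eq (h : NormallyConvergent Θ R C) {τ : CS m} (hτ : ‖τ‖ < R)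
    (L : List (Fin m)) : ∀ s : CS m, ‖s.1‖ < R →
      pderivList L (fun s => s.2 - ThetaBar Θ s.1 τ) s
        = (if L = [] then s.2 else 0) - conjJet Θ s.1 L τ := by
  induction L with
  | nil => exact fun _ _ => rfl
  | cons i L ih =>
    intro s hs
    have hev : pderivList L (fun s => s.2 - ThetaBar Θ s.1 τ) =ᶠ[𝓝 s]
        fun s => (if L = [] then s.2 else 0) - conjJet Θ s.1 L τ := by
      filter_upwards [(isOpen_lt (by fun_prop : Continuous fun s : CS m => ‖s.1‖)
        continuous_const).mem_nhds hs] with y hy using ih y hy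
    have hfst : HasFDerivAt (fun s : CS m => if L = [] then s.2 else 0)
        (if L = [] then ContinuousLinearMap.snd ℂ (Fin m → ℂ) ℂ else 0) s := by
      split_ifs
      exacts [hasFDerivAt_snd, hasFDerivAt_const _ _]
    have hpt : HasFDerivAt (fun s : CS m => (s.1, τ))
        ((ContinuousLinearMap.fst ℂ (Fin m → ℂ) ℂ).prod 0) s :=
      hasFDerivAt_fst.prodMk (hasFDerivAt_const _ _)
    have hjet := ((h.differentiableOn_conjJet_uncurried L).differentiableAt (isOpen_ball.mem_nhds
      (prodMk_mem_ball_zero_iff.2 ⟨hs, hτ⟩))).hasFDerivAt.comp s hpt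
    have hdir : (if L = [] then ContinuousLinearMap.snd ℂ (Fin m → ℂ) ℂ else 0)
        (Pi.single i 1, 0) = 0 := by
      split_ifs <;> rfl
    rw [pderivList, pderivW, hev.fderiv_eq, if_neg (List.cons_ne_nil i L), zero_sub]
    refine (DFunLike.congr_fun (hfst.sub hjet).fderiv _).trans ?_
    rw [_root_.sub_apply, hdir, zero_sub]
    rfl

/-- Membership of `((w, z), ζ)` in the domain on which the jets of Segre varieties are defined. -/
structure InJetDomain (Θ : (Fin m → ℕ) → CS m → ℂ) (R : ℝ) (p : CS m × (Fin m → ℂ)) : Prop where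
  norm_fst_lt : ‖p.1‖ < R
  norm_snd_lt : ‖p.2‖ < R
  norm_theta_lt : ‖ThetaSum Θ p.2 p.1‖ < R

variable {p : CS m × (Fin m → ℂ)}

lemma NormallyConvergent.differentiableAt_theta (h : NormallyConvergent Θ R C)
    (hp : InJetDomain Θ R p) :
    DifferentiableAt ℂ (fun y : CS m × (Fin m → ℂ) => ThetaSum Θ y.2 y.1) p := by
  have hθ : DifferentiableAt ℂ (thetaFun Θ) (p.2, p.1) :=
    h.differentiableOn_thetaFun.differentiableAt
      (isOpen_ball.mem_nhds (prodMk_mem_ball_zero_iff.2 ⟨hp.norm_snd_lt, hp.norm_fst_lt⟩))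
  exact hθ.comp p (f := fun y : CS m × (Fin m → ℂ) => (y.2, y.1)) (by fun_prop)

lemma NormallyConvergent.hasFDerivAt_graph (h : NormallyConvergent Θ R C) {ζ : Fin m → ℂ}
    {t : CS m} (hζ : ‖ζ‖ < R) (ht : ‖t‖ < R) :
    HasFDerivAt (fun ζ => (ζ, ThetaSum Θ ζ t)) (graphTangent Θ ζ t) ζ :=
  (hasFDerivAt_id ζ).prodMk (HasFDerivAt.comp ζ (f := fun ζ => (ζ, t))
    (h.differentiableOn_thetaFun.differentiableAt (isOpen_ball.mem_nhds
      (prodMk_mem_ball_zero_iff.2 ⟨hζ, ht⟩))).hasFDerivAt (hasFDerivAt_prodMk_left ζ t))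

lemma NormallyConvergent.eventually_inJetDomain (h : NormallyConvergent Θ R C)
    (hp : InJetDomain Θ R p) : ∀ᶠ y in 𝓝 p, InJetDomain Θ R y := by
  filter_upwards [(continuous_fst.norm.tendsto p).eventually_lt_const hp.norm_fst_lt,
    (continuous_snd.norm.tendsto p).eventually_lt_const hp.norm_snd_lt,
    (h.differentiableAt_theta hp).continuousAt.norm.eventually_lt_const hp.norm_theta_lt]
    with y h1 h2 h3 using ⟨h1, h2, h3⟩

lemma NormallyConvergent.segreJetComponent_eq (h : NormallyConvergent Θ R C)
    (hp : InJetDomain Θ R p) (L : List (Fin m)) : segreJetComponent Θ L p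
      = (if L = [] then p.1.2 else 0) - conjJet Θ p.1.1 L (p.2, ThetaSum Θ p.2 p.1) :=
  pderivList_sub_eq h (by rw [Prod.norm_mk]; exact max_lt hp.norm_snd_lt hp.norm_theta_lt) L p.1
    ((norm_fst_le p.1).trans_lt hp.norm_fst_lt)

lemma NormallyConvergent.differentiableAt_segreJetComponent (h : NormallyConvergent Θ R C)
    (hp : InJetDomain Θ R p) (L : List (Fin m)) : DifferentiableAt ℂ (segreJetComponent Θ L) p := by
  have hjet := (h.differentiableOn_conjJet_uncurried L).differentiableAt
    (x := (p.1.1, (p.2, ThetaSum Θ p.2 p.1))) (isOpen_ball.mem_nhds (prodMk_mem_ball_zero_iff.2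
      ⟨(norm_fst_le p.1).trans_lt hp.norm_fst_lt,
        mem_ball_zero_iff.1 (prodMk_mem_ball_zero_iff.2 ⟨hp.norm_snd_lt, hp.norm_theta_lt⟩)⟩))
  have hpt : DifferentiableAt ℂ (fun y : CS m × (Fin m → ℂ) =>
      (y.1.1, (y.2, ThetaSum Θ y.2 y.1))) p :=
    DifferentiableAt.prodMk (by fun_prop)
      (DifferentiableAt.prodMk (by fun_prop) (h.differentiableAt_theta hp))
  refine DifferentiableAt.congr_of_eventuallyEq (f := fun y : CS m × (Fin m → ℂ) =>
    (if L = [] then y.1.2 else 0) - conjJet Θ y.1.1 L (y.2, ThetaSum Θ y.2 y.1)) ?_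
    ((h.eventually_inJetDomain hp).mono fun y hy => h.segreJetComponent_eq hy L)
  refine DifferentiableAt.sub ?_ (DifferentiableAt.comp p hjet hpt)
  split_ifs <;> fun_prop

lemma NormallyConvergent.fderiv_segreJetComponent_inr (h : NormallyConvergent Θ R C)
    (hp : InJetDomain Θ R p) (L : List (Fin m)) (u : Fin m → ℂ) :
    fderiv ℂ (segreJetComponent Θ L) p (0, u)
      = -fderiv ℂ (conjJet Θ p.1.1 L) (p.2, ThetaSum Θ p.2 p.1) (graphTangent Θ p.2 p.1 u) := by
  have hpartial := HasFDerivAt.comp p.2 (f := fun ζ => (p.1, ζ))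
    (h.differentiableAt_segreJetComponent hp L).hasFDerivAt (hasFDerivAt_prodMk_right p.1 p.2)
  have hjet := (((h.differentiableOn_conjJet ((norm_fst_le p.1).trans_lt hp.norm_fst_lt)
    L).differentiableAt (isOpen_ball.mem_nhds (prodMk_mem_ball_zero_iff.2
      ⟨hp.norm_snd_lt, hp.norm_theta_lt⟩))).hasFDerivAt.comp p.2
    (h.hasFDerivAt_graph hp.norm_snd_lt hp.norm_fst_lt)).const_sub (if L = [] then p.1.2 else 0)
  have hev : ∀ᶠ ζ in 𝓝 p.2, InJetDomain Θ R (p.1, ζ) :=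
    (hasFDerivAt_prodMk_right (𝕜 := ℂ) p.1 p.2).continuousAt.tendsto.eventually
      (h.eventually_inJetDomain hp)
  exact DFunLike.congr_fun (hpartial.unique (hjet.congr_of_eventuallyEq
    (hev.mono fun ζ hζ => h.segreJetComponent_eq hζ L))) u

lemma NormallyConvergent.hasFDerivAt_segreJetMap (h : NormallyConvergent Θ R C)
    (hp : InJetDomain Θ R p) (k : ℕ) : HasFDerivAt (segreJetMap Θ k)
      ((ContinuousLinearMap.fst ℂ (CS m) (Fin m → ℂ)).prod (ContinuousLinearMap.pi
        fun β : Fin m → Fin (k + 1) => if mdeg (fun i => (β i : ℕ)) ≤ k then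
          fderiv ℂ (segreJetComponent Θ (indexList fun i => (β i : ℕ))) p else 0)) p := by
  refine hasFDerivAt_fst.prodMk (hasFDerivAt_pi.2 fun β => ?_)
  split_ifs
  · exact (h.differentiableAt_segreJetComponent hp _).hasFDerivAt
  · exact hasFDerivAt_const _ _

lemma NormallyConvergent.fderiv_segreJetMap_eq_zero_iff (h : NormallyConvergent Θ R C)
    (hp : InJetDomain Θ R p) (k : ℕ) (v : CS m × (Fin m → ℂ)) :
    fderiv ℂ (segreJetMap Θ k) p v = 0 ↔
      v.1 = 0 ∧ graphTangent Θ p.2 p.1 v.2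
        ∈ jetKernel Θ p.1.1 k (p.2, ThetaSum Θ p.2 p.1) := by
  rw [(h.hasFDerivAt_segreJetMap hp k).fderiv, mem_jetKernel, Prod.ext_iff, funext_iff]
  refine and_congr_right fun hv => ?_
  obtain ⟨v₁, u⟩ := v
  obtain rfl : v₁ = 0 := hv
  have hw := (norm_fst_le p.1).trans_lt hp.norm_fst_lt
  have hτ : (p.2, ThetaSum Θ p.2 p.1) ∈ ball (0 : CS m) R :=
    prodMk_mem_ball_zero_iff.2 ⟨hp.norm_snd_lt, hp.norm_theta_lt⟩
  simp only [ContinuousLinearMap.prod_apply, ContinuousLinearMap.pi_apply]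
  constructor
  · intro hβ L hL
    have hcount : ∀ i, L.count i < k + 1 := fun i =>
      Nat.lt_succ_of_le (L.count_le_length.trans hL)
    have hzero := hβ fun i => ⟨L.count i, hcount i⟩
    simp only [mdeg_count, hL, if_true, h.fderiv_segreJetComponent_inr hp, Prod.snd_zero,
      Pi.zero_apply] at hzero
    rw [((h.conjJet_perm hw (perm_indexList_count L)).eventuallyEq_of_mem
      (isOpen_ball.mem_nhds hτ)).fderiv_eq]
    exact neg_eq_zero.1 hzero
  · intro hL β
    split_ifs with hβ
    · rw [h.fderiv_segreJetComponent_inr hp, hL _ (by rwa [length_indexList]), neg_zero]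
      rfl
    · rfl

end SegreJets

/-! ### Reality of the defining equation -/

section Conormal

lemma apply_eq_zero_of_eventually_eq_on_levelSet {E F : Type*} [NormedAddCommGroup E]
    [NormedSpace ℝ E] [CompleteSpace E] [NormedAddCommGroup F] [NormedSpace ℝ F] {ρ : E → ℝ}
    {ρ' : E →L[ℝ] ℝ} {g : E → F} {g' : E →L[ℝ] F} {p : E} (hρ : HasStrictFDerivAt ρ ρ' p)
    (hρ' : ρ' ≠ 0) (hg : HasStrictFDerivAt g g' p) (hconst : ∀ᶠ t in 𝓝 p, ρ t = ρ p → g t = g p)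
    {v : E} (hv : ρ' v = 0) : g' v = 0 := by
  refine SeparatingDual.eq_zero_of_forall_dual_eq_zero (R := ℝ) fun l => ?_
  have hextr : IsLocalExtrOn (fun t => l (g t)) {t | ρ t = ρ p} p :=
    Or.inl ((eventually_nhdsWithin_iff.2 hconst).mono fun t ht => by simp only [ht, le_refl])
  obtain ⟨a, b, hab, hmult⟩ := hextr.exists_multipliers_of_hasStrictFDerivAt_1d hρ
    (l.hasStrictFDerivAt.comp p hg)
  have hb : b ≠ 0 := by
    rintro rfl
    simp only [zero_smul, add_zero, smul_eq_zero, hρ', or_false] at hmult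
    exact hab (by rw [hmult]; rfl)
  simpa [hv, hb] using DFunLike.congr_fun hmult v

/-- `ρ'` is a conormal covector of `M` at `p`: its kernel is annihilated by the differential of
every strictly differentiable function vanishing on `M`. -/
def IsConormalAt {E : Type*} [NormedAddCommGroup E] [NormedSpace ℝ E] (M : Set E) (p : E)
    (ρ' : E →L[ℝ] ℝ) : Prop :=
  ∀ (g : E → ℂ) (g' : E →L[ℝ] ℂ), HasStrictFDerivAt g g' p → (∀ᶠ t in 𝓝 p, t ∈ M → g t = 0) →
    ∀ v, ρ' v = 0 → g' v = 0

lemma IsRealAnalyticHypersurface.exists_isConormalAt {E : Type*} [NormedAddCommGroup E]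
    [NormedSpace ℂ E] [CompleteSpace E] {M : Set E} (hM : IsRealAnalyticHypersurface M) {p : E}
    (hp : p ∈ M) : ∃ ρ' : E →L[ℝ] ℝ, IsConormalAt M p ρ' := by
  obtain ⟨U, ρ, hU, hpU, hρ, hne, hMU⟩ := hM.2 p hp
  have hρp : ρ p = 0 := (hMU ▸ (⟨hp, hpU⟩ : p ∈ M ∩ U) : p ∈ {z ∈ U | ρ z = 0}).2
  refine ⟨fderiv ℝ ρ p, fun g g' hg hgM v hv => apply_eq_zero_of_eventually_eq_on_levelSet
    (hρ p hpU).hasStrictFDerivAt hne hg ?_ hv⟩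
  filter_upwards [hgM, hU.mem_nhds hpU] with t ht htU hlevel
  have htM : t ∈ M ∩ U := hMU ▸ ⟨htU, hlevel.trans hρp⟩
  rw [ht htM.1, hgM.self_of_nhds hp]

lemma hasStrictFDerivAt_restrictScalars {E F : Type*} [NormedAddCommGroup E] [NormedSpace ℂ E]
    [FiniteDimensional ℂ E] [NormedAddCommGroup F] [NormedSpace ℂ F] [CompleteSpace F]
    {f : E → F} {x : E} (hf : ∀ᶠ y in 𝓝 x, DifferentiableAt ℂ f y) :
    HasStrictFDerivAt f ((fderiv ℂ f x).restrictScalars ℝ) x :=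
  ((contDiffAt_nat_of_eventually_differentiableAt hf 1).hasStrictFDerivAt
    (by simp)).restrictScalars ℝ

variable {m : ℕ}

/-- Componentwise conjugation as a real linear map. -/
def conjWL : (Fin m → ℂ) →L[ℝ] (Fin m → ℂ) := ((starL' ℝ : (Fin m → ℂ) ≃L[ℝ] (Fin m → ℂ)) :)

lemma conjWL_apply (w : Fin m → ℂ) : conjWL w = conjW w := rfl

section TotallyReal

variable {ρ' : CS m →L[ℝ] ℝ} {L : CS m × (Fin m → ℂ) →L[ℂ] ℂ}

lemma apply_vertical_eq_zero (hL : ∀ v, ρ' v = 0 → L (v, conjW v.1) = 0) (c : ℂ) :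
    L ((0, c), 0) = 0 := by
  have hker : LinearMap.ker (ρ'.toLinearMap ∘ₗ LinearMap.inr ℝ (Fin m → ℂ) ℂ) ≠ ⊥ :=
    LinearMap.ker_ne_bot_of_finrank_lt (by simp)
  obtain ⟨c₀, hc₀, hne⟩ := Submodule.exists_mem_ne_zero_of_ne_bot hker
  have hzero : L ((0, c₀), 0) = 0 := by
    simpa [conjW_eq_star] using hL (0, c₀) hc₀
  have hsmul : (((0 : Fin m → ℂ), c), (0 : Fin m → ℂ)) = (c / c₀) • ((0, c₀), 0) := by
    simp [hne]
  rw [hsmul, map_smul, hzero, smul_zero]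

lemma apply_conj_graph_eq_zero (hL : ∀ v, ρ' v = 0 → L (v, conjW v.1) = 0) {c : ℂ}
    (hc : ρ' (0, c) ≠ 0) (w : Fin m → ℂ) : L ((w, 0), conjW w) = 0 := by
  have hker : ρ' (w, -(ρ' (w, 0) / ρ' (0, c)) • c) = 0 := by
    have hsplit : ((w, -(ρ' (w, 0) / ρ' (0, c)) • c) : CS m)
        = (w, 0) + -(ρ' (w, 0) / ρ' (0, c)) • (0, c) := by simp
    rw [hsplit, map_add, map_smul, smul_eq_mul]
    field_simp
    ring
  have hsplit : ((w, -(ρ' (w, 0) / ρ' (0, c)) • c), conjW w)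
      = ((w, (0 : ℂ)), conjW w) + ((0, -(ρ' (w, 0) / ρ' (0, c)) • c), 0) := by simp
  simpa only [hsplit, map_add, apply_vertical_eq_zero hL, add_zero] using hL _ hker

/-- The vectors `(v, v̄)` span a maximal totally real subspace, so a complex linear form vanishing
on a real hyperplane of it that is transverse to the `z`-axis vanishes. -/
lemma eq_zero_of_apply_conj_eq_zero (hL : ∀ v, ρ' v = 0 → L (v, conjW v.1) = 0) {c : ℂ}
    (hc : ρ' (0, c) ≠ 0) : L = 0 := by
  have hgraph : ∀ w, L ((w, 0), 0) + L (0, conjW w) = 0 := fun w => by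
    rw [← map_add]
    simpa using apply_conj_graph_eq_zero hL hc w
  have hgraphI : ∀ w, L ((w, 0), 0) - L (0, conjW w) = 0 := fun w => by
    have hI := apply_conj_graph_eq_zero hL hc (I • w)
    have hsplit : ((I • w, (0 : ℂ)), conjW (I • w))
        = I • (((w, 0), 0) - ((0 : CS m), conjW w)) := by
      ext <;> simp [conjW]
    rw [hsplit, map_smul, map_sub] at hI
    exact (smul_eq_zero.1 hI).resolve_left I_ne_zero
  have hfst : ∀ w, L ((w, 0), 0) = 0 := fun w => by
    linear_combination (hgraph w + hgraphI w) / 2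
  have hsnd : ∀ u, L (0, u) = 0 := fun u => by
    have hu := hgraph (conjW u)
    rwa [hfst, zero_add, conjW_conjW] at hu
  refine ContinuousLinearMap.ext fun ⟨⟨w, z⟩, u⟩ => ?_
  have hsplit : ((w, z), u) = ((w, (0 : ℂ)), (0 : Fin m → ℂ)) + ((0, z), 0) + ((0 : CS m), u) := by
    simp
  rw [hsplit, map_add, map_add, hfst, apply_vertical_eq_zero hL, hsnd]
  simp

end TotallyReal

end Conormal

section Reality

variable {m : ℕ} {M : Set (CS m)} {d : DefData m} {p q : CS m}

lemma DefData.IsDefiningSeriesOf.normallyConvergent (hd : d.IsDefiningSeriesOf M) :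
    NormallyConvergent d.Θ (2 * d.r) d.C :=
  ⟨by linarith [hd.1], hd.2.2.1, hd.2.2.2.1⟩

lemma DefData.IsDefiningSeriesOf.norm_lt (hd : d.IsDefiningSeriesOf M)
    (hp : p ∈ ball (0 : CS m) d.r) : ‖p‖ < 2 * d.r := by
  linarith [hd.1, mem_ball_zero_iff.1 hp]

lemma DefData.IsDefiningSeriesOf.thetaFun_eq (hd : d.IsDefiningSeriesOf M) (hp : p ∈ M)
    (hpr : p ∈ ball (0 : CS m) d.r) : thetaFun d.Θ (conjW p.1, p) = starRingEnd ℂ p.2 :=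
  ((hd.2.2.2.2.2 p hpr).1 hp).symm

lemma DefData.IsDefiningSeriesOf.inJetDomain (hd : d.IsDefiningSeriesOf M) (hp : p ∈ M)
    (hpr : p ∈ ball (0 : CS m) d.r) : InJetDomain d.Θ (2 * d.r) (p, conjW p.1) where
  norm_fst_lt := hd.norm_lt hpr
  norm_snd_lt := by
    rw [norm_conjW]
    exact (norm_fst_le p).trans_lt (hd.norm_lt hpr)
  norm_theta_lt := by
    change ‖thetaFun d.Θ (conjW p.1, p)‖ < _
    rw [hd.thetaFun_eq hp hpr, RCLike.norm_conj]
    exact (norm_snd_le p).trans_lt (hd.norm_lt hpr)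

lemma DefData.IsDefiningSeriesOf.thetaBarFun_eq (hd : d.IsDefiningSeriesOf M) (hp : p ∈ M)
    (hpr : p ∈ ball (0 : CS m) d.r) : thetaBarFun d.Θ (p.1, conjCS p) = p.2 := by
  rw [thetaBarFun_eq_conj, conjCS_conjCS, hd.thetaFun_eq hp hpr, Complex.conj_conj]

lemma hasStrictFDerivAt_conjW_fst (p : CS m) : HasStrictFDerivAt (fun t : CS m => conjW t.1)
    (conjWL.comp (ContinuousLinearMap.fst ℝ (Fin m → ℂ) ℂ)) p :=
  (conjWL.comp (ContinuousLinearMap.fst ℝ (Fin m → ℂ) ℂ)).hasStrictFDerivAt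

/-- Otherwise conjugation of the `z`-coordinate would be complex linear. -/
lemma IsConormalAt.exists_apply_vertical_ne_zero (hd : d.IsDefiningSeriesOf M) (hp : p ∈ M)
    (hpr : p ∈ ball (0 : CS m) d.r) {ρ' : CS m →L[ℝ] ℝ} (hρ' : IsConormalAt M p ρ') :
    ∃ c : ℂ, ρ' (0, c) ≠ 0 := by
  by_contra! hall
  have hmem : (conjW p.1, p) ∈ ball (0 : (Fin m → ℂ) × CS m) (2 * d.r) :=
    prodMk_mem_ball_zero_iff.2 ⟨(hd.inJetDomain hp hpr).norm_snd_lt, hd.norm_lt hpr⟩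
  have hθ : HasStrictFDerivAt (fun t : CS m => thetaFun d.Θ (conjW t.1, t))
      (((fderiv ℂ (thetaFun d.Θ) (conjW p.1, p)).restrictScalars ℝ).comp
        ((conjWL.comp (ContinuousLinearMap.fst ℝ (Fin m → ℂ) ℂ)).prod
          (ContinuousLinearMap.id ℝ (CS m)))) p :=
    HasStrictFDerivAt.comp p (f := fun t : CS m => (conjW t.1, t))
      (hasStrictFDerivAt_restrictScalars
        (hd.normallyConvergent.differentiableOn_thetaFun.eventually_differentiableAt
          (isOpen_ball.mem_nhds hmem)))
      ((hasStrictFDerivAt_conjW_fst p).prodMk (hasStrictFDerivAt_id p))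
  have hconj : HasStrictFDerivAt (fun t : CS m => starRingEnd ℂ t.2)
      ((Complex.conjCLE : ℂ →L[ℝ] ℂ).comp (ContinuousLinearMap.snd ℝ (Fin m → ℂ) ℂ)) p :=
    ((Complex.conjCLE : ℂ →L[ℝ] ℂ).comp
      (ContinuousLinearMap.snd ℝ (Fin m → ℂ) ℂ)).hasStrictFDerivAt
  have hlin : ∀ c : ℂ,
      starRingEnd ℂ c = fderiv ℂ (thetaFun d.Θ) (conjW p.1, p) (0, (0, c)) := fun c => by
    have hzero := hρ' _ _ (hconj.sub hθ) (by
      filter_upwards [isOpen_ball.mem_nhds hpr] with t htr ht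
      rw [Pi.sub_apply, hd.thetaFun_eq ht htr, sub_self]) (0, c) (hall c)
    simpa [sub_eq_zero, conjWL_apply, conjW_eq_star] using hzero
  have hI : ((0 : Fin m → ℂ), ((0 : Fin m → ℂ), I)) = I • (0, (0, 1)) := by simp
  have hcontra := hlin I
  rw [hI, map_smul, ← hlin 1] at hcontra
  simp [neg_eq_iff_add_eq_zero, ← two_mul] at hcontra

lemma fderiv_eq_zero_of_vanishing (hM : IsRealAnalyticHypersurface M)
    (hd : d.IsDefiningSeriesOf M) (hp : p ∈ M) (hpr : p ∈ ball (0 : CS m) d.r)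
    {f : CS m × (Fin m → ℂ) → ℂ} (hf : ∀ᶠ y in 𝓝 (p, conjW p.1), DifferentiableAt ℂ f y)
    (hzero : ∀ᶠ t in 𝓝 p, t ∈ M → f (t, conjW t.1) = 0) : fderiv ℂ f (p, conjW p.1) = 0 := by
  obtain ⟨ρ', hρ'⟩ := hM.exists_isConormalAt hp
  obtain ⟨c, hc⟩ := hρ'.exists_apply_vertical_ne_zero hd hp hpr
  refine eq_zero_of_apply_conj_eq_zero (fun v hv => ?_) hc
  exact hρ' _ _ (HasStrictFDerivAt.comp p (f := fun t : CS m => (t, conjW t.1))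
    (hasStrictFDerivAt_restrictScalars hf)
    ((hasStrictFDerivAt_id p).prodMk (hasStrictFDerivAt_conjW_fst p))) hzero v hv

/-- The points `(t, t̄)` with `t ∈ M` form a uniqueness set in the complexification of `M`. -/
lemma eventually_eq_zero_of_vanishing (hM : IsRealAnalyticHypersurface M)
    (hd : d.IsDefiningSeriesOf M) (hq : q ∈ M) (hqr : q ∈ ball (0 : CS m) d.r)
    {f : CS m × (Fin m → ℂ) → ℂ} {U : Set (CS m × (Fin m → ℂ))} (hU : IsOpen U)
    (hqU : (q, conjW q.1) ∈ U) (hf : DifferentiableOn ℂ f U)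
    (hzero : ∀ t ∈ M, t ∈ ball (0 : CS m) d.r → (t, conjW t.1) ∈ U → f (t, conjW t.1) = 0) :
    ∀ᶠ y in 𝓝 (q, conjW q.1), f y = 0 := by
  have hjets : ∀ L : List (CS m × (Fin m → ℂ)), ∀ t ∈ M, t ∈ ball (0 : CS m) d.r →
      (t, conjW t.1) ∈ U → iteratedDirDeriv L f (t, conjW t.1) = 0 := by
    intro L
    induction L with
    | nil => exact hzero
    | cons v L ih =>
      intro t ht htr htU
      rw [iteratedDirDeriv_cons]
      have hev := fderiv_eq_zero_of_vanishing hM hd ht htr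
        ((differentiableOn_iteratedDirDeriv hU hf L).eventually_differentiableAt (hU.mem_nhds htU))
        (by
          filter_upwards [isOpen_ball.mem_nhds htr,
            (by fun_prop : Continuous fun t : CS m => (t, conjW t.1)).continuousAt.preimage_mem_nhds
              (hU.mem_nhds htU)] with y hyr hyU hy using ih y hy hyr hyU)
      simp only [hev, _root_.zero_apply]
  obtain ⟨ε, hε, hball⟩ := Metric.isOpen_iff.1 hU _ hqU
  filter_upwards [ball_mem_nhds _ hε] with y hy
  exact eqOn_zero_of_iteratedDirDeriv_replicate_eq_zero (hf.mono hball)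
    (fun v n => hjets _ q hq hqr hqU) hy

/-- A normally convergent series whose conjugate defines the same germ of a complex hypersurface
`M^c` of `ℂⁿ × ℂⁿ` at a point `(q, q̄)`. It retains what is needed of a defining series of `M`, for
`q ∈ M`. -/
structure RealSeriesAt (Θ : (Fin m → ℕ) → CS m → ℂ) (R C : ℝ) (q : CS m) : Prop extends
    NormallyConvergent Θ R C where
  norm_lt : ‖q‖ < R
  thetaBarFun_eq : thetaBarFun Θ (q.1, conjCS q) = q.2
  eventually_iff : ∀ᶠ p : CS m × CS m in 𝓝 (q, conjCS q),
    (p.2.2 = thetaFun Θ (p.2.1, p.1) ↔ p.1.2 = thetaBarFun Θ (p.1.1, p.2))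

lemma eventually_eq_thetaBarFun (hM : IsRealAnalyticHypersurface M) (hd : d.IsDefiningSeriesOf M)
    (hq : q ∈ M) (hqr : q ∈ ball (0 : CS m) d.r) : ∀ᶠ p : CS m × CS m in 𝓝 (q, conjCS q),
      p.2.2 = thetaFun d.Θ (p.2.1, p.1) → p.1.2 = thetaBarFun d.Θ (p.1.1, p.2) := by
  have hn := hd.normallyConvergent
  have hvanish := eventually_eq_zero_of_vanishing hM hd hq hqr
    (f := segreJetComponent d.Θ []) (U := {p | InJetDomain d.Θ (2 * d.r) p})
    (isOpen_iff_mem_nhds.2 fun _ hp => hn.eventually_inJetDomain hp) (hd.inJetDomain hq hqr)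
    (fun _ hp => (hn.differentiableAt_segreJetComponent hp []).differentiableWithinAt)
    (fun t ht htr _ => by
      change t.2 - thetaBarFun d.Θ (t.1, (conjW t.1, thetaFun d.Θ (conjW t.1, t))) = 0
      rw [hd.thetaFun_eq ht htr, sub_eq_zero]
      exact (hd.thetaBarFun_eq ht htr).symm)
  have hcont : ContinuousAt (fun p : CS m × CS m => (p.1, p.2.1)) (q, conjCS q) := by fun_prop
  filter_upwards [hcont.eventually hvanish] with p hp h
  change p.1.2 - thetaBarFun d.Θ (p.1.1, (p.2.1, thetaFun d.Θ (p.2.1, p.1))) = 0 at hp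
  rw [← h] at hp
  exact sub_eq_zero.1 hp

lemma DefData.IsDefiningSeriesOf.realSeriesAt (hd : d.IsDefiningSeriesOf M)
    (hM : IsRealAnalyticHypersurface M) (hq : q ∈ M) (hqr : q ∈ ball (0 : CS m) d.r) :
    RealSeriesAt d.Θ (2 * d.r) d.C q where
  toNormallyConvergent := hd.normallyConvergent
  norm_lt := hd.norm_lt hqr
  thetaBarFun_eq := hd.thetaBarFun_eq hq hqr
  eventually_iff := by
    have himp := eventually_eq_thetaBarFun hM hd hq hqr
    have hswap : Tendsto (fun p : CS m × CS m => (conjCS p.2, conjCS p.1)) (𝓝 (q, conjCS q))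
        (𝓝 (q, conjCS q)) := by
      simpa using (by fun_prop : Continuous fun p : CS m × CS m =>
        (conjCS p.2, conjCS p.1)).tendsto (q, conjCS q)
    filter_upwards [himp, hswap.eventually himp] with p h1 h2
    refine ⟨h1, fun h => ?_⟩
    have h3 : starRingEnd ℂ p.2.2 = thetaBarFun d.Θ (conjW p.2.1, conjCS p.1) := h2 (by
      change starRingEnd ℂ p.1.2 = thetaFun d.Θ (conjW p.1.1, conjCS p.2)
      rw [h, thetaBarFun_eq_conj, Complex.conj_conj])
    rw [thetaBarFun_eq_conj, conjW_conjW, conjCS_conjCS] at h3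
    exact (starRingEnd ℂ).injective h3

end Reality

/-! ### Rank of the jet map -/

section JetRank

variable {m : ℕ} {Θ : (Fin m → ℕ) → CS m → ℂ} {R C : ℝ} {q : CS m}

/-- The point above `q.1` of the Segre variety defined by `τ`. -/
def segrePoint (Θ : (Fin m → ℕ) → CS m → ℂ) (q τ : CS m) : CS m := (q.1, conjJet Θ q.1 [] τ)

lemma RealSeriesAt.differentiableAt_conjJet (h : RealSeriesAt Θ R C q) (L : List (Fin m))
    {τ : CS m} (hτ : ‖τ‖ < R) : DifferentiableAt ℂ (conjJet Θ q.1 L) τ :=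
  (h.differentiableOn_conjJet ((norm_fst_le q).trans_lt h.norm_lt) L).differentiableAt
    (isOpen_ball.mem_nhds (mem_ball_zero_iff.2 hτ))

lemma RealSeriesAt.norm_conjCS_lt (h : RealSeriesAt Θ R C q) : ‖conjCS q‖ < R := by
  rw [norm_conjCS]
  exact h.norm_lt

lemma RealSeriesAt.eventually_norm_lt (h : RealSeriesAt Θ R C q) :
    ∀ᶠ τ in 𝓝 (conjCS q), ‖τ‖ < R :=
  (continuous_norm.tendsto _).eventually_lt_const h.norm_conjCS_lt

lemma RealSeriesAt.tendsto_segrePoint (h : RealSeriesAt Θ R C q) :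
    Tendsto (segrePoint Θ q) (𝓝 (conjCS q)) (𝓝 q) := by
  have htendsto : Tendsto (segrePoint Θ q) (𝓝 (conjCS q)) (𝓝 (segrePoint Θ q (conjCS q))) :=
    continuousAt_const.prodMk (h.differentiableAt_conjJet [] h.norm_conjCS_lt).continuousAt
  have hbase : segrePoint Θ q (conjCS q) = q := Prod.ext rfl h.thetaBarFun_eq
  rwa [hbase] at htendsto

lemma RealSeriesAt.eventually_eq_theta_segrePoint (h : RealSeriesAt Θ R C q) :
    ∀ᶠ τ in 𝓝 (conjCS q), τ.2 = ThetaSum Θ τ.1 (segrePoint Θ q τ) := by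
  filter_upwards [(h.tendsto_segrePoint.prodMk_nhds tendsto_id).eventually h.eventually_iff]
    with τ hτ using hτ.2 rfl

lemma RealSeriesAt.eventually_graphTangent_eq (h : RealSeriesAt Θ R C q) :
    ∀ᶠ τ in 𝓝 (conjCS q), ∀ v, fderiv ℂ (conjJet Θ q.1 []) τ v = 0 →
      graphTangent Θ τ.1 (segrePoint Θ q τ) v.1 = v := by
  filter_upwards [h.eventually_eq_theta_segrePoint.eventually_nhds, h.eventually_norm_lt,
    h.tendsto_segrePoint.norm.eventually_lt_const h.norm_lt] with τ heq hτ hpt v hv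
  have hpt' : HasFDerivAt (fun τ : CS m => (τ.1, segrePoint Θ q τ))
      ((ContinuousLinearMap.fst ℂ _ _).prod
        ((0 : CS m →L[ℂ] (Fin m → ℂ)).prod (fderiv ℂ (conjJet Θ q.1 []) τ))) τ :=
    hasFDerivAt_fst.prodMk ((hasFDerivAt_const q.1 τ).prodMk
      (h.differentiableAt_conjJet [] hτ).hasFDerivAt)
  have hθ := (h.differentiableOn_thetaFun.differentiableAt (isOpen_ball.mem_nhds
    (prodMk_mem_ball_zero_iff.2 ⟨(norm_fst_le τ).trans_lt hτ, hpt⟩))).hasFDerivAt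
  have hsection : (fun τ : CS m => τ.2) =ᶠ[𝓝 τ]
      thetaFun Θ ∘ fun τ => (τ.1, segrePoint Θ q τ) := heq
  have hsnd : fderiv ℂ (thetaFun Θ) (τ.1, segrePoint Θ q τ)
      (v.1, ((0 : Fin m → ℂ), fderiv ℂ (conjJet Θ q.1 []) τ v)) = v.2 :=
    DFunLike.congr_fun (((hθ.comp τ hpt').congr_of_eventuallyEq hsection).unique hasFDerivAt_snd) v
  rw [hv] at hsnd
  exact Prod.ext rfl hsnd

lemma RealSeriesAt.fderiv_conjJet_nil_ne_zero (h : RealSeriesAt Θ R C q) :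
    fderiv ℂ (conjJet Θ q.1 []) (conjCS q) ≠ 0 := by
  intro hzero
  have hvert := h.eventually_graphTangent_eq.self_of_nhds (0, 1) (by rw [hzero]; rfl)
  rw [map_zero] at hvert
  exact zero_ne_one (congrArg Prod.snd hvert)

lemma NormallyConvergent.finrank_ker_segreJetMap (h : NormallyConvergent Θ R C)
    {p : CS m × (Fin m → ℂ)} (hp : InJetDomain Θ R p) (k : ℕ)
    (hgraph : ∀ v ∈ jetKernel Θ p.1.1 k (p.2, ThetaSum Θ p.2 p.1),
      graphTangent Θ p.2 p.1 v.1 = v) :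
    Module.finrank ℂ (LinearMap.ker (fderiv ℂ (segreJetMap Θ k) p).toLinearMap)
      = Module.finrank ℂ (jetKernel Θ p.1.1 k (p.2, ThetaSum Θ p.2 p.1)) := by
  set T : CS m × (Fin m → ℂ) →ₗ[ℂ] CS m :=
    (graphTangent Θ p.2 p.1).toLinearMap ∘ₗ LinearMap.snd ℂ _ _
  set K := LinearMap.ker (fderiv ℂ (segreJetMap Θ k) p).toLinearMap
  have hker (v) : v ∈ K ↔ v.1 = 0 ∧ T v ∈ jetKernel Θ p.1.1 k (p.2, ThetaSum Θ p.2 p.1) :=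
    h.fderiv_segreJetMap_eq_zero_iff hp k v
  have hrange : LinearMap.range (T.domRestrict K)
      = jetKernel Θ p.1.1 k (p.2, ThetaSum Θ p.2 p.1) := by
    ext v
    constructor
    · rintro ⟨⟨u, hu⟩, rfl⟩
      exact ((hker u).1 hu).2
    · intro hv
      have hT : T (0, v.1) = v := hgraph v hv
      exact ⟨⟨(0, v.1), (hker _).2 ⟨rfl, by rwa [hT]⟩⟩, hT⟩
  have hinj : Function.Injective (T.domRestrict K) := by
    refine (injective_iff_map_eq_zero _).2 fun ⟨u, hu⟩ h0 => ?_
    exact Subtype.ext (Prod.ext ((hker u).1 hu).1 (congrArg Prod.fst h0))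
  rw [← hrange, LinearMap.finrank_range_of_inj hinj]

lemma RealSeriesAt.eventually_finrank_jetKernel (h : RealSeriesAt Θ R C q) {χ k : ℕ}
    (hconst : SegreConstRankNear Θ k (m + 1 + χ) q) :
    ∀ᶠ τ in 𝓝 (conjCS q), Module.finrank ℂ (jetKernel Θ q.1 k τ) = m - χ := by
  have hfst : Tendsto (fun τ : CS m => τ.1) (𝓝 (conjCS q)) (𝓝 (conjW q.1)) :=
    continuous_fst.tendsto (conjCS q)
  filter_upwards [h.eventually_norm_lt, h.tendsto_segrePoint.norm.eventually_lt_const h.norm_lt,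
    (h.tendsto_segrePoint.prodMk_nhds hfst).eventually hconst, h.eventually_eq_theta_segrePoint,
    h.eventually_graphTangent_eq] with τ hτ hpt hrank heq hgraph
  have hτeq : (τ.1, ThetaSum Θ τ.1 (segrePoint Θ q τ)) = τ := Prod.ext rfl heq.symm
  have hdom : InJetDomain Θ R (segrePoint Θ q τ, τ.1) :=
    ⟨hpt, (norm_fst_le τ).trans_lt hτ, by
      rw [← heq]
      exact (norm_snd_le τ).trans_lt hτ⟩
  have hdim := LinearMap.finrank_range_add_finrank_ker
    (fderiv ℂ (segreJetMap Θ k) (segrePoint Θ q τ, τ.1)).toLinearMap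
  rw [h.finrank_ker_segreJetMap hdom k fun v hv => hgraph v (by
      rw [hτeq] at hv
      exact mem_jetKernel.1 hv [] (Nat.zero_le k)), hτeq,
    show Module.finrank ℂ (LinearMap.range
      (fderiv ℂ (segreJetMap Θ k) (segrePoint Θ q τ, τ.1)).toLinearMap) = m + 1 + χ from hrank,
    Module.finrank_prod, Module.finrank_prod, Module.finrank_fin_fun, Module.finrank_self] at hdim
  change m + 1 + χ + Module.finrank ℂ (jetKernel Θ q.1 k τ) = m + 1 + m at hdim
  omega

end JetRank

/-! ### Linear algebra of adapted coordinates -/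

section LinearAlgebra

variable {K V W : Type*} [Field K] [AddCommGroup V] [Module K V] [AddCommGroup W] [Module K W]

lemma exists_linearIndependent_cons {a : W} (ha : a ≠ 0) {S : Set W} {χ : ℕ}
    (hS : χ + 1 ≤ Module.finrank K (Submodule.span K S)) {n : ℕ}
    (hn : n + 1 ≤ Module.finrank K W) :
    ∃ γ : Fin n → W, LinearIndependent K (Fin.cons a γ : Fin (n + 1) → W) ∧
      ∀ i : Fin n, (i : ℕ) < χ → γ i ∈ S := by
  induction n with
  | zero =>
    exact ⟨Fin.elim0, linearIndependent_finCons.2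
      ⟨linearIndependent_empty_type, by simpa using ha⟩, fun i => i.elim0⟩
  | succ n ih =>
    obtain ⟨γ, hγ, hγS⟩ := ih (by omega)
    set P := Submodule.span K (range (Fin.cons a γ : Fin (n + 1) → W))
    have : FiniteDimensional K P := FiniteDimensional.span_of_finite K (finite_range _)
    have hP : Module.finrank K P = n + 1 := by
      rw [finrank_span_eq_card hγ, Fintype.card_fin]
    have hextend (T : Set W) (hT : n + 1 < Module.finrank K (Submodule.span K T)) :
        ∃ b ∈ T, b ∉ P := by
      by_contra! hTP
      exact (hP.symm ▸ hT).not_ge (Submodule.finrank_mono (Submodule.span_le.2 hTP))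
    obtain ⟨b, hbS, hbP⟩ : ∃ b, (n < χ → b ∈ S) ∧ b ∉ P := by
      by_cases hlt : n < χ
      · obtain ⟨b, hb, hbP⟩ := hextend S (by omega)
        exact ⟨b, fun _ => hb, hbP⟩
      · obtain ⟨b, -, hbP⟩ := hextend univ (by rw [Submodule.span_univ, finrank_top]; omega)
        exact ⟨b, fun h => absurd h hlt, hbP⟩
    refine ⟨Fin.snoc γ b, ?_, Fin.lastCases (fun h => ?_) fun i hi => ?_⟩
    · rw [Fin.cons_snoc_eq_snoc_cons]
      exact linearIndependent_finSnoc.2 ⟨hγ, hbP⟩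
    · rw [Fin.snoc_last]
      exact hbS h
    · rw [Fin.snoc_castSucc]
      exact hγS i hi

lemma exists_linearEquiv_adapted {m χ : ℕ} [FiniteDimensional K V]
    (hV : Module.finrank K V = m + 1) {ι : Type*} (α : ι → Module.Dual K V) {i₀ : ι}
    (h₀ : α i₀ ≠ 0) (hχ : χ ≤ m)
    (hker : Module.finrank K (⨅ i, LinearMap.ker (α i) : Submodule K V) = m - χ) :
    ∃ A : V ≃ₗ[K] (Fin m → K) × K, (∀ v, (A v).2 = α i₀ v) ∧
      ∀ i : Fin m, (i : ℕ) < χ → ∃ j, ∀ v, (A v).1 i = α j v := by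
  have hspan : χ + 1 ≤ Module.finrank K (Submodule.span K (range α)) := by
    have hcoann : (Submodule.span K (range α)).dualCoannihilator = ⨅ i, LinearMap.ker (α i) := by
      ext v
      rw [← SetLike.mem_coe, Submodule.coe_dualCoannihilator_span]
      simp [Submodule.mem_iInf]
    have hdim := Subspace.finrank_add_finrank_dualCoannihilator_eq (Submodule.span K (range α))
    rw [hcoann, hker, hV] at hdim
    omega
  obtain ⟨γ, hγ, hγα⟩ := exists_linearIndependent_cons h₀ hspan
    (n := m) (by rw [Subspace.dual_finrank_eq, hV])
  have hγtop := hγ.span_eq_top_of_card_eq_finrank' (by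
    rw [Fintype.card_fin, Subspace.dual_finrank_eq, hV])
  have hinj : Function.Injective ((LinearMap.pi γ).prod (α i₀)) := by
    refine (injective_iff_map_eq_zero _).2 fun v hv => ?_
    refine (Module.forall_dual_apply_eq_zero_iff K v).1 fun φ => ?_
    have hφ : φ ∈ Submodule.span K (range (Fin.cons (α i₀) γ : Fin (m + 1) → Module.Dual K V)) :=
      hγtop ▸ Submodule.mem_top
    refine (Submodule.span_le (p := LinearMap.ker (Module.Dual.eval K V v))).2 ?_ hφ
    rintro _ ⟨i, rfl⟩
    refine Fin.cases ?_ (fun i => ?_) i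
    · exact congrArg Prod.snd hv
    · exact congrFun (congrArg Prod.fst hv) i
  refine ⟨LinearMap.linearEquivOfInjective _ hinj (by simp [hV]), fun v => rfl, fun i hi => ?_⟩
  obtain ⟨j, hj⟩ := hγα i hi
  exact ⟨j, fun v => LinearMap.congr_fun hj.symm v⟩

lemma mem_of_map_le_of_finrank_le {f : V →ₗ[K] W} (hf : Function.Injective f)
    {p : Submodule K V} {p' : Submodule K W} [FiniteDimensional K p'] (hle : p.map f ≤ p')
    (hdim : Module.finrank K p' ≤ Module.finrank K p) {v : V} (hv : f v ∈ p') : v ∈ p := by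
  have hmap : p.map f = p' := Submodule.eq_of_le_of_finrank_le hle
    (hdim.trans_eq (Submodule.equivMapOfInjective f hf p).finrank_eq)
  rw [← hmap] at hv
  obtain ⟨u, hu, huv⟩ := hv
  exact hf huv ▸ hu

end LinearAlgebra

section Truncation

variable {m : ℕ}

/-- The projection of `ℂᵐ` killing the coordinates of index at least `a`. -/
def truncW (m a : ℕ) : (Fin m → ℂ) →L[ℂ] (Fin m → ℂ) :=
  ContinuousLinearMap.pi fun i => if (i : ℕ) < a then ContinuousLinearMap.proj i else 0

/-- The projection of `ℂᵐ⁺¹` killing the `w`-coordinates of index at least `a`. -/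
def truncCS (m a : ℕ) : CS m →L[ℂ] CS m :=
  (truncW m a).prodMap (ContinuousLinearMap.id ℂ ℂ)

lemma truncW_apply (a : ℕ) (w : Fin m → ℂ) (i : Fin m) :
    truncW m a w i = if (i : ℕ) < a then w i else 0 := by
  simp only [truncW, ContinuousLinearMap.pi_apply]
  split_ifs <;> rfl

@[simp] lemma truncW_truncW (a : ℕ) (w : Fin m → ℂ) :
    truncW m a (truncW m a w) = truncW m a w := by
  funext i
  simp only [truncW_apply]
  split_ifs <;> rfl

lemma norm_truncW_le (a : ℕ) (w : Fin m → ℂ) : ‖truncW m a w‖ ≤ ‖w‖ := by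
  refine (pi_norm_le_iff_of_nonneg (norm_nonneg _)).2 fun i => ?_
  rw [truncW_apply]
  split_ifs
  · exact norm_le_pi_norm w i
  · simp

lemma truncCS_apply (a : ℕ) (t : CS m) : truncCS m a t = (truncW m a t.1, t.2) := rfl

lemma truncCS_truncCS (a : ℕ) (t : CS m) : truncCS m a (truncCS m a t) = truncCS m a t := by
  simp [truncCS_apply]

lemma norm_truncCS_le (a : ℕ) (t : CS m) : ‖truncCS m a t‖ ≤ ‖t‖ :=
  max_le ((norm_truncW_le a t.1).trans (norm_fst_le t)) (norm_snd_le t)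

lemma truncCS_mem_ball {a : ℕ} {ρ : ℝ} {t : CS m} (ht : t ∈ ball (0 : CS m) ρ) :
    truncCS m a t ∈ ball (0 : CS m) ρ :=
  mem_ball_zero_iff.2 ((norm_truncCS_le a t).trans_lt (mem_ball_zero_iff.1 ht))

lemma truncCS_conjCS (a : ℕ) (t : CS m) : truncCS m a (conjCS t) = conjCS (truncCS m a t) := by
  refine Prod.ext (funext fun i => ?_) rfl
  simp only [truncCS_apply, truncW_apply, conjCS, conjW]
  split_ifs <;> simp

lemma truncCS_eq_zero_iff {a : ℕ} {t : CS m} :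
    truncCS m a t = 0 ↔ (∀ i : Fin m, (i : ℕ) < a → t.1 i = 0) ∧ t.2 = 0 := by
  simp [truncCS_apply, Prod.ext_iff, funext_iff, truncW_apply]

lemma finrank_ker_truncCS_le (a : ℕ) :
    Module.finrank ℂ (LinearMap.ker (truncCS m a).toLinearMap) ≤ m - a := by
  set T : CS m →ₗ[ℂ] (Fin (m - a) → ℂ) := LinearMap.pi fun j =>
    (LinearMap.proj (⟨(j : ℕ) + a, by omega⟩ : Fin m)) ∘ₗ LinearMap.fst ℂ _ _
  have hinj : Function.Injective
      (T.domRestrict (LinearMap.ker (truncCS m a).toLinearMap)) := by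
    refine (injective_iff_map_eq_zero _).2 fun ⟨u, hu⟩ hTu => ?_
    obtain ⟨hlow, hlast⟩ := truncCS_eq_zero_iff.1 hu
    refine Subtype.ext (Prod.ext (funext fun i => ?_) hlast)
    by_cases hi : (i : ℕ) < a
    · exact hlow i hi
    · have hhigh : u.1 ⟨(i : ℕ) - a + a, by omega⟩ = 0 :=
        congrFun hTu ⟨(i : ℕ) - a, by omega⟩
      simp only [Nat.sub_add_cancel (not_lt.1 hi)] at hhigh
      exact hhigh
  simpa using LinearMap.finrank_le_finrank_of_injective hinj

end Truncation

/-! ### Straightening coordinates -/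

section Calculus

variable {E F : Type*} [NormedAddCommGroup E] [NormedSpace ℂ E]
  [NormedAddCommGroup F] [NormedSpace ℂ F]

lemma eq_of_fderiv_apply_sub_eq_zero {f : E → F} {s : Set E} (hs : Convex ℝ s)
    (hf : ∀ z ∈ s, DifferentiableAt ℂ f z) {x y : E} (hx : x ∈ s) (hy : y ∈ s)
    (h : ∀ z ∈ s, fderiv ℂ f z (y - x) = 0) : f y = f x := by
  have hseg (l : ℝ) (hl : l ∈ Icc (0 : ℝ) 1) : x + (l : ℂ) • (y - x) ∈ s := by
    rw [Complex.coe_smul]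
    exact hs.add_smul_sub_mem hx hy hl
  have hderiv (l : ℝ) (hl : l ∈ Icc (0 : ℝ) 1) :
      HasDerivAt (fun l : ℝ => f (x + (l : ℂ) • (y - x))) 0 l := by
    have hline := hasDerivAt_comp_line (hf _ (hseg l hl))
    rw [h _ (hseg l hl)] at hline
    simpa [Function.comp_def] using hline.scomp l Complex.ofRealCLM.hasDerivAt
  have hconst := constant_of_has_deriv_right_zero
    (fun l hl => (hderiv l hl).continuousAt.continuousWithinAt)
    (fun l hl => (hderiv l (Ico_subset_Icc_self hl)).hasDerivWithinAt)
    1 (right_mem_Icc.2 zero_le_one)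
  simpa using hconst

lemma fderiv_apply_fderiv_of_eventually_leftInverse {f : E → F} {g : F → E} {x : E}
    (hf : DifferentiableAt ℂ f x) (hg : DifferentiableAt ℂ g (f x))
    (h : ∀ᶠ y in 𝓝 x, g (f y) = y) (v : E) : fderiv ℂ g (f x) (fderiv ℂ f x v) = v :=
  DFunLike.congr_fun
    (((hg.hasFDerivAt.comp x hf.hasFDerivAt).congr_of_eventuallyEq (f₁ := id)
      (h.mono fun _ hy => hy.symm)).unique (hasFDerivAt_id x)) v

end Calculus

section Straightening

variable {m χ k₀ : ℕ} {Θ : (Fin m → ℕ) → CS m → ℂ} {R C : ℝ} {q : CS m} {G Γ : CS m → CS m}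

/-- Holomorphic coordinates `G` near `q̄`, with local inverse `Γ`, whose last component and whose
first `χ` components are jets of order at most `k₀` at `q.1` of the Segre varieties. -/
structure Straightening (Θ : (Fin m → ℕ) → CS m → ℂ) (q : CS m) (χ k₀ : ℕ)
    (G Γ : CS m → CS m) : Prop where
  map_base : G (conjCS q) = 0
  inv_zero : Γ 0 = conjCS q
  eventually_differentiableAt : ∀ᶠ τ in 𝓝 (conjCS q), DifferentiableAt ℂ G τ
  eventually_differentiableAt_inv : ∀ᶠ y in 𝓝 (0 : CS m), DifferentiableAt ℂ Γ y
  eventually_inv_map : ∀ᶠ τ in 𝓝 (conjCS q), Γ (G τ) = τ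
  eventually_map_inv : ∀ᶠ y in 𝓝 (0 : CS m), G (Γ y) = y
  map_snd : ∀ τ, (G τ).2 = conjJet Θ q.1 [] τ - q.2
  exists_jet : ∀ i : Fin m, (i : ℕ) < χ → ∃ L : List (Fin m), L.length ≤ k₀ ∧
    ∀ τ, (G τ).1 i = conjJet Θ q.1 L τ - conjJet Θ q.1 L (conjCS q)

/-- The map with last component the jet of order `0` at `q.1`, with `i`-th component the jet along
`L i` if `i < χ`, and with the components of the linear map `A` otherwise. -/
def jetCoordinates (Θ : (Fin m → ℕ) → CS m → ℂ) (q : CS m) (χ : ℕ) (L : Fin m → List (Fin m))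
    (A : CS m →L[ℂ] CS m) (τ : CS m) : CS m :=
  (fun i => if (i : ℕ) < χ then conjJet Θ q.1 (L i) τ - conjJet Θ q.1 (L i) (conjCS q)
    else (A τ).1 i - (A (conjCS q)).1 i, conjJet Θ q.1 [] τ - q.2)

lemma RealSeriesAt.jetCoordinates_conjCS (h : RealSeriesAt Θ R C q) (L : Fin m → List (Fin m))
    (A : CS m →L[ℂ] CS m) : jetCoordinates Θ q χ L A (conjCS q) = 0 := by
  refine Prod.ext (funext fun i => ?_) (sub_eq_zero.2 h.thetaBarFun_eq)
  simp only [jetCoordinates]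
  split_ifs <;> exact sub_self _

lemma RealSeriesAt.differentiableOn_jetCoordinates (h : RealSeriesAt Θ R C q)
    (L : Fin m → List (Fin m)) (A : CS m →L[ℂ] CS m) :
    DifferentiableOn ℂ (jetCoordinates Θ q χ L A) (ball 0 R) := by
  have hjet (L : List (Fin m)) : DifferentiableOn ℂ (conjJet Θ q.1 L) (ball 0 R) :=
    h.differentiableOn_conjJet ((norm_fst_le q).trans_lt h.norm_lt) L
  refine DifferentiableOn.prodMk (differentiableOn_pi.2 fun i => ?_) ((hjet []).sub_const _)
  split_ifs
  · exact (hjet _).sub_const _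
  · fun_prop

lemma RealSeriesAt.hasFDerivAt_jetCoordinates (h : RealSeriesAt Θ R C q)
    {L : Fin m → List (Fin m)} {A : CS m →L[ℂ] CS m}
    (hsnd : ∀ v, (A v).2 = fderiv ℂ (conjJet Θ q.1 []) (conjCS q) v)
    (hfst : ∀ i : Fin m, (i : ℕ) < χ →
      ∀ v, (A v).1 i = fderiv ℂ (conjJet Θ q.1 (L i)) (conjCS q) v) :
    HasFDerivAt (jetCoordinates Θ q χ L A) A (conjCS q) := by
  have hjet (L : List (Fin m)) (B : CS m →L[ℂ] ℂ) (c : ℂ)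
      (hB : ∀ v, B v = fderiv ℂ (conjJet Θ q.1 L) (conjCS q) v) :
      HasFDerivAt (fun τ => conjJet Θ q.1 L τ - c) B (conjCS q) :=
    ContinuousLinearMap.ext hB ▸
      (h.differentiableAt_conjJet L h.norm_conjCS_lt).hasFDerivAt.sub_const c
  set pr : Fin m → CS m →L[ℂ] ℂ := fun i =>
    (ContinuousLinearMap.proj i).comp (ContinuousLinearMap.fst ℂ (Fin m → ℂ) ℂ)
  refine HasFDerivAt.prodMk (f₁' := ContinuousLinearMap.pi fun i => (pr i).comp A)
    (f₂' := (ContinuousLinearMap.snd ℂ _ _).comp A)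
    (hasFDerivAt_pi.2 fun i => ?_) (hjet [] _ _ hsnd)
  split_ifs with hi
  · exact hjet (L i) _ _ (hfst i hi)
  · exact ((pr i).comp A).hasFDerivAt.sub_const _

lemma RealSeriesAt.exists_straightening (h : RealSeriesAt Θ R C q) (hχ : χ ≤ m)
    (hconst : SegreConstRankNear Θ k₀ (m + 1 + χ) q) :
    ∃ G Γ, Straightening Θ q χ k₀ G Γ := by
  obtain ⟨A, hsnd, hfst⟩ := exists_linearEquiv_adapted (V := CS m) (χ := χ) (by simp)
    (fun L : {L : List (Fin m) // L.length ≤ k₀} =>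
      (fderiv ℂ (conjJet Θ q.1 L.1) (conjCS q)).toLinearMap) (i₀ := ⟨[], Nat.zero_le k₀⟩)
    (fun hzero => h.fderiv_conjJet_nil_ne_zero (ContinuousLinearMap.coe_injective hzero)) hχ
    (h.eventually_finrank_jetKernel hconst).self_of_nhds
  have : Nonempty {L : List (Fin m) // L.length ≤ k₀} := ⟨[], Nat.zero_le k₀⟩
  choose! L hL using hfst
  set A' : CS m ≃L[ℂ] CS m := A.toContinuousLinearEquiv
  set G := jetCoordinates Θ q χ (fun i => (L i).1) (A' : CS m →L[ℂ] CS m)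
  have hG₀ : G (conjCS q) = 0 := h.jetCoordinates_conjCS _ _
  have hGdiff : ∀ᶠ τ in 𝓝 (conjCS q), DifferentiableAt ℂ G τ :=
    (h.differentiableOn_jetCoordinates _ _).eventually_differentiableAt
      (isOpen_ball.mem_nhds (mem_ball_zero_iff.2 h.norm_conjCS_lt))
  have hGA : HasFDerivAt G (A' : CS m →L[ℂ] CS m) (conjCS q) :=
    h.hasFDerivAt_jetCoordinates hsnd hL
  have hG₁ : ContDiffAt ℂ 1 G (conjCS q) := contDiffAt_nat_of_eventually_differentiableAt hGdiff 1
  have hstrict := hG₁.hasStrictFDerivAt' hGA one_ne_zero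
  have hΓ₁ := hG₁.to_localInverse hGA one_ne_zero
  refine ⟨G, hstrict.localInverse G A' (conjCS q), hG₀, ?_, hGdiff, ?_,
    hstrict.eventually_left_inverse, ?_, fun _ => rfl,
    fun i hi => ⟨L i, (L i).2, fun τ => if_pos hi⟩⟩
  · rw [← hG₀]
    exact hstrict.localInverse_apply_image
  · rw [hG₀] at hΓ₁
    exact (hΓ₁.eventually (by simp)).mono fun y hy => hy.differentiableAt one_ne_zero
  · rw [← hG₀]
    exact hstrict.eventually_right_inverse

lemma Straightening.tendsto_inv (hs : Straightening Θ q χ k₀ G Γ) :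
    Tendsto Γ (𝓝 0) (𝓝 (conjCS q)) := by
  have hcont := hs.eventually_differentiableAt_inv.self_of_nhds.continuousAt.tendsto
  rwa [hs.inv_zero] at hcont

lemma Straightening.truncCS_fderiv_apply_eq_zero (hs : Straightening Θ q χ k₀ G Γ)
    (h : RealSeriesAt Θ R C q) {τ u : CS m} (hτ : ‖τ‖ < R) (hG : DifferentiableAt ℂ G τ)
    (hu : u ∈ jetKernel Θ q.1 k₀ τ) : truncCS m χ (fderiv ℂ G τ u) = 0 := by
  have hjet (ℓ : CS m →L[ℂ] ℂ) (L : List (Fin m)) (hL : L.length ≤ k₀) (c : ℂ)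
      (hℓ : ∀ τ, ℓ (G τ) = conjJet Θ q.1 L τ - c) : ℓ (fderiv ℂ G τ u) = 0 := by
    have hcomp : HasFDerivAt (fun τ => ℓ (G τ)) (ℓ.comp (fderiv ℂ G τ)) τ :=
      ℓ.hasFDerivAt.comp τ hG.hasFDerivAt
    simp only [hℓ] at hcomp
    have hunique := ((h.differentiableAt_conjJet L hτ).hasFDerivAt.sub_const c).unique hcomp
    exact (DFunLike.congr_fun hunique u).symm.trans (mem_jetKernel.1 hu L hL)
  refine truncCS_eq_zero_iff.2 ⟨fun i hi => ?_, ?_⟩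
  · obtain ⟨L, hL, hGL⟩ := hs.exists_jet i hi
    exact hjet ((ContinuousLinearMap.proj i).comp (ContinuousLinearMap.fst ℂ _ _)) L hL _ hGL
  · exact hjet (ContinuousLinearMap.snd ℂ _ _) [] (Nat.zero_le k₀) _ hs.map_snd

lemma jetKernel_antitone {w : Fin m → ℂ} {τ : CS m} : Antitone fun k => jetKernel Θ w k τ :=
  fun _ _ hkl _ hv => mem_jetKernel.2 fun L hL => mem_jetKernel.1 hv L (hL.trans hkl)

end Straightening

section Invariance

variable {m χ k₀ : ℕ} {Θ : (Fin m → ℕ) → CS m → ℂ} {R C : ℝ} {q : CS m} {G Γ : CS m → CS m}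

lemma NormallyConvergent.conjJet_eq_iteratedDirDeriv (h : NormallyConvergent Θ R C)
    {w : Fin m → ℂ} (hw : ‖w‖ < R) {τ : CS m} (hτ : ‖τ‖ < R) (L : List (Fin m)) :
    conjJet Θ w L τ = iteratedDirDeriv (L.map fun i => (Pi.single i 1 : Fin m → ℂ))
      (fun y => thetaBarFun Θ (y, τ)) w := by
  rw [iteratedDirDeriv_slice isOpen_ball h.differentiableOn_thetaBarFun _ τ w
    (prodMk_mem_ball_zero_iff.2 ⟨hw, hτ⟩), List.map_map]
  rfl

lemma top_le_span_range_single :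
    ⊤ ≤ Submodule.span ℂ (range fun i : Fin m => (Pi.single i 1 : Fin m → ℂ)) := by
  refine (Pi.basisFun ℂ (Fin m)).span_eq.ge.trans (Submodule.span_mono ?_)
  exact range_subset_iff.2 fun i => ⟨i, (Pi.basisFun_apply ℂ (Fin m) i).symm⟩

lemma NormallyConvergent.thetaBarFun_eq_of_conjJet_eq (h : NormallyConvergent Θ R C)
    {w : Fin m → ℂ} (hw : ‖w‖ < R) {τ τ' : CS m} (hτ : ‖τ‖ < R) (hτ' : ‖τ'‖ < R)
    (heq : ∀ L, conjJet Θ w L τ = conjJet Θ w L τ') :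
    EqOn (fun y => thetaBarFun Θ (y, τ)) (fun y => thetaBarFun Θ (y, τ')) (ball w (R - ‖w‖)) := by
  have hdiff (σ : CS m) (hσ : ‖σ‖ < R) :
      DifferentiableOn ℂ (fun y => thetaBarFun Θ (y, σ)) (ball w (R - ‖w‖)) := by
    refine h.differentiableOn_thetaBarFun.comp (by fun_prop) fun y hy => ?_
    have hy' := norm_le_norm_add_norm_sub' y w
    rw [mem_ball_iff_norm] at hy
    exact prodMk_mem_ball_zero_iff.2 ⟨by linarith, hσ⟩
  refine eqOn_of_iteratedDirDeriv_eq_of_span top_le_span_range_single (sub_pos.2 hw) (hdiff τ hτ)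
    (hdiff τ' hτ') fun L => ?_
  rw [← h.conjJet_eq_iteratedDirDeriv hw hτ, ← h.conjJet_eq_iteratedDirDeriv hw hτ', heq]

/-- The rank condition bounds below the dimension of the kernel of the jets, so this kernel is
carried by `G` onto the directions killed by the truncation. -/
lemma Straightening.eventually_fderiv_conjJet_inv_eq_zero (hs : Straightening Θ q χ k₀ G Γ)
    (h : RealSeriesAt Θ R C q) (hconst : ∀ k ≥ k₀, SegreConstRankNear Θ k (m + 1 + χ) q)
    (L : List (Fin m)) :
    ∀ᶠ y in 𝓝 (0 : CS m), ∀ v, truncCS m χ v = 0 →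
      fderiv ℂ (fun y => conjJet Θ q.1 L (Γ y)) y v = 0 := by
  have hrank := h.eventually_finrank_jetKernel (hconst (max k₀ L.length) (le_max_left _ _))
  filter_upwards [hs.tendsto_inv.eventually hrank, hs.tendsto_inv.eventually h.eventually_norm_lt,
    hs.tendsto_inv.eventually hs.eventually_differentiableAt, hs.eventually_differentiableAt_inv,
    hs.eventually_map_inv.eventually_nhds] with y hdim hnorm hG hΓ hGΓ v hv
  have hinv := fderiv_apply_fderiv_of_eventually_leftInverse hΓ hG hGΓ
  have hinj : Function.Injective (fderiv ℂ G (Γ y)).toLinearMap :=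
    LinearMap.injective_iff_surjective.2 fun u => ⟨_, hinv u⟩
  have hle : (jetKernel Θ q.1 (max k₀ L.length) (Γ y)).map (fderiv ℂ G (Γ y)).toLinearMap
      ≤ LinearMap.ker (truncCS m χ).toLinearMap := by
    rintro _ ⟨u, hu, rfl⟩
    exact hs.truncCS_fderiv_apply_eq_zero h hnorm hG (jetKernel_antitone (le_max_left _ _) hu)
  have hmem : fderiv ℂ Γ y v ∈ jetKernel Θ q.1 (max k₀ L.length) (Γ y) := by
    refine mem_of_map_le_of_finrank_le hinj hle (hdim ▸ finrank_ker_truncCS_le χ) ?_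
    change truncCS m χ (fderiv ℂ G (Γ y) (fderiv ℂ Γ y v)) = 0
    rw [hinv, hv]
  have hchain : HasFDerivAt (fun y => conjJet Θ q.1 L (Γ y)) _ y :=
    (h.differentiableAt_conjJet L hnorm).hasFDerivAt.comp y hΓ.hasFDerivAt
  rw [hchain.fderiv]
  exact mem_jetKernel.1 hmem L (le_max_right _ _)

lemma Straightening.eventually_conjJet_inv_truncCS (hs : Straightening Θ q χ k₀ G Γ)
    (h : RealSeriesAt Θ R C q) (hconst : ∀ k ≥ k₀, SegreConstRankNear Θ k (m + 1 + χ) q)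
    (L : List (Fin m)) :
    ∀ᶠ y in 𝓝 (0 : CS m),
      conjJet Θ q.1 L (Γ y) = conjJet Θ q.1 L (Γ (truncCS m χ y)) := by
  obtain ⟨ρ, hρ, hball⟩ := eventually_nhds_iff_ball.1
    ((hs.eventually_fderiv_conjJet_inv_eq_zero h hconst L).and
      (hs.eventually_differentiableAt_inv.and (hs.tendsto_inv.eventually h.eventually_norm_lt)))
  filter_upwards [ball_mem_nhds _ hρ] with y hy
  refine eq_of_fderiv_apply_sub_eq_zero (f := fun y => conjJet Θ q.1 L (Γ y)) (convex_ball 0 ρ)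
    (fun z hz => (h.differentiableAt_conjJet L (hball z hz).2.2).comp z (hball z hz).2.1)
    (truncCS_mem_ball hy) hy fun z hz => (hball z hz).1 _ ?_
  rw [map_sub, truncCS_truncCS, sub_self]

/-- The identity theorem makes the neighbourhood independent of `L`. -/
lemma Straightening.exists_ball_conjJet_inv_truncCS (hs : Straightening Θ q χ k₀ G Γ)
    (h : RealSeriesAt Θ R C q) (hconst : ∀ k ≥ k₀, SegreConstRankNear Θ k (m + 1 + χ) q) :
    ∃ ρ > 0, ∀ y ∈ ball (0 : CS m) ρ, ‖Γ y‖ < R ∧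
      ∀ L, conjJet Θ q.1 L (Γ y) = conjJet Θ q.1 L (Γ (truncCS m χ y)) := by
  obtain ⟨ρ, hρ, hball⟩ := eventually_nhds_iff_ball.1
    (hs.eventually_differentiableAt_inv.and (hs.tendsto_inv.eventually h.eventually_norm_lt))
  refine ⟨ρ, hρ, fun y hy => ⟨(hball y hy).2, fun L => ?_⟩⟩
  have hdiff : DifferentiableOn ℂ (fun y => conjJet Θ q.1 L (Γ y)) (ball 0 ρ) := fun z hz =>
    ((h.differentiableAt_conjJet L (hball z hz).2).comp z (hball z hz).1).differentiableWithinAt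
  exact sub_eq_zero.1 (eqOn_zero_of_eventually_eq_zero
    (hdiff.sub (hdiff.comp (truncCS m χ).differentiableOn fun _ => truncCS_mem_ball))
    ((hs.eventually_conjJet_inv_truncCS h hconst L).mono fun _ hz => sub_eq_zero.2 hz) hy)

/-- A straightening in which the Segre variety of `Γ y` does not depend on the coordinates of `y`
of index `χ` and higher. -/
structure InvariantStraightening (Θ : (Fin m → ℕ) → CS m → ℂ) (q : CS m) (χ k₀ : ℕ)
    (G Γ : CS m → CS m) : Prop extends Straightening Θ q χ k₀ G Γ where
  eventually_thetaBarFun_eq : ∀ᶠ p : (Fin m → ℂ) × CS m in 𝓝 (q.1, 0),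
    thetaBarFun Θ (p.1, Γ p.2) = thetaBarFun Θ (p.1, Γ (truncCS m χ p.2))

lemma RealSeriesAt.exists_invariantStraightening (h : RealSeriesAt Θ R C q) (hχ : χ ≤ m)
    (hconst : ∀ k ≥ k₀, SegreConstRankNear Θ k (m + 1 + χ) q) :
    ∃ G Γ, InvariantStraightening Θ q χ k₀ G Γ := by
  obtain ⟨G, Γ, hs⟩ := h.exists_straightening hχ (hconst k₀ le_rfl)
  refine ⟨G, Γ, hs, ?_⟩
  obtain ⟨ρ, hρ, hball⟩ := hs.exists_ball_conjJet_inv_truncCS h hconst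
  have hq : ‖q.1‖ < R := (norm_fst_le q).trans_lt h.norm_lt
  filter_upwards [prod_mem_nhds (ball_mem_nhds q.1 (sub_pos.2 hq)) (ball_mem_nhds 0 hρ)] with p hp
  exact h.thetaBarFun_eq_of_conjJet_eq hq (hball _ hp.2).1 (hball _ (truncCS_mem_ball hp.2)).1
    (hball _ hp.2).2 hp.1

end Invariance

/-! ### The complexified hypersurface in straightening coordinates -/

section SegreDefect

variable {m χ k₀ : ℕ} {Θ : (Fin m → ℕ) → CS m → ℂ} {R C : ℝ} {q : CS m} {G Γ : CS m → CS m}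

/-- The conjugate `t ↦ conj (F (conj t))` of a map `F`, holomorphic when `F` is. -/
def conjMap (F : CS m → CS m) (t : CS m) : CS m := conjCS (F (conjCS t))

/-- The defining function of the complexified hypersurface, as a function of `(t, τ)` in the
coordinates given by the inverse straightening `Γ`: its zeros are the points with
`z = Θ̄(w, Γ τ)`, where `(w, z) = conjMap Γ t`. -/
def segreDefect (Θ : (Fin m → ℕ) → CS m → ℂ) (Γ : CS m → CS m) (p : CS m × CS m) : ℂ :=
  (conjMap Γ p.1).2 - thetaBarFun Θ ((conjMap Γ p.1).1, Γ p.2)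

@[simp] lemma conjMap_conjCS (F : CS m → CS m) (t : CS m) :
    conjMap F (conjCS t) = conjCS (F t) := by
  rw [conjMap, conjCS_conjCS]

lemma apply_conjCS (F : CS m → CS m) (t : CS m) : F (conjCS t) = conjCS (conjMap F t) := by
  rw [conjMap, conjCS_conjCS]

lemma eventually_differentiableAt_conjMap {F : CS m → CS m} {x : CS m}
    (hF : ∀ᶠ τ in 𝓝 (conjCS x), DifferentiableAt ℂ F τ) :
    ∀ᶠ t in 𝓝 x, DifferentiableAt ℂ (conjMap F) t :=
  ((continuous_conjCS.tendsto x).eventually hF).mono fun _ => differentiableAt_conj_comp_conj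

lemma eventually_conjMap_comp_conjMap {F F' : CS m → CS m} {x : CS m}
    (hFF : ∀ᶠ τ in 𝓝 (conjCS x), F' (F τ) = τ) : ∀ᶠ t in 𝓝 x, conjMap F' (conjMap F t) = t :=
  ((continuous_conjCS.tendsto x).eventually hFF).mono fun t ht => by
    rw [conjMap, ← apply_conjCS, ht, conjCS_conjCS]

lemma Straightening.conjMap_map_base (hs : Straightening Θ q χ k₀ G Γ) : conjMap G q = 0 := by
  rw [conjMap, hs.map_base, conjCS_zero]

lemma Straightening.conjMap_inv_zero (hs : Straightening Θ q χ k₀ G Γ) : conjMap Γ 0 = q := by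
  rw [conjMap, conjCS_zero, hs.inv_zero, conjCS_conjCS]

lemma Straightening.eventually_differentiableAt_conjMap_map (hs : Straightening Θ q χ k₀ G Γ) :
    ∀ᶠ t in 𝓝 q, DifferentiableAt ℂ (conjMap G) t :=
  eventually_differentiableAt_conjMap hs.eventually_differentiableAt

lemma Straightening.eventually_differentiableAt_conjMap_inv (hs : Straightening Θ q χ k₀ G Γ) :
    ∀ᶠ t in 𝓝 (0 : CS m), DifferentiableAt ℂ (conjMap Γ) t :=
  eventually_differentiableAt_conjMap (by simpa using hs.eventually_differentiableAt_inv)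

lemma Straightening.eventually_conjMap_inv_map (hs : Straightening Θ q χ k₀ G Γ) :
    ∀ᶠ t in 𝓝 q, conjMap Γ (conjMap G t) = t :=
  eventually_conjMap_comp_conjMap hs.eventually_inv_map

lemma Straightening.eventually_conjMap_map_inv (hs : Straightening Θ q χ k₀ G Γ) :
    ∀ᶠ t in 𝓝 (0 : CS m), conjMap G (conjMap Γ t) = t :=
  eventually_conjMap_comp_conjMap (by simpa using hs.eventually_map_inv)

lemma Straightening.tendsto_conjMap_map (hs : Straightening Θ q χ k₀ G Γ) :
    Tendsto (conjMap G) (𝓝 q) (𝓝 0) := by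
  simpa only [hs.conjMap_map_base] using
    hs.eventually_differentiableAt_conjMap_map.self_of_nhds.continuousAt.tendsto

lemma Straightening.tendsto_conjMap_inv (hs : Straightening Θ q χ k₀ G Γ) :
    Tendsto (conjMap Γ) (𝓝 0) (𝓝 q) := by
  simpa only [hs.conjMap_inv_zero] using
    hs.eventually_differentiableAt_conjMap_inv.self_of_nhds.continuousAt.tendsto

lemma Straightening.tendsto_prodMap_inv (hs : Straightening Θ q χ k₀ G Γ) :
    Tendsto (Prod.map (conjMap Γ) Γ) (𝓝 0) (𝓝 (q, conjCS q)) :=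
  hs.tendsto_conjMap_inv.prodMap_nhds hs.tendsto_inv

/-- The image of the diagonal `τ = t̄` is the hypersurface. -/
lemma DefData.IsDefiningSeriesOf.conjMap_mem_iff {M : Set (CS m)} {d : DefData m}
    (hd : d.IsDefiningSeriesOf M) {t : CS m} (ht : conjMap Γ t ∈ ball 0 d.r) :
    conjMap Γ t ∈ M ↔ segreDefect d.Θ Γ (t, conjCS t) = 0 := by
  rw [hd.2.2.2.2.2 _ ht, segreDefect, apply_conjCS Γ, thetaBarFun_eq_conj, conjCS_conjCS,
    sub_eq_zero, ← (starRingEnd ℂ).injective.eq_iff, Complex.conj_conj]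
  rfl

lemma tendsto_conj_swap :
    Tendsto (fun p : CS m × CS m => (conjCS p.2, conjCS p.1)) (𝓝 0) (𝓝 0) :=
  Continuous.tendsto' (by fun_prop) _ _ (by simp)

lemma Straightening.eventually_segreDefect_conj_swap (hs : Straightening Θ q χ k₀ G Γ)
    (h : RealSeriesAt Θ R C q) : ∀ᶠ p : CS m × CS m in 𝓝 0,
      (segreDefect Θ Γ p = 0 ↔ segreDefect Θ Γ (conjCS p.2, conjCS p.1) = 0) := by
  filter_upwards [hs.tendsto_prodMap_inv.eventually h.eventually_iff] with p hp
  simp only [segreDefect, sub_eq_zero, conjMap_conjCS, apply_conjCS Γ p.1]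
  rw [thetaBarFun_eq_conj (conjCS (Γ p.2)).1, conjCS_conjCS]
  refine hp.symm.trans ((starRingEnd ℂ).injective.eq_iff.symm.trans ?_)
  rw [conjCS, conjW_conjW]
  rfl

lemma Straightening.eventually_hasFDerivAt_segreDefect (hs : Straightening Θ q χ k₀ G Γ)
    (h : RealSeriesAt Θ R C q) : ∀ᶠ p : CS m × CS m in 𝓝 0, HasFDerivAt (segreDefect Θ Γ)
      ((ContinuousLinearMap.snd ℂ (Fin m → ℂ) ℂ ∘L fderiv ℂ (conjMap Γ) p.1 ∘L .fst ℂ _ _)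
        - fderiv ℂ (thetaBarFun Θ) ((conjMap Γ p.1).1, Γ p.2) ∘L
          ((ContinuousLinearMap.fst ℂ (Fin m → ℂ) ℂ ∘L fderiv ℂ (conjMap Γ) p.1 ∘L .fst ℂ _ _).prod
            (fderiv ℂ Γ p.2 ∘L .snd ℂ _ _))) p := by
  have hfst : Tendsto Prod.fst (𝓝 (0 : CS m × CS m)) (𝓝 0) := continuous_fst.tendsto 0
  have hsnd : Tendsto Prod.snd (𝓝 (0 : CS m × CS m)) (𝓝 0) := continuous_snd.tendsto 0
  filter_upwards [hfst.eventually hs.eventually_differentiableAt_conjMap_inv,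
    hsnd.eventually hs.eventually_differentiableAt_inv,
    (hs.tendsto_conjMap_inv.comp hfst).norm.eventually_lt_const h.norm_lt,
    (hs.tendsto_inv.comp hsnd).eventually h.eventually_norm_lt] with p hconj hinv hnorm hnorm'
  have hfst' := hconj.hasFDerivAt.comp p hasFDerivAt_fst
  have hθ : DifferentiableAt ℂ (thetaBarFun Θ) ((conjMap Γ p.1).1, Γ p.2) :=
    h.differentiableOn_thetaBarFun.differentiableAt (isOpen_ball.mem_nhds
      (prodMk_mem_ball_zero_iff.2 ⟨(norm_fst_le _).trans_lt hnorm, hnorm'⟩))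
  exact hfst'.snd.sub (HasFDerivAt.comp p (f := fun p : CS m × CS m => ((conjMap Γ p.1).1, Γ p.2))
    hθ.hasFDerivAt (hfst'.fst.prodMk (hinv.hasFDerivAt.comp p hasFDerivAt_snd)))

lemma Straightening.segreDefect_zero (hs : Straightening Θ q χ k₀ G Γ)
    (h : RealSeriesAt Θ R C q) : segreDefect Θ Γ 0 = 0 := by
  simp only [segreDefect, Prod.fst_zero, Prod.snd_zero, hs.conjMap_inv_zero, hs.inv_zero,
    h.thetaBarFun_eq, sub_self]

/-- The last component of `G` is the jet of order `0`. -/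
lemma Straightening.eventually_segreDefect_zero_eq (hs : Straightening Θ q χ k₀ G Γ) :
    ∀ᶠ y in 𝓝 (0 : CS m), segreDefect Θ Γ (0, y) = -y.2 := by
  filter_upwards [hs.eventually_map_inv] with y hy
  have hsnd := hs.map_snd (Γ y)
  rw [hy] at hsnd
  rw [segreDefect, hs.conjMap_inv_zero, hsnd, neg_sub]
  rfl

lemma InvariantStraightening.eventually_segreDefect_truncCS_snd
    (hs : InvariantStraightening Θ q χ k₀ G Γ) : ∀ᶠ p : CS m × CS m in 𝓝 0,
      segreDefect Θ Γ p = segreDefect Θ Γ (p.1, truncCS m χ p.2) := by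
  have htendsto : Tendsto (fun p : CS m × CS m => ((conjMap Γ p.1).1, p.2)) (𝓝 0) (𝓝 (q.1, 0)) :=
    ((continuous_fst.tendsto q).comp (hs.tendsto_conjMap_inv.comp
      (continuous_fst.tendsto (0 : CS m × CS m)))).prodMk_nhds (continuous_snd.tendsto _)
  filter_upwards [htendsto.eventually hs.eventually_thetaBarFun_eq] with p hp
  rw [segreDefect, hp, segreDefect]

lemma InvariantStraightening.eventually_segreDefect_truncCS_fst
    (hs : InvariantStraightening Θ q χ k₀ G Γ) (h : RealSeriesAt Θ R C q) :
    ∀ᶠ p : CS m × CS m in 𝓝 0,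
      (segreDefect Θ Γ p = 0 ↔ segreDefect Θ Γ (truncCS m χ p.1, p.2) = 0) := by
  have hswap := hs.eventually_segreDefect_conj_swap h
  have htrunc : Tendsto (fun p : CS m × CS m => (truncCS m χ p.1, p.2)) (𝓝 0) (𝓝 0) :=
    Continuous.tendsto' (by fun_prop) _ _ (by simp)
  filter_upwards [hswap, tendsto_conj_swap.eventually hs.eventually_segreDefect_truncCS_snd,
    htrunc.eventually hswap] with p hp hsnd hp'
  rw [hp, hsnd, truncCS_conjCS, ← hp']

lemma InvariantStraightening.eventually_segreDefect_truncCS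
    (hs : InvariantStraightening Θ q χ k₀ G Γ) (h : RealSeriesAt Θ R C q) :
    ∀ᶠ p : CS m × CS m in 𝓝 0,
      (segreDefect Θ Γ p = 0 ↔ segreDefect Θ Γ (truncCS m χ p.1, truncCS m χ p.2) = 0) := by
  have htrunc : Tendsto (fun p : CS m × CS m => (p.1, truncCS m χ p.2)) (𝓝 0) (𝓝 0) :=
    Continuous.tendsto' (by fun_prop) _ _ (by simp)
  filter_upwards [hs.eventually_segreDefect_truncCS_snd,
    htrunc.eventually (hs.eventually_segreDefect_truncCS_fst h)] with p hsnd hfst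
  rw [hsnd, hfst]

end SegreDefect

section Solving

lemma exists_implicitFunction {E : Type*} [NormedAddCommGroup E] [NormedSpace ℂ E]
    [FiniteDimensional ℂ E] {f : E × ℂ → ℂ} (hf : ∀ᶠ y in 𝓝 0, DifferentiableAt ℂ f y)
    (h0 : f 0 = 0) {c : ℂ} (hc : c ≠ 0) (hderiv : HasDerivAt (fun z => f (0, z)) c 0) :
    ∃ T : E → ℂ, T 0 = 0 ∧ (∀ᶠ x in 𝓝 0, DifferentiableAt ℂ T x) ∧
      ∀ᶠ y in 𝓝 0, (f y = 0 ↔ T y.1 = y.2) := by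
  have hcont : ContDiffAt ℂ 1 f 0 := contDiffAt_nat_of_eventually_differentiableAt hf 1
  have hpartial : fderiv ℂ f 0 ∘L .inr ℂ E ℂ = ContinuousLinearMap.toSpanSingleton ℂ c :=
    (HasFDerivAt.comp (0 : ℂ) (f := fun z : ℂ => ((0 : E), z)) hf.self_of_nhds.hasFDerivAt
      (hasFDerivAt_prodMk_right 0 0)).unique hderiv.hasFDerivAt
  have hinv : (fderiv ℂ f 0 ∘L .inr ℂ E ℂ).IsInvertible := by
    rw [hpartial]
    exact ⟨ContinuousLinearEquiv.unitsEquivAut ℂ (Units.mk0 c hc), by ext; simp⟩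
  refine ⟨hcont.implicitFunction (by simp) hinv, hcont.implicitFunction_apply_self (by simp) hinv,
    ?_, ?_⟩
  · exact ((hcont.contDiffAt_implicitFunction (by simp) hinv).eventually (by simp)).mono
      fun x hx => hx.differentiableAt (by simp)
  · simpa only [h0] using hcont.eventually_apply_eq_iff_implicitFunction (by simp) hinv

variable {m χ k₀ : ℕ} {Θ : (Fin m → ℕ) → CS m → ℂ} {R C : ℝ} {q : CS m} {G Γ : CS m → CS m}

/-- A holomorphic function `T(ζ, t)`, independent of the coordinates of `ζ` and `t` of index `χ` and
higher, such that `ξ = T(ζ, t)` with `τ = (ζ, ξ)` is an equation of the complexified hypersurface in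
the coordinates given by `Γ`. -/
structure StraightenedEquation (Θ : (Fin m → ℕ) → CS m → ℂ) (χ : ℕ) (Γ : CS m → CS m)
    (T : (Fin m → ℂ) × CS m → ℂ) : Prop where
  map_zero : T 0 = 0
  eventually_differentiableAt : ∀ᶠ p in 𝓝 0, DifferentiableAt ℂ T p
  eventually_iff : ∀ᶠ p : CS m × CS m in 𝓝 0, (segreDefect Θ Γ p = 0 ↔ T (p.2.1, p.1) = p.2.2)
  eventually_trunc : ∀ᶠ p in 𝓝 0, T (truncW m χ p.1, truncCS m χ p.2) = T p

lemma InvariantStraightening.exists_straightenedEquation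
    (hs : InvariantStraightening Θ q χ k₀ G Γ) (h : RealSeriesAt Θ R C q) :
    ∃ T, StraightenedEquation Θ χ Γ T := by
  obtain ⟨T, hT0, hTd, hTiff⟩ := exists_implicitFunction
    (f := fun y : ((Fin m → ℂ) × CS m) × ℂ => segreDefect Θ Γ (y.1.2, (y.1.1, y.2))) (c := -1)
    (by
      have htendsto : Tendsto (fun y : ((Fin m → ℂ) × CS m) × ℂ => (y.1.2, (y.1.1, y.2)))
        (𝓝 0) (𝓝 (0 : CS m × CS m)) := Continuous.tendsto' (by fun_prop) _ _ rfl
      filter_upwards [htendsto.eventually (hs.eventually_hasFDerivAt_segreDefect h)] with y hy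
      exact DifferentiableAt.comp y (g := segreDefect Θ Γ)
        (f := fun y : ((Fin m → ℂ) × CS m) × ℂ => (y.1.2, (y.1.1, y.2)))
        hy.differentiableAt (by fun_prop))
    (hs.segreDefect_zero h) (by simp)
    (by
      have htendsto : Tendsto (fun z : ℂ => ((0, z) : CS m)) (𝓝 0) (𝓝 0) :=
        Continuous.tendsto' (by fun_prop) _ _ rfl
      exact (hasDerivAt_neg 0).congr_of_eventuallyEq
        (htendsto.eventually hs.eventually_segreDefect_zero_eq))
  have hiff : ∀ᶠ p : CS m × CS m in 𝓝 0, (segreDefect Θ Γ p = 0 ↔ T (p.2.1, p.1) = p.2.2) := by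
    have htendsto : Tendsto (fun p : CS m × CS m => ((p.2.1, p.1), p.2.2)) (𝓝 0) (𝓝 0) :=
      Continuous.tendsto' (by fun_prop) _ _ rfl
    exact htendsto.eventually hTiff
  refine ⟨T, hT0, hTd, hiff, ?_⟩
  have hgraph : Tendsto (fun p : (Fin m → ℂ) × CS m => (p.2, (p.1, T p))) (𝓝 0) (𝓝 0) := by
    have hcont : ContinuousAt (fun p : (Fin m → ℂ) × CS m => (p.2, (p.1, T p))) 0 := by
      have := hTd.self_of_nhds.continuousAt
      fun_prop
    have hgraph0 := hcont.tendsto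
    rwa [hT0] at hgraph0
  have htrunc : Tendsto (fun p : CS m × CS m => (truncCS m χ p.1, truncCS m χ p.2)) (𝓝 0) (𝓝 0) :=
    Continuous.tendsto' (by fun_prop) _ _ (by simp)
  filter_upwards [hgraph.eventually hiff, hgraph.eventually (hs.eventually_segreDefect_truncCS h),
    (htrunc.comp hgraph).eventually hiff] with p hp hinv hp'
  exact hp'.1 (hinv.1 (hp.2 rfl))

end Solving

/-! ### Series in normal form -/

section NormalForm

variable {m χ : ℕ} {c : (Fin m → ℕ) → CS m → ℂ} {R C : ℝ}

/-- The series of `(ζ, t) ↦ Θ(truncW ζ, truncCS t)`, where `Θ` has coefficients `c`. -/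
def truncSeries (χ : ℕ) (c : (Fin m → ℕ) → CS m → ℂ) (β : Fin m → ℕ) (t : CS m) : ℂ :=
  open Classical in if ∃ i : Fin m, χ ≤ (i : ℕ) ∧ β i ≠ 0 then 0 else c β (truncCS m χ t)

lemma mpow_truncW_of_exists (ζ : Fin m → ℂ) {β : Fin m → ℕ}
    (hβ : ∃ i : Fin m, χ ≤ (i : ℕ) ∧ β i ≠ 0) : mpow (truncW m χ ζ) β = 0 := by
  obtain ⟨i, hi, hβi⟩ := hβ
  refine Finset.prod_eq_zero (Finset.mem_univ i) ?_
  rw [truncW_apply, if_neg (not_lt.2 hi), zero_pow hβi]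

lemma mpow_truncW_of_not_exists (ζ : Fin m → ℂ) {β : Fin m → ℕ}
    (hβ : ¬ ∃ i : Fin m, χ ≤ (i : ℕ) ∧ β i ≠ 0) : mpow (truncW m χ ζ) β = mpow ζ β := by
  push Not at hβ
  refine Finset.prod_congr rfl fun i _ => ?_
  rw [truncW_apply]
  split_ifs with hi
  · rfl
  · rw [hβ i (not_lt.1 hi), pow_zero, pow_zero]

lemma thetaSum_truncSeries (ζ : Fin m → ℂ) (t : CS m) :
    ThetaSum (truncSeries χ c) ζ t = ThetaSum c (truncW m χ ζ) (truncCS m χ t) := by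
  refine tsum_congr fun β => ?_
  rw [truncSeries]
  split_ifs with hβ
  · rw [mpow_truncW_of_exists ζ hβ, mul_zero, zero_mul]
  · rw [mpow_truncW_of_not_exists ζ hβ]

lemma normallyConvergent_truncSeries (h : NormallyConvergent c R C) :
    NormallyConvergent (truncSeries χ c) R C := by
  refine ⟨h.pos, fun β => ?_, fun β t ht => ?_⟩
  · by_cases hβ : ∃ i : Fin m, χ ≤ (i : ℕ) ∧ β i ≠ 0
    · exact (differentiableOn_const 0).congr fun t _ => if_pos hβ
    · exact ((h.differentiableOn β).comp (truncCS m χ).differentiableOn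
        fun t => truncCS_mem_ball).congr fun t _ => if_neg hβ
  · have hbound := h.norm_le β _ (truncCS_mem_ball (a := χ) ht)
    rw [truncSeries]
    split_ifs
    · exact norm_zero.trans_le ((norm_nonneg _).trans hbound)
    · exact hbound

lemma normalFormSeries_truncSeries (χ : ℕ) (c : (Fin m → ℕ) → CS m → ℂ) :
    NormalFormSeries χ (truncSeries χ c) := by
  refine ⟨fun β hβ => funext fun t => if_pos hβ, fun β s t hfst hsnd => ?_⟩
  have htrunc : truncCS m χ s = truncCS m χ t := by
    refine Prod.ext (funext fun i => ?_) hsnd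
    simp only [truncCS_apply, truncW_apply]
    split_ifs with hi
    · exact hfst i hi
    · rfl
  simp only [truncSeries, htrunc]

lemma thetaSum_zero (Θ : (Fin m → ℕ) → CS m → ℂ) (t : CS m) : ThetaSum Θ 0 t = Θ 0 t := by
  rw [ThetaSum, tsum_eq_single 0 fun β hβ => ?_]
  · simp [mpow]
  · obtain ⟨i, hi⟩ := Function.ne_iff.1 hβ
    have hpow : mpow (0 : Fin m → ℂ) β = 0 := Finset.prod_eq_zero (Finset.mem_univ i) (zero_pow hi)
    rw [hpow, zero_mul]

lemma exists_normallyConvergent_thetaFun_eqOn {T : (Fin m → ℂ) × CS m → ℂ} {R' : ℝ} (hR' : 0 < R')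
    (hRR : R' < R) (hT : DifferentiableOn ℂ T (ball 0 R)) (hC : ∀ p ∈ ball 0 R, ‖T p‖ ≤ C) :
    ∃ c, NormallyConvergent c R' C ∧ EqOn (thetaFun c) T (ball 0 R') := by
  have hprod : ball (0 : Fin m → ℂ) R ×ˢ ball (0 : CS m) R = ball 0 R := ball_prod_same _ _ _
  rw [← hprod] at hT hC
  obtain ⟨c, hcd, hcC, hcs⟩ := exists_hasSum_mpow_mul isOpen_ball hR' hRR hT hC
  have hball : ball (0 : CS m) R' ⊆ ball 0 R := ball_subset_ball hRR.le
  refine ⟨c, ⟨hR', fun β => (hcd β).mono hball, fun β t ht => hcC β t (hball ht)⟩, ?_⟩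
  rintro ⟨ζ, t⟩ hp
  obtain ⟨hζ, ht⟩ := prodMk_mem_ball_zero_iff.1 hp
  exact (hcs ζ (mem_ball_zero_iff.2 hζ) t (hball (mem_ball_zero_iff.2 ht))).tsum_eq

lemma StraightenedEquation.exists_normalFormSeries {Θ : (Fin m → ℕ) → CS m → ℂ}
    {Γ : CS m → CS m} {T : (Fin m → ℂ) × CS m → ℂ} (hT : StraightenedEquation Θ χ Γ T) {ρ : ℝ}
    (hρ : 0 < ρ) :
    ∃ Θ' R, R ≤ ρ ∧ NormallyConvergent Θ' R 1 ∧ NormalFormSeries χ Θ' ∧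
      EqOn (thetaFun Θ') T (ball 0 R) := by
  have hbound : ∀ᶠ p in 𝓝 0, ‖T p‖ < 1 :=
    hT.eventually_differentiableAt.self_of_nhds.continuousAt.norm.eventually_lt_const
      (by simp [hT.map_zero])
  obtain ⟨ρ', hρ', hball⟩ := eventually_nhds_iff_ball.1
    (hT.eventually_differentiableAt.and (hT.eventually_trunc.and hbound))
  obtain ⟨R, hR, hRρ⟩ := exists_between (lt_min hρ hρ')
  obtain ⟨c, hc, hcT⟩ := exists_normallyConvergent_thetaFun_eqOn hR (hRρ.trans_le (min_le_right ..))
    (fun p hp => (hball p hp).1.differentiableWithinAt) fun p hp => (hball p hp).2.2.le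
  refine ⟨truncSeries χ c, R, (hRρ.trans_le (min_le_left ..)).le, normallyConvergent_truncSeries hc,
    normalFormSeries_truncSeries χ c, ?_⟩
  rintro ⟨ζ, t⟩ hp
  obtain ⟨hζ, ht⟩ := prodMk_mem_ball_zero_iff.1 hp
  have hp' : (truncW m χ ζ, truncCS m χ t) ∈ ball (0 : (Fin m → ℂ) × CS m) R :=
    prodMk_mem_ball_zero_iff.2
      ⟨(norm_truncW_le χ ζ).trans_lt hζ, (norm_truncCS_le χ t).trans_lt ht⟩
  calc thetaFun (truncSeries χ c) (ζ, t)
      = thetaFun c (truncW m χ ζ, truncCS m χ t) := thetaSum_truncSeries ζ t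
    _ = T (truncW m χ ζ, truncCS m χ t) := hcT hp'
    _ = T (ζ, t) := (hball _ (ball_subset_ball (hRρ.trans_le (min_le_right ..)).le hp)).2.1

end NormalForm

/-! ### The reduced series -/

section Reduction

variable {m a : ℕ}

/-- The projection `ℂᵐ → ℂᵃ` onto the first `a` coordinates. -/
def restrictW (h : a ≤ m) : (Fin m → ℂ) →L[ℂ] (Fin a → ℂ) :=
  ContinuousLinearMap.pi fun i => ContinuousLinearMap.proj (Fin.castLE h i)

/-- The projection `ℂᵐ⁺¹ → ℂᵃ⁺¹` forgetting the `w`-coordinates of index at least `a`, a left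
inverse of `embedCS m a`. -/
def restrictCS (h : a ≤ m) : CS m →L[ℂ] CS a :=
  (restrictW h).prodMap (ContinuousLinearMap.id ℂ ℂ)

@[simp] lemma restrictW_apply (h : a ≤ m) (w : Fin m → ℂ) (i : Fin a) :
    restrictW h w i = w (Fin.castLE h i) := rfl

lemma restrictCS_apply (h : a ≤ m) (t : CS m) : restrictCS h t = (restrictW h t.1, t.2) := rfl

@[simp] lemma restrictCS_embedCS (h : a ≤ m) (t : CS a) : restrictCS h (embedCS m a t) = t := by
  refine Prod.ext (funext fun i => ?_) rfl
  simp [restrictCS_apply, embedCS]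

@[simp] lemma restrictCS_truncCS (h : a ≤ m) (t : CS m) :
    restrictCS h (truncCS m a t) = restrictCS h t := by
  refine Prod.ext (funext fun i => ?_) rfl
  simp [restrictCS_apply, truncCS_apply, truncW_apply]

lemma restrictCS_conjCS (h : a ≤ m) (t : CS m) :
    restrictCS h (conjCS t) = conjCS (restrictCS h t) := rfl

lemma differentiable_embedCS : Differentiable ℂ (embedCS m a) := by
  refine Differentiable.prodMk (differentiable_pi.2 fun i => ?_) differentiable_snd
  split_ifs <;> fun_prop

lemma norm_embedCS_le (t : CS a) : ‖embedCS m a t‖ ≤ ‖t‖ := by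
  refine max_le ((pi_norm_le_iff_of_nonneg (norm_nonneg _)).2 fun i => ?_) (norm_snd_le t)
  simp only [embedCS]
  split_ifs
  · exact (norm_le_pi_norm t.1 _).trans (norm_fst_le t)
  · simp

lemma embedCS_mem_ball {ρ : ℝ} {t : CS a} (ht : t ∈ ball (0 : CS a) ρ) :
    embedCS m a t ∈ ball (0 : CS m) ρ :=
  mem_ball_zero_iff.2 ((norm_embedCS_le t).trans_lt (mem_ball_zero_iff.1 ht))

@[simp] lemma extendIdx_castLE (h : a ≤ m) (β : Fin a → ℕ) (i : Fin a) :
    extendIdx m a β (Fin.castLE h i) = β i := by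
  simp [extendIdx]

lemma extendIdx_of_le {β : Fin a → ℕ} {i : Fin m} (hi : a ≤ (i : ℕ)) : extendIdx m a β i = 0 :=
  dif_neg (not_lt.2 hi)

lemma extendIdx_injective (h : a ≤ m) : Function.Injective (extendIdx m a) := fun β γ hβγ =>
  funext fun i => by rw [← extendIdx_castLE h β i, hβγ, extendIdx_castLE h γ i]

@[to_additive]
lemma prod_castLE {A : Type*} [CommMonoid A] (h : a ≤ m) (f : Fin m → A)
    (hf : ∀ i : Fin m, a ≤ (i : ℕ) → f i = 1) : ∏ i : Fin a, f (Fin.castLE h i) = ∏ i, f i := by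
  refine Fintype.prod_of_injective _ (Fin.castLE_injective h) _ f (fun i hi => hf i ?_) fun _ => rfl
  exact not_lt.1 fun hlt => hi ⟨⟨i, hlt⟩, rfl⟩

lemma mpow_extendIdx (h : a ≤ m) (w : Fin m → ℂ) (β : Fin a → ℕ) :
    mpow w (extendIdx m a β) = mpow (restrictW h w) β := by
  rw [mpow, ← prod_castLE h _ fun i hi => by rw [extendIdx_of_le hi, pow_zero]]
  simp [mpow]

lemma mdeg_extendIdx (h : a ≤ m) (β : Fin a → ℕ) : mdeg (extendIdx m a β) = mdeg β := by
  rw [mdeg, ← sum_castLE h _ fun i hi => extendIdx_of_le hi]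
  simp [mdeg]

lemma mem_range_extendIdx (h : a ≤ m) {β : Fin m → ℕ}
    (hβ : ∀ i : Fin m, a ≤ (i : ℕ) → β i = 0) : β ∈ range (extendIdx m a) := by
  refine ⟨fun i => β (Fin.castLE h i), funext fun i => ?_⟩
  rw [extendIdx]
  split_ifs with hi
  · rfl
  · exact (hβ i (not_lt.1 hi)).symm

variable {Θ : (Fin m → ℕ) → CS m → ℂ} {R C : ℝ}

lemma thetaSum_reducedSeries (h : a ≤ m) (hΘ : NormalFormSeries a Θ) (ζ : Fin m → ℂ) (t : CS m) :
    ThetaSum (reducedSeries m a Θ) (restrictW h ζ) (restrictCS h t) = ThetaSum Θ ζ t := by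
  rw [ThetaSum, ThetaSum, ← (extendIdx_injective h).tsum_eq fun β hβ => ?_]
  · refine tsum_congr fun β => ?_
    rw [mpow_extendIdx h, reducedSeries]
    refine congrArg _ (hΘ.2 _ _ _ (fun i hi => ?_) rfl)
    simp only [embedCS, hi, dif_pos]
    rfl
  · refine mem_range_extendIdx h fun i hi => not_ne_iff.1 fun hne => hβ ?_
    simp [hΘ.1 β ⟨i, hi, hne⟩]

lemma thetaBarFun_reducedSeries (h : a ≤ m) (hΘ : NormalFormSeries a Θ) (w : Fin m → ℂ)
    (τ : CS m) :
    thetaBarFun (reducedSeries m a Θ) (restrictW h w, restrictCS h τ) = thetaBarFun Θ (w, τ) := by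
  rw [thetaBarFun_eq_conj, thetaBarFun_eq_conj, ← restrictCS_conjCS]
  exact congrArg _ (thetaSum_reducedSeries h hΘ (conjW w) (conjCS τ))

lemma normallyConvergent_reducedSeries (h : a ≤ m) (hΘ : NormallyConvergent Θ R C) :
    NormallyConvergent (reducedSeries m a Θ) R C := by
  refine ⟨hΘ.pos, fun β => ?_, fun β t ht => ?_⟩
  · exact (hΘ.differentiableOn _).comp differentiable_embedCS.differentiableOn
      fun t => embedCS_mem_ball
  · rw [← mdeg_extendIdx h]
    exact hΘ.norm_le _ _ (embedCS_mem_ball ht)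

end Reduction

/-! ### Finite nondegeneracy -/

section JetDirections

variable {m : ℕ} {Θ : (Fin m → ℕ) → CS m → ℂ} {R C : ℝ}

/-- Differentiations in `w` and in `τ` commute. -/
lemma NormallyConvergent.fderiv_conjJet_apply (h : NormallyConvergent Θ R C) {w : Fin m → ℂ}
    (hw : ‖w‖ < R) {τ : CS m} (hτ : ‖τ‖ < R) (L : List (Fin m)) (v : CS m) :
    fderiv ℂ (conjJet Θ w L) τ v = iteratedDirDeriv (L.map fun i => (Pi.single i 1 : Fin m → ℂ))
      (fun w => fderiv ℂ (thetaBarFun Θ) (w, τ) (0, v)) w := by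
  have hmem : (w, τ) ∈ ball (0 : (Fin m → ℂ) × CS m) R := prodMk_mem_ball_zero_iff.2 ⟨hw, hτ⟩
  have hjet := (differentiableOn_iteratedDirDeriv isOpen_ball h.differentiableOn_thetaBarFun
    (L.map wDir)).differentiableAt (isOpen_ball.mem_nhds hmem)
  have hpartial : HasFDerivAt (conjJet Θ w L) _ τ :=
    HasFDerivAt.comp τ (f := fun τ : CS m => (w, τ)) hjet.hasFDerivAt (hasFDerivAt_prodMk_right w τ)
  have hdir : (fun w => fderiv ℂ (thetaBarFun Θ) (w, τ) (0, v))
      = fun w => iteratedDirDeriv [(0, v)] (thetaBarFun Θ) (w, τ) := rfl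
  rw [hpartial.fderiv, hdir, iteratedDirDeriv_slice isOpen_ball (differentiableOn_iteratedDirDeriv
    isOpen_ball h.differentiableOn_thetaBarFun _) _ τ w hmem, List.map_map]
  refine (iteratedDirDeriv_perm isOpen_ball h.differentiableOn_thetaBarFun
    (List.perm_append_singleton (0, v) (L.map wDir)).symm hmem).trans ?_
  rw [iteratedDirDeriv_append]
  rfl

lemma NormallyConvergent.fderiv_thetaBarFun_apply_eq_zero (h : NormallyConvergent Θ R C)
    {τ v : CS m} (hτ : ‖τ‖ < R) (hjet : ∀ L, fderiv ℂ (conjJet Θ 0 L) τ v = 0) :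
    EqOn (fun w => fderiv ℂ (thetaBarFun Θ) (w, τ) (0, v)) 0 (ball 0 R) := by
  refine eqOn_zero_of_iteratedDirDeriv_eq_zero_of_span top_le_span_range_single h.pos ?_ fun L => ?_
  · exact (differentiableOn_fderiv_apply isOpen_ball h.differentiableOn_thetaBarFun (0, v)).comp
      (by fun_prop) fun w hw => prodMk_mem_ball_zero_iff.2 ⟨mem_ball_zero_iff.1 hw, hτ⟩
  · rw [← h.fderiv_conjJet_apply (norm_zero.trans_lt h.pos) hτ, hjet]

lemma exists_jetKernel_eq_bot {w : Fin m → ℂ} {τ : CS m}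
    (hjet : ∀ v, (∀ L, fderiv ℂ (conjJet Θ w L) τ v = 0) → v = 0) :
    ∃ k, jetKernel Θ w k τ = ⊥ := by
  obtain ⟨k, hk⟩ := IsArtinian.monotone_stabilizes (R := ℂ) (M := CS m)
    ⟨fun k => OrderDual.toDual (jetKernel Θ w k τ), fun _ _ hkl => jetKernel_antitone hkl⟩
  refine ⟨k, (Submodule.eq_bot_iff _).2 fun v hv => hjet v fun L => ?_⟩
  have hstab : jetKernel Θ w k τ = jetKernel Θ w (max k L.length) τ := hk _ (le_max_left _ _)
  rw [hstab] at hv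
  exact mem_jetKernel.1 hv L (le_max_right _ _)

lemma NormallyConvergent.exists_injective_fderiv_segreJetMap (h : NormallyConvergent Θ R C)
    (h0 : Θ 0 0 = 0) (hjet : ∀ v, (∀ L, fderiv ℂ (conjJet Θ 0 L) 0 v = 0) → v = 0) :
    ∃ k, Function.Injective (fderiv ℂ (segreJetMap Θ k) (0, 0)) := by
  obtain ⟨k, hk⟩ := exists_jetKernel_eq_bot hjet
  have hθ : ThetaSum Θ 0 0 = 0 := (thetaSum_zero Θ 0).trans h0
  have hdom : InJetDomain Θ R ((0 : CS m), (0 : Fin m → ℂ)) :=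
    ⟨norm_zero.trans_lt h.pos, norm_zero.trans_lt h.pos, by simpa [hθ] using h.pos⟩
  refine ⟨k, (injective_iff_map_eq_zero _).2 fun v hv => ?_⟩
  obtain ⟨hfst, hker⟩ := (h.fderiv_segreJetMap_eq_zero_iff hdom k v).1 hv
  have hbot : jetKernel Θ 0 k (0, ThetaSum Θ 0 0) = ⊥ := hθ.symm ▸ hk
  exact Prod.ext hfst (congrArg Prod.fst ((Submodule.mem_bot ℂ).1 (hbot ▸ hker)))

end JetDirections

section TangentDirections

lemma fderiv_apply_inr_eq_zero_of_eventually_graph {W F : Type*} [NormedAddCommGroup W]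
    [NormedSpace ℂ W] [NormedAddCommGroup F] [NormedSpace ℂ F] {f : (W × ℂ) × F → ℂ}
    {S : W × F → ℂ} {p : (W × ℂ) × F} (hf : DifferentiableAt ℂ f p)
    (hS : DifferentiableAt ℂ S (p.1.1, p.2)) (hp : p.1.2 = S (p.1.1, p.2))
    (hgraph : ∀ᶠ p' in 𝓝 p, p'.1.2 = S (p'.1.1, p'.2) → f p' = 0) {u : F}
    (hu : fderiv ℂ S (p.1.1, p.2) (0, u) = 0) : fderiv ℂ f p (0, u) = 0 := by
  set c : F → (W × ℂ) × F := fun y => ((p.1.1, S (p.1.1, y)), y)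
  have hcp : c p.2 = p := Prod.ext (Prod.ext rfl hp.symm) rfl
  have hc : HasFDerivAt c _ p.2 := ((hasFDerivAt_const p.1.1 p.2).prodMk
    (HasFDerivAt.comp p.2 (f := fun y : F => (p.1.1, y)) hS.hasFDerivAt
      (hasFDerivAt_prodMk_right p.1.1 p.2))).prodMk (hasFDerivAt_id p.2)
  have hzero : f ∘ c =ᶠ[𝓝 p.2] fun _ => 0 := by
    have htendsto := hc.continuousAt.tendsto
    rw [hcp] at htendsto
    exact (htendsto.eventually hgraph).mono fun y hy => hy rfl
  have hfc := (hcp ▸ hf.hasFDerivAt : HasFDerivAt f (fderiv ℂ f p) (c p.2)).comp p.2 hc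
  have hunique := hfc.unique ((hasFDerivAt_const (0 : ℂ) p.2).congr_of_eventuallyEq hzero)
  have happly : fderiv ℂ f p ((0, fderiv ℂ S (p.1.1, p.2) (0, u)), u) = 0 :=
    DFunLike.congr_fun hunique u
  rwa [hu] at happly

variable {m χ k₀ : ℕ} {Θ Θ' : (Fin m → ℕ) → CS m → ℂ} {R C R' C' : ℝ} {q : CS m}
  {G Γ : CS m → CS m} {T : (Fin m → ℂ) × CS m → ℂ}

/-- By reality the equation can be solved for `z` as well as for its conjugate variable. -/
lemma StraightenedEquation.eventually_segreDefect_eq_zero_iff (hT : StraightenedEquation Θ χ Γ T)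
    (hs : Straightening Θ q χ k₀ G Γ) (h : RealSeriesAt Θ R C q)
    (hΘ' : thetaFun Θ' =ᶠ[𝓝 0] T) : ∀ᶠ p : CS m × CS m in 𝓝 0,
      (segreDefect Θ Γ p = 0 ↔ p.1.2 = thetaBarFun Θ' (p.1.1, p.2)) := by
  have htendsto : Tendsto (fun p : CS m × CS m => (conjW p.1.1, conjCS p.2)) (𝓝 0) (𝓝 0) :=
    Continuous.tendsto' (by fun_prop) _ _ (by simp [conjW_eq_star])
  filter_upwards [hs.eventually_segreDefect_conj_swap h,
    tendsto_conj_swap.eventually hT.eventually_iff, htendsto.eventually hΘ'] with p hswap hiff hp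
  rw [hswap, hiff, thetaBarFun_eq_conj, hp]
  exact eq_star_iff_eq_star

/-- The point `0` in the second variable stands for the base point `q`. -/
lemma Straightening.eventually_fderiv_thetaBarFun_apply_eq_zero
    (hs : Straightening Θ q χ k₀ G Γ) (h : RealSeriesAt Θ R C q)
    (hΘ' : NormallyConvergent Θ' R' C') (hgraph : ∀ᶠ p : CS m × CS m in 𝓝 0,
      (segreDefect Θ Γ p = 0 ↔ p.1.2 = thetaBarFun Θ' (p.1.1, p.2)))
    {u : CS m} (hu : ∀ᶠ w in 𝓝 0, fderiv ℂ (thetaBarFun Θ') (w, 0) (0, u) = 0) :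
    ∀ᶠ t in 𝓝 (0 : CS m), segreDefect Θ Γ (t, 0) = 0 →
      fderiv ℂ (thetaBarFun Θ) ((conjMap Γ t).1, conjCS q) (0, fderiv ℂ Γ 0 u) = 0 := by
  have hpair : Tendsto (fun t : CS m => (t, (0 : CS m))) (𝓝 0) (𝓝 0) :=
    Continuous.tendsto' (by fun_prop) _ _ rfl
  have hfst : Tendsto (fun t : CS m => t.1) (𝓝 0) (𝓝 0) := continuous_fst.tendsto 0
  filter_upwards [hpair.eventually (hs.eventually_hasFDerivAt_segreDefect h),
    hpair.eventually hgraph.eventually_nhds, hfst.eventually hu,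
    ball_mem_nhds 0 hΘ'.pos] with t hderiv ht hut htR ht0
  have hS : DifferentiableAt ℂ (thetaBarFun Θ') (t.1, 0) :=
    hΘ'.differentiableOn_thetaBarFun.differentiableAt (isOpen_ball.mem_nhds
      (prodMk_mem_ball_zero_iff.2 ⟨(norm_fst_le t).trans_lt (mem_ball_zero_iff.1 htR),
        norm_zero.trans_lt hΘ'.pos⟩))
  have hzero := fderiv_apply_inr_eq_zero_of_eventually_graph hderiv.differentiableAt hS
    (ht.self_of_nhds.1 ht0) (ht.mono fun _ hp => hp.2) hut
  rw [hderiv.fderiv] at hzero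
  simpa [hs.inv_zero] using hzero

lemma Straightening.eventually_segreVariety_base (hs : Straightening Θ q χ k₀ G Γ)
    (h : RealSeriesAt Θ R C q) {P : CS m → Prop}
    (hP : ∀ᶠ t in 𝓝 0, segreDefect Θ Γ (t, 0) = 0 → P (conjMap Γ t)) :
    ∀ᶠ w in 𝓝 q.1, P (w, thetaBarFun Θ (w, conjCS q)) := by
  have hθ : ContinuousAt (thetaBarFun Θ) (q.1, conjCS q) :=
    (h.differentiableOn_thetaBarFun.differentiableAt (isOpen_ball.mem_nhds
      (prodMk_mem_ball_zero_iff.2 ⟨(norm_fst_le q).trans_lt h.norm_lt, h.norm_conjCS_lt⟩)))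
      |>.continuousAt
  have htendsto : Tendsto (fun w => (w, thetaBarFun Θ (w, conjCS q))) (𝓝 q.1) (𝓝 q) := by
    have hpt := (tendsto_id (x := 𝓝 q.1)).prodMk_nhds (hθ.tendsto.comp
      (Continuous.tendsto (f := fun w : Fin m → ℂ => (w, conjCS q)) (by fun_prop) q.1))
    rwa [h.thetaBarFun_eq] at hpt
  filter_upwards [htendsto.eventually hs.eventually_conjMap_inv_map,
    (hs.tendsto_conjMap_map.comp htendsto).eventually hP] with w hinv hw
  simp only [Function.comp_apply, segreDefect, hinv, hs.inv_zero, sub_self] at hw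
  exact hw trivial

lemma Straightening.truncCS_eq_zero_of_eventually_fderiv_eq_zero
    (hs : Straightening Θ q χ k₀ G Γ) (h : RealSeriesAt Θ R C q)
    (hΘ' : NormallyConvergent Θ' R' C') (hgraph : ∀ᶠ p : CS m × CS m in 𝓝 0,
      (segreDefect Θ Γ p = 0 ↔ p.1.2 = thetaBarFun Θ' (p.1.1, p.2)))
    {u : CS m} (hu : ∀ᶠ w in 𝓝 0, fderiv ℂ (thetaBarFun Θ') (w, 0) (0, u) = 0) :
    truncCS m χ u = 0 := by
  have hvanish : ∀ᶠ w in 𝓝 q.1,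
      fderiv ℂ (thetaBarFun Θ) (w, conjCS q) (0, fderiv ℂ Γ 0 u) = 0 :=
    hs.eventually_segreVariety_base h
      (P := fun t => fderiv ℂ (thetaBarFun Θ) (t.1, conjCS q) (0, fderiv ℂ Γ 0 u) = 0)
      (hs.eventually_fderiv_thetaBarFun_apply_eq_zero h hΘ' hgraph hu)
  have hmem : fderiv ℂ Γ 0 u ∈ jetKernel Θ q.1 k₀ (conjCS q) := mem_jetKernel.2 fun L _ => by
    rw [h.fderiv_conjJet_apply ((norm_fst_le q).trans_lt h.norm_lt) h.norm_conjCS_lt]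
    exact iteratedDirDeriv_eq_zero_of_eventually hvanish _
  have hG := hs.eventually_differentiableAt.self_of_nhds
  have hinv : fderiv ℂ G (conjCS q) (fderiv ℂ Γ 0 u) = u := by
    rw [← hs.inv_zero]
    exact fderiv_apply_fderiv_of_eventually_leftInverse
      hs.eventually_differentiableAt_inv.self_of_nhds (hs.inv_zero ▸ hG) hs.eventually_map_inv u
  rw [← hinv]
  exact hs.truncCS_fderiv_apply_eq_zero h h.norm_conjCS_lt hG hmem

end TangentDirections

section ReducedNondegeneracy

variable {m a : ℕ} {Θ : (Fin m → ℕ) → CS m → ℂ} {R C : ℝ}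

lemma NormallyConvergent.fderiv_thetaBarFun_embedCS (h : NormallyConvergent Θ R C) (ha : a ≤ m)
    (hΘ : NormalFormSeries a Θ) {w : Fin m → ℂ} (hw : ‖restrictW ha w‖ < R) (u : CS a) :
    fderiv ℂ (thetaBarFun Θ) (w, 0) (0, embedCS m a u)
      = fderiv ℂ (thetaBarFun (reducedSeries m a Θ)) (restrictW ha w, 0) (0, u) := by
  have hfactor : thetaBarFun Θ
      = thetaBarFun (reducedSeries m a Θ) ∘ (restrictW ha).prodMap (restrictCS ha) :=
    funext fun p => (thetaBarFun_reducedSeries ha hΘ p.1 p.2).symm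
  have hred := (normallyConvergent_reducedSeries ha h).differentiableOn_thetaBarFun.differentiableAt
    (isOpen_ball.mem_nhds (prodMk_mem_ball_zero_iff.2 ⟨hw, norm_zero.trans_lt h.pos⟩))
  have hpt : (restrictW ha).prodMap (restrictCS ha) (w, 0) = (restrictW ha w, 0) := by simp
  rw [hfactor, fderiv_comp _ (hpt ▸ hred) (ContinuousLinearMap.differentiableAt _), hpt,
    ContinuousLinearMap.fderiv]
  simp

lemma NormallyConvergent.exists_injective_fderiv_segreJetMap_reducedSeries
    (h : NormallyConvergent Θ R C) (ha : a ≤ m) (hΘ : NormalFormSeries a Θ) (h0 : Θ 0 0 = 0)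
    (hnondeg : ∀ u, (∀ᶠ w in 𝓝 0, fderiv ℂ (thetaBarFun Θ) (w, 0) (0, u) = 0) →
      truncCS m a u = 0) :
    ∃ k, Function.Injective (fderiv ℂ (segreJetMap (reducedSeries m a Θ) k) (0, 0)) := by
  have hred := normallyConvergent_reducedSeries ha h
  refine hred.exists_injective_fderiv_segreJetMap ?_ fun u hu => ?_
  · rw [← thetaSum_zero (reducedSeries m a Θ), ← h0, ← thetaSum_zero Θ,
      ← thetaSum_reducedSeries ha hΘ, map_zero, map_zero]
  have hrestrict : Tendsto (restrictW ha) (𝓝 0) (𝓝 0) :=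
    (restrictW ha).continuous.tendsto' _ _ (map_zero _)
  have htrunc : truncCS m a (embedCS m a u) = 0 := hnondeg _ <| by
    filter_upwards [hrestrict.eventually (ball_mem_nhds 0 h.pos)] with w hw
    rw [h.fderiv_thetaBarFun_embedCS ha hΘ (mem_ball_zero_iff.1 hw)]
    exact hred.fderiv_thetaBarFun_apply_eq_zero (norm_zero.trans_lt h.pos) hu hw
  rw [← restrictCS_embedCS ha u, ← restrictCS_truncCS, htrunc, map_zero]

end ReducedNondegeneracy

/-! ### Conclusion -/

lemma exists_isOpen_isOpen_mapsTo_mapsTo {E F : Type*} [NormedAddCommGroup E] [NormedSpace ℂ E]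
    [NormedAddCommGroup F] [NormedSpace ℂ F] {Φ : E → F} {Ψ : F → E} {x : E} {y : F}
    (hΦ : ∀ᶠ t in 𝓝 x, DifferentiableAt ℂ Φ t) (hΨ : ∀ᶠ s in 𝓝 y, DifferentiableAt ℂ Ψ s)
    (hΨΦ : ∀ᶠ t in 𝓝 x, Ψ (Φ t) = t) (hΦΨ : ∀ᶠ s in 𝓝 y, Φ (Ψ s) = s) (hx : Φ x = y)
    {B : Set E} (hB : B ∈ 𝓝 x) :
    ∃ U V, IsOpen U ∧ x ∈ U ∧ IsOpen V ∧ y ∈ V ∧ DifferentiableOn ℂ Φ U ∧ DifferentiableOn ℂ Ψ V ∧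
      MapsTo Φ U V ∧ MapsTo Ψ V U ∧ (∀ t ∈ U, Ψ (Φ t) = t) ∧ (∀ s ∈ V, Φ (Ψ s) = s) ∧ U ⊆ B := by
  obtain ⟨U₀, hU₀, hU₀o, hxU₀⟩ := _root_.eventually_nhds_iff.1 (hΦ.and (hΨΦ.and hB))
  obtain ⟨V₀, hV₀, hV₀o, hyV₀⟩ := _root_.eventually_nhds_iff.1 (hΨ.and hΦΨ)
  have hΦd : DifferentiableOn ℂ Φ U₀ := fun t ht => (hU₀ t ht).1.differentiableWithinAt
  have hΨd : DifferentiableOn ℂ Ψ V₀ := fun s hs => (hV₀ s hs).1.differentiableWithinAt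
  have hy : Ψ y = x := hx ▸ (hU₀ x hxU₀).2.1
  refine ⟨U₀ ∩ Φ ⁻¹' V₀, V₀ ∩ Ψ ⁻¹' U₀, hΦd.continuousOn.isOpen_inter_preimage hU₀o hV₀o,
    ⟨hxU₀, ?_⟩, hΨd.continuousOn.isOpen_inter_preimage hV₀o hU₀o, ⟨hyV₀, ?_⟩,
    hΦd.mono inter_subset_left, hΨd.mono inter_subset_left, fun t ht => ⟨ht.2, ?_⟩,
    fun s hs => ⟨hs.2, ?_⟩, fun t ht => (hU₀ t ht.1).2.1, fun s hs => (hV₀ s hs.1).2,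
    fun t ht => (hU₀ t ht.1).2.2⟩
  · rwa [mem_preimage, hx]
  · rwa [mem_preimage, hy]
  · rw [mem_preimage, (hU₀ t ht.1).2.1]
    exact ht.1
  · rw [mem_preimage, (hV₀ s hs.1).2]
    exact hs.1

section Conclusion

variable {m χ k₀ : ℕ} {M : Set (CS m)} {d : DefData m} {q : CS m} {G Γ : CS m → CS m}
  {T : (Fin m → ℂ) × CS m → ℂ}

lemma StraightenedEquation.eventually_conjMap_mem_iff (hT : StraightenedEquation d.Θ χ Γ T)
    (hd : d.IsDefiningSeriesOf M) (hΓ : ∀ᶠ t in 𝓝 0, conjMap Γ t ∈ ball 0 d.r) :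
    ∀ᶠ t in 𝓝 (0 : CS m), (conjMap Γ t ∈ M ↔ T (conjW t.1, t) = starRingEnd ℂ t.2) := by
  have hdiag : Tendsto (fun t : CS m => (t, conjCS t)) (𝓝 0) (𝓝 0) :=
    Continuous.tendsto' (by fun_prop) _ _ (by simp)
  filter_upwards [hΓ, hdiag.eventually hT.eventually_iff] with t ht hiff
  exact (hd.conjMap_mem_iff ht).trans hiff

lemma StraightenedEquation.exists_isDefiningSeriesOf (hT : StraightenedEquation d.Θ χ Γ T)
    (hM' : ∀ᶠ t in 𝓝 0, (t ∈ M ↔ T (conjW t.1, t) = starRingEnd ℂ t.2)) :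
    ∃ d' : DefData m, d'.IsDefiningSeriesOf M ∧ NormalFormSeries χ d'.Θ ∧
      thetaFun d'.Θ =ᶠ[𝓝 0] T := by
  obtain ⟨ρ, hρ, hball⟩ := eventually_nhds_iff_ball.1 hM'
  obtain ⟨Θ', R, hRρ, hΘ', hnormal, hΘT⟩ := hT.exists_normalFormSeries hρ
  have hR := hΘ'.pos
  have h0 : Θ' 0 0 = 0 := by
    rw [← thetaSum_zero Θ', ← hT.map_zero]
    exact hΘT (mem_ball_self hR)
  refine ⟨⟨Θ', R / 2, 1⟩, ⟨half_pos hR, one_pos, ?_, ?_, h0, fun t ht => ?_⟩, hnormal,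
    hΘT.eventuallyEq_of_mem (ball_mem_nhds 0 hR)⟩
  · rw [mul_div_cancel₀ R two_ne_zero]
    exact hΘ'.differentiableOn
  · rw [mul_div_cancel₀ R two_ne_zero]
    exact hΘ'.norm_le
  · have htR : ‖t‖ < R := (mem_ball_zero_iff.1 ht).trans (half_lt_self hR)
    have hmem : (conjW t.1, t) ∈ ball (0 : (Fin m → ℂ) × CS m) R :=
      prodMk_mem_ball_zero_iff.2 ⟨by simpa using (norm_fst_le t).trans_lt htR, htR⟩
    rw [hball t (mem_ball_zero_iff.2 (htR.trans_le hRρ)), ← hΘT hmem]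
    exact eq_comm

lemma InvariantStraightening.exists_normalForm (hs : InvariantStraightening d.Θ q χ k₀ G Γ)
    (hd : d.IsDefiningSeriesOf M) {C : ℝ} (h : RealSeriesAt d.Θ (2 * d.r) C q) (hχ : χ ≤ m)
    {N : Set (CS m)} (hΓ : ∀ᶠ t in 𝓝 0, conjMap Γ t ∈ ball 0 d.r)
    (hN : ∀ᶠ t in 𝓝 0, (t ∈ N ↔ conjMap Γ t ∈ M)) :
    ∃ d' : DefData m, d'.IsDefiningSeriesOf N ∧ NormalFormSeries χ d'.Θ ∧
      ∃ k, Function.Injective (fderiv ℂ (segreJetMap (reducedSeries m χ d'.Θ) k) (0, 0)) := by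
  obtain ⟨T, hT⟩ := hs.exists_straightenedEquation h
  have hNT : ∀ᶠ t in 𝓝 0, (t ∈ N ↔ T (conjW t.1, t) = starRingEnd ℂ t.2) := by
    filter_upwards [hN, hT.eventually_conjMap_mem_iff hd hΓ] with t ht hiff using ht.trans hiff
  obtain ⟨d', hd', hnormal, hΘT⟩ := hT.exists_isDefiningSeriesOf hNT
  have hgraph := hT.eventually_segreDefect_eq_zero_iff hs.toStraightening h hΘT
  exact ⟨d', hd', hnormal, hd'.normallyConvergent.exists_injective_fderiv_segreJetMap_reducedSeries
    hχ hnormal hd'.2.2.2.2.1 fun u hu =>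
      hs.truncCS_eq_zero_of_eventually_fderiv_eq_zero h hd'.normallyConvergent hgraph hu⟩

end Conclusion

/-!
STATEMENT 6 (Lemma 3.1). Let `M' ⊆ ℂⁿ` (`n = m+1`) be a real analytic
hypersurface with complex defining equation `z̄' = Θ'(w̄', t')` (defining series
`d`), let `φ'_k` be its morphism of `k`-jets of Segre varieties, of generic
rank `n + χ` for all large `k`, set `κ = n - 1 - χ = m - χ`, and let
`q' ∈ M'` be a point near which `φ'_k` has locally constant rank `n + χ`.
Then there exist local holomorphic coordinates
`(w', v', z') ∈ ℂ^{m-κ} × ℂ^κ × ℂ` vanishing at `q'` (a biholomorphism `Φ`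
with local inverse `Ψ`) in which `M'` is defined by an equation of the form
`z̄' = Θ'(w̄', w', z')` with `Θ'` independent of the coordinates `(v', v̄')`
(the predicate `NormalFormSeries χ`); in particular, near `q'`, `M'` is
biholomorphic to the product `M̲' × Δ^κ` of the underlying hypersurface
`M̲' ⊆ ℂ^{χ+1}` (whose defining series is `reducedSeries m χ`) by a polydisc,
where `M̲'` is finitely nondegenerate at the corresponding point `0`, i.e. its
`k`-jet morphism of Segre varieties is immersive there for some `k`.
-/
theorem normal_form_at_locally_constant_rank_point
    (m : ℕ) (hm : 1 ≤ m) (M' : Set (CS m))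
    (hM' : IsRealAnalyticHypersurface M')
    (d : DefData m) (hd : d.IsDefiningSeriesOf M')
    (χ κ : ℕ) (hχ : χ ≤ m) (hκ : κ = m - χ)
    (k₀ : ℕ) (hgen : ∀ k ≥ k₀, SegreGenericRank d.Θ d.r k (m + 1 + χ))
    (q' : CS m) (hq' : q' ∈ M') (hq'ball : q' ∈ ball (0 : CS m) d.r)
    (hconst : ∀ k ≥ k₀, SegreConstRankNear d.Θ k (m + 1 + χ) q') :
    ∃ (U V : Set (CS m)) (Φ Ψ : CS m → CS m),
      IsOpen U ∧ q' ∈ U ∧ IsOpen V ∧ (0 : CS m) ∈ V ∧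
      DifferentiableOn ℂ Φ U ∧ DifferentiableOn ℂ Ψ V ∧
      Set.MapsTo Φ U V ∧ Set.MapsTo Ψ V U ∧
      (∀ z ∈ U, Ψ (Φ z) = z) ∧ (∀ z ∈ V, Φ (Ψ z) = z) ∧ Φ q' = 0 ∧
      ∃ d' : DefData m, d'.IsDefiningSeriesOf (Φ '' (M' ∩ U)) ∧
        NormalFormSeries χ d'.Θ ∧
        ∃ k : ℕ, Function.Injective
          ⇑(fderiv ℂ (segreJetMap (reducedSeries m χ d'.Θ) k)
            ((0 : CS χ), (0 : Fin χ → ℂ))) := by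
  have h := hd.realSeriesAt hM' hq' hq'ball
  obtain ⟨G, Γ, hs⟩ := h.exists_invariantStraightening hχ hconst
  obtain ⟨U, V, hU, hqU, hV, h0V, hΦ, hΨ, hΦUV, hΨVU, hΨΦ, hΦΨ, hUball⟩ :=
    exists_isOpen_isOpen_mapsTo_mapsTo hs.eventually_differentiableAt_conjMap_map
      hs.eventually_differentiableAt_conjMap_inv hs.eventually_conjMap_inv_map
      hs.eventually_conjMap_map_inv hs.conjMap_map_base (isOpen_ball.mem_nhds hq'ball)
  have hV₀ : V ∈ 𝓝 0 := hV.mem_nhds h0V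
  refine ⟨U, V, conjMap G, conjMap Γ, hU, hqU, hV, h0V, hΦ, hΨ, hΦUV, hΨVU, hΨΦ, hΦΨ,
    hs.conjMap_map_base, hs.exists_normalForm hd h hχ ?_ ?_⟩
  · filter_upwards [hV₀] with t ht using hUball (hΨVU ht)
  · filter_upwards [hV₀] with t ht
    refine ⟨?_, fun htM => ⟨conjMap Γ t, ⟨htM, hΨVU ht⟩, hΦΨ t ht⟩⟩
    rintro ⟨x, ⟨hxM, hxU⟩, rfl⟩
    rwa [hΨΦ x hxU]
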